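/- Let n ≥ 2, N = 2^⌊n/2⌋, and let α₁,…,αₙ be complex N×N matrices satisfying the Clifford relations. Let ψ : B₁ → ℂᴺ be of class C^{1,α} on the open unit ball B₁ ⊂ ℝⁿ for some α ∈ (0,1), and suppose |Dψ(x)| ≤ C |ψ(x)|^σ on B₁ for some constants C ≥ 0 and σ ≥ 1. Assume ψ(0) = 0 and ψ is not identically zero on B₁. Then there exist an integer k ≥ 1, a radius R ∈ (0,1], and maps P_k, Γ_k : B_R → ℂᴺ with ψ = P_k + Γ_k on B_R, such that: P_k is not identically zero, each component of P_k is a homogeneous harmonic polynomial of degree k, DP_k = 0, and for every δ ∈ (0,1) there exists a constant C(δ) > 0 with |Γ_k(x)| ≤ C(δ) |x|^{k+δ} and |∇Γ_k(x)| ≤ C(δ) |x|^{k+δ−1} for all x ∈ B_R. -/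

import Mathlib

open MeasureTheory Metric Filter Matrix
open scoped ENNReal NNReal

noncomputable section

/-- The Clifford anticommutation relations `αⱼαₖ + αₖαⱼ = -2 δⱼₖ Id`. -/
def CliffordRel {n N : ℕ} (α : Fin n → Matrix (Fin N) (Fin N) ℂ) : Prop :=
  ∀ j k, α j * α k + α k * α j = (-2 : ℂ) • (if j = k then (1 : Matrix (Fin N) (Fin N) ℂ) else 0)

/-- The Euclidean Dirac operator `Dψ = Σⱼ αⱼ ∂ⱼψ`. -/
def diracOp {n N : ℕ} (α : Fin n → Matrix (Fin N) (Fin N) ℂ)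
    (ψ : EuclideanSpace ℝ (Fin n) → EuclideanSpace ℂ (Fin N))
    (x : EuclideanSpace ℝ (Fin n)) : EuclideanSpace ℂ (Fin N) :=
  ∑ j : Fin n, Matrix.toEuclideanLin (α j) (fderiv ℝ ψ x (EuclideanSpace.single j (1:ℝ)))

/-!
Convolution with the Cauchy kernel inverts the Dirac operator, so a compactly supported `C¹` spinor
`u` is the potential of `Du`. If `u = O(|x|ᵐ)` and `|Du| ≲ |u|`, the Taylor expansion of the kernel
at the origin writes `u` as a homogeneous polynomial of degree `m + 1` plus a remainder of every
order below `m + 2`. A Carleman estimate shows that a spinor vanishing to infinite order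
is zero, so some first polynomial is nonzero. Blowing up at the origin makes it Dirac-harmonic,
hence harmonic since `D² = -Δ`. The gradient of the remainder is bounded by difference quotients,
using interior Hölder estimates and the Hölder continuity of `∇ψ`. The Carleman estimate needs
skew-Hermitian coefficients, which averaging a Hermitian form over the Clifford group provides
after a change of basis.
-/

section SmoothHomogeneous

variable {X W : Type*} [NormedAddCommGroup X] [NormedSpace ℝ X]
  [NormedAddCommGroup W] [NormedSpace ℝ W] {G : X → W} {p : ℝ}

lemma half_norm_le_norm_add_smul {x y : X} (hx : ‖x‖ ≤ ‖y‖ / 2) {t : ℝ}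
    (ht : t ∈ Set.Icc (0 : ℝ) 1) : ‖y‖ / 2 ≤ ‖y + t • x‖ := by
  have short : ‖t • x‖ ≤ ‖y‖ / 2 := by
    rw [norm_smul, Real.norm_of_nonneg ht.1]
    exact (mul_le_of_le_one_left (norm_nonneg x) ht.2).trans hx
  linarith [norm_sub_le_norm_add y (t • x)]

/-- A map that is smooth away from the origin and positively homogeneous of degree `p`, such as
the fundamental solution of an elliptic operator with constant coefficients. -/
structure SmoothHomogeneous (G : X → W) (p : ℝ) : Prop where
  contDiffAt : ∀ {z : X}, z ≠ 0 → ∀ j : ℕ, ContDiffAt ℝ j G z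
  map_smul : ∀ {t : ℝ}, 0 < t → ∀ z : X, G (t • z) = t ^ p • G z

namespace SmoothHomogeneous

lemma iteratedFDeriv_smul (hG : SmoothHomogeneous G p) (j : ℕ) {t : ℝ} (ht : 0 < t)
    {z : X} (hz : z ≠ 0) :
    iteratedFDeriv ℝ j G (t • z) = t ^ (p - j) • iteratedFDeriv ℝ j G z := by
  let dilation : X ≃L[ℝ] X := ContinuousLinearEquiv.smulLeft (Units.mk0 t ht.ne')
  have dilation_apply (x : X) : dilation x = t • x := rfl
  have comp_dilation : G ∘ dilation = t ^ p • G := by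
    ext x
    simp [dilation_apply, hG.map_smul ht]
  have chain := dilation.iteratedFDerivWithin_comp_right (s := Set.univ) G uniqueDiffOn_univ
    (x := z) (Set.mem_univ _) j
  simp only [Set.preimage_univ, iteratedFDerivWithin_univ, comp_dilation,
    iteratedFDeriv_const_smul_apply (hG.contDiffAt hz j)] at chain
  ext v
  have chain_v : t ^ p • iteratedFDeriv ℝ j G z v = t ^ j • iteratedFDeriv ℝ j G (t • z) v := by
    have := congrArg (fun T => T v) chain
    simp only [_root_.smul_apply, ContinuousMultilinearMap.compContinuousLinearMap_apply] at this
    rw [this]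
    exact (ContinuousMultilinearMap.map_smul_univ _ (fun _ => t) v).trans (by simp [dilation_apply])
  rw [_root_.smul_apply, Real.rpow_sub ht, Real.rpow_natCast, div_eq_inv_mul, mul_smul, chain_v,
    inv_smul_smul₀ (by positivity)]

lemma exists_norm_iteratedFDeriv_le [FiniteDimensional ℝ X] (hG : SmoothHomogeneous G p) (j : ℕ) :
    ∃ C : ℝ, 0 ≤ C ∧ ∀ z, z ≠ 0 → ‖iteratedFDeriv ℝ j G z‖ ≤ C * ‖z‖ ^ (p - j) := by
  have continuousOn_sphere : ContinuousOn (iteratedFDeriv ℝ j G) (sphere (0 : X) 1) := fun z hz =>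
    ((hG.contDiffAt (ne_zero_of_mem_unit_sphere ⟨z, hz⟩) j).iteratedFDeriv_right (i := j) (m := 0)
      (by simp)).continuousAt.continuousWithinAt
  obtain ⟨C, hC⟩ := (isCompact_sphere (0 : X) 1).exists_bound_of_continuousOn continuousOn_sphere
  refine ⟨max C 0, le_max_right _ _, fun z hz => ?_⟩
  have hz' : 0 < ‖z‖ := norm_pos_iff.2 hz
  have unit : ‖‖z‖⁻¹ • z‖ = 1 := norm_smul_inv_norm hz
  calc ‖iteratedFDeriv ℝ j G z‖ = ‖iteratedFDeriv ℝ j G (‖z‖ • ‖z‖⁻¹ • z)‖ := by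
        rw [smul_inv_smul₀ hz'.ne']
    _ = ‖iteratedFDeriv ℝ j G (‖z‖⁻¹ • z)‖ * ‖z‖ ^ (p - j) := by
        rw [hG.iteratedFDeriv_smul j hz' (by simp [hz]), norm_smul,
          Real.norm_of_nonneg (by positivity), mul_comm]
    _ ≤ max C 0 * ‖z‖ ^ (p - j) := by
        gcongr
        exact (hC _ (by simpa using unit)).trans (le_max_left _ _)

lemma exists_norm_sub_taylor_le [FiniteDimensional ℝ X] [CompleteSpace W]
    (hG : SmoothHomogeneous G p) {m : ℕ} (hp : p ≤ m + 1) :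
    ∃ C : ℝ, 0 ≤ C ∧ ∀ y x, y ≠ 0 → ‖x‖ ≤ ‖y‖ / 2 →
      ‖G (y + x) - ∑ k ∈ Finset.range (m + 1),
        (k.factorial : ℝ)⁻¹ • iteratedFDeriv ℝ k G y (fun _ => x)‖
        ≤ C * ‖x‖ ^ (m + 1) * ‖y‖ ^ (p - (m + 1 : ℕ)) := by
  obtain ⟨C, hC0, hC⟩ := hG.exists_norm_iteratedFDeriv_le (m + 1)
  set e : ℝ := p - (m + 1 : ℕ) with he
  refine ⟨C * (1 / 2) ^ e, by positivity, fun y x hy hx => ?_⟩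
  have hy' : 0 < ‖y‖ := norm_pos_iff.2 hy
  have segment_ne_zero (t : ℝ) (ht : t ∈ Set.Icc (0 : ℝ) 1) : y + t • x ≠ 0 :=
    norm_pos_iff.1 ((half_pos hy').trans_le (half_norm_le_norm_add_smul hx ht))
  have derivative_le (t : ℝ) (ht : t ∈ Set.Icc (0 : ℝ) 1) :
      ‖iteratedFDeriv ℝ (m + 1) G (y + t • x) (fun _ => x)‖ ≤
        C * (1 / 2) ^ e * ‖x‖ ^ (m + 1) * ‖y‖ ^ e := by
    have decay : ‖y + t • x‖ ^ e ≤ (1 / 2) ^ e * ‖y‖ ^ e := by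
      rw [← Real.mul_rpow (by norm_num) (norm_nonneg y), one_div_mul_eq_div]
      exact Real.rpow_le_rpow_of_nonpos (by positivity) (half_norm_le_norm_add_smul hx ht)
        (by rw [he]; push_cast; linarith)
    calc _ ≤ ‖iteratedFDeriv ℝ (m + 1) G (y + t • x)‖ * ‖x‖ ^ (m + 1) := by
          simpa using ContinuousMultilinearMap.le_opNorm
            (iteratedFDeriv ℝ (m + 1) G (y + t • x)) (fun _ => x)
      _ ≤ C * ((1 / 2) ^ e * ‖y‖ ^ e) * ‖x‖ ^ (m + 1) := by
          gcongr
          exact (hC _ (segment_ne_zero t ht)).trans (by gcongr)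
      _ = _ := by ring
  have integral_remainder := map_add_eq_sum_add_integral_iteratedFDeriv (f := G) (x := y) (y := x)
    (n := m) (fun t ht => by exact_mod_cast hG.contDiffAt (segment_ne_zero t ht) (m + 1))
  rw [integral_remainder, add_sub_cancel_left, norm_smul]
  refine (mul_le_of_le_one_left (norm_nonneg _) ?_).trans ?_
  · rw [norm_inv, Real.norm_natCast]
    exact inv_le_one_of_one_le₀ (mod_cast m.factorial_pos)
  · refine (intervalIntegral.norm_integral_le_of_norm_le_const fun t ht => ?_).trans_eq
      (by rw [sub_zero, abs_one, mul_one])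
    rw [Set.uIoc_of_le zero_le_one] at ht
    rw [norm_smul, norm_pow, Real.norm_of_nonneg (by linarith [ht.2])]
    exact (mul_le_of_le_one_left (norm_nonneg _)
      (pow_le_one₀ (by linarith [ht.2]) (by linarith [ht.1]))).trans
      (derivative_le t ⟨ht.1.le, ht.2⟩)

end SmoothHomogeneous

end SmoothHomogeneous

section DivergenceTheorem

variable {E W : Type*} [NormedAddCommGroup E] [InnerProductSpace ℝ E]
  [NormedAddCommGroup W] [NormedSpace ℝ W]

lemma continuous_fderiv_apply_const {u : E → W} (hu : ContDiff ℝ 1 u) (v : E) :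
    Continuous fun x => fderiv ℝ u x v :=
  (hu.continuous_fderiv one_ne_zero).clm_apply continuous_const

variable [FiniteDimensional ℝ E] [MeasurableSpace E] [BorelSpace E]

lemma integrable_fderiv_apply {u : E → W} (hu : ContDiff ℝ 1 u) (hcu : HasCompactSupport u)
    (v : E) : Integrable fun x => fderiv ℝ u x v :=
  (continuous_fderiv_apply_const hu v).integrable_of_hasCompactSupport (hcu.fderiv_apply ℝ v)

lemma integral_fderiv_apply_eq_zero [CompleteSpace W] {u : E → W} (hu : ContDiff ℝ 1 u)
    (hcu : HasCompactSupport u) (v : E) : ∫ x, fderiv ℝ u x v = 0 := by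
  have by_parts := integral_bilinear_hasLineDerivAt_right_eq_neg_left_of_integrable
    (μ := (volume : Measure E)) (f := fun _ => (1 : ℝ)) (f' := fun _ => (0 : ℝ)) (g := u)
    (g' := fun x => fderiv ℝ u x v) (v := v) (B := ContinuousLinearMap.lsmul ℝ ℝ)
    (by simp) (by simpa using integrable_fderiv_apply hu hcu v)
    (by simpa using hu.continuous.integrable_of_hasCompactSupport hcu)
    (fun x _ => by simpa using (hasFDerivAt_const (1 : ℝ) x).hasLineDerivAt v)
    (fun x _ => (hu.differentiable one_ne_zero x).hasFDerivAt.hasLineDerivAt v)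
  simpa using by_parts

lemma integral_sum_fderiv_eq_zero [CompleteSpace W] {ι : Type*} [Fintype ι] (b : ι → E)
    {F : ι → E → W} (hF : ∀ i, ContDiff ℝ 1 (F i)) (hcF : ∀ i, HasCompactSupport (F i)) :
    ∫ x, ∑ i, fderiv ℝ (F i) x (b i) = 0 := by
  rw [integral_finsetSum _ fun i _ => integrable_fderiv_apply (hF i) (hcF i) (b i)]
  exact Finset.sum_eq_zero fun i _ => integral_fderiv_apply_eq_zero (hF i) (hcF i) (b i)

end DivergenceTheorem

section Dirac

open InnerProductSpace
open scoped Gradient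

variable {E V : Type*} [NormedAddCommGroup E] [InnerProductSpace ℝ E]
  [NormedAddCommGroup V] [NormedSpace ℝ V]

/-- `c` is a Clifford multiplication: vectors of `E` act on `V` with `c(z)² = -‖z‖²`. -/
def IsClifford (c : E →L[ℝ] V →L[ℝ] V) : Prop :=
  ∀ z v, c z (c z v) = -(‖z‖ ^ 2 • v)

lemma IsClifford.add_swap {c : E →L[ℝ] V →L[ℝ] V} (hc : IsClifford c) (x y : E) (v : V) :
    c x (c y v) + c y (c x v) = -((2 * ⟪x, y⟫_ℝ) • v) := by
  have expand := hc (x + y) v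
  rw [norm_add_sq_real] at expand
  simp only [map_add, _root_.add_apply, hc x v, hc y v, add_smul] at expand
  rw [← sub_eq_zero] at expand ⊢
  rw [← expand]
  module

variable [FiniteDimensional ℝ E]

/-- The Dirac operator `∑ᵢ c(eᵢ) ∂ᵢ` of a coefficient map `c`, with `e` an orthonormal basis; by
`dirac_eq_sum` the choice of `e` is immaterial. -/
def dirac (c : E →L[ℝ] V →L[ℝ] V) (u : E → V) (x : E) : V :=
  ∑ i, c (stdOrthonormalBasis ℝ E i) (fderiv ℝ u x (stdOrthonormalBasis ℝ E i))

lemma dirac_eq_sum {ι : Type*} [Fintype ι] (b : OrthonormalBasis ι ℝ E)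
    (c : E →L[ℝ] V →L[ℝ] V) (u : E → V) (x : E) :
    dirac c u x = ∑ i, c (b i) (fderiv ℝ u x (b i)) := by
  let symbol : E →ₗ[ℝ] E →ₗ[ℝ] V :=
    LinearMap.mk₂ ℝ (fun y z => c y (fderiv ℝ u x z)) (by simp) (by simp) (by simp) (by simp)
  have key := congrArg (TensorProduct.lift symbol)
    ((canonicalCovariantTensor_eq_sum E (stdOrthonormalBasis ℝ E)).symm.trans
      (canonicalCovariantTensor_eq_sum E b))
  simpa [symbol, dirac] using key

lemma dirac_congr (c : E →L[ℝ] V →L[ℝ] V) {u w : E → V} {x : E} (h : u =ᶠ[nhds x] w) :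
    dirac c u x = dirac c w x := by
  simp only [dirac, h.fderiv_eq]

lemma dirac_sub (c : E →L[ℝ] V →L[ℝ] V) {u w : E → V} {x : E} (hu : DifferentiableAt ℝ u x)
    (hw : DifferentiableAt ℝ w x) :
    dirac c (fun y => u y - w y) x = dirac c u x - dirac c w x := by
  simp only [dirac, fderiv_fun_sub hu hw, _root_.sub_apply, map_sub, Finset.sum_sub_distrib]

lemma dirac_smul (c : E →L[ℝ] V →L[ℝ] V) {f : E → ℝ} {u : E → V} {x : E}
    (hf : DifferentiableAt ℝ f x) (hu : DifferentiableAt ℝ u x) :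
    dirac c (fun y => f y • u y) x = f x • dirac c u x + c (∇ f x) (u x) := by
  have gradient_eq_sum : ∇ f x = ∑ i, fderiv ℝ f x (stdOrthonormalBasis ℝ E i) •
      stdOrthonormalBasis ℝ E i := by
    simp_rw [← inner_gradient_left, real_inner_comm _ (∇ f x)]
    exact ((stdOrthonormalBasis ℝ E).sum_repr' (∇ f x)).symm
  rw [gradient_eq_sum]
  simp only [dirac, fderiv_fun_smul hf hu, _root_.add_apply, _root_.smul_apply,
    ContinuousLinearMap.smulRight_apply, map_add, map_smul, map_sum, Finset.smul_sum,
    Finset.sum_add_distrib, _root_.sum_apply]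

lemma dirac_const_smul (c : E →L[ℝ] V →L[ℝ] V) {u : E → V} {x : E}
    (hu : DifferentiableAt ℝ u x) (t : ℝ) :
    dirac c (fun y => t • u y) x = t • dirac c u x := by
  simp only [dirac, fderiv_fun_const_smul hu, _root_.smul_apply, map_smul, Finset.smul_sum]

lemma dirac_comp_add_smul (c : E →L[ℝ] V →L[ℝ] V) {u : E → V} (x₀ : E) (t : ℝ) (x : E)
    (hu : DifferentiableAt ℝ u (x₀ + t • x)) :
    dirac c (fun y => u (x₀ + t • y)) x = t • dirac c u (x₀ + t • x) := by
  have affine : HasFDerivAt (fun y : E => x₀ + t • y) (t • ContinuousLinearMap.id ℝ E) x :=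
    ((hasFDerivAt_id x).const_smul t).const_add x₀
  have chain : fderiv ℝ (fun y => u (x₀ + t • y)) x = t • fderiv ℝ u (x₀ + t • x) := by
    have : HasFDerivAt (fun y => u (x₀ + t • y)) _ x := hu.hasFDerivAt.comp x affine
    rw [this.fderiv, ContinuousLinearMap.comp_smul, ContinuousLinearMap.comp_id]
  simp only [dirac, chain, _root_.smul_apply, map_smul, Finset.smul_sum]

lemma dirac_eq_zero_of_notMem_tsupport (c : E →L[ℝ] V →L[ℝ] V) {u : E → V} {x : E}
    (hx : x ∉ tsupport u) : dirac c u x = 0 := by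
  rw [dirac_congr c (notMem_tsupport_iff_eventuallyEq.1 hx)]
  simp [dirac]

lemma continuous_dirac (c : E →L[ℝ] V →L[ℝ] V) {u : E → V} (hu : ContDiff ℝ 1 u) :
    Continuous (dirac c u) :=
  continuous_finsetSum _ fun _ _ =>
    (c _).continuous.comp (continuous_fderiv_apply_const hu _)

lemma hasCompactSupport_dirac (c : E →L[ℝ] V →L[ℝ] V) {u : E → V} (hu : HasCompactSupport u) :
    HasCompactSupport (dirac c u) :=
  (hu.fderiv ℝ).mono fun x hx h => hx (by simp [dirac, h])

lemma integral_dirac_eq_zero [MeasurableSpace E] [BorelSpace E] [CompleteSpace V]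
    (c : E →L[ℝ] V →L[ℝ] V) {u : E → V} (hu : ContDiff ℝ 1 u) (hcu : HasCompactSupport u) :
    ∫ x, dirac c u x = 0 := by
  have divergence := integral_sum_fderiv_eq_zero (stdOrthonormalBasis ℝ E)
    (F := fun i x => c (stdOrthonormalBasis ℝ E i) (u x))
    (fun i => (c _).contDiff.comp hu) (fun i => hcu.comp_left (map_zero _))
  rw [← divergence]
  refine integral_congr_ae (.of_forall fun x => Finset.sum_congr rfl fun i _ => ?_)
  have : HasFDerivAt (fun x => c (stdOrthonormalBasis ℝ E i) (u x)) _ x :=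
    (c _).hasFDerivAt.comp x (hu.differentiable one_ne_zero x).hasFDerivAt
  rw [this.fderiv, ContinuousLinearMap.comp_apply]

end Dirac

section CauchyKernel

open Module (finrank)
open scoped InnerProductSpace

variable {E V : Type*} [NormedAddCommGroup E] [InnerProductSpace ℝ E]
  [NormedAddCommGroup V] [NormedSpace ℝ V]

/-- The Cauchy kernel `‖z‖⁻ⁿ c(z)`, `n = dim E`, smoothed at scale `ρ`. -/
def regularizedKernel (c : E →L[ℝ] V →L[ℝ] V) (ρ : ℝ) (z : E) : V →L[ℝ] V :=
  (ρ ^ 2 + ‖z‖ ^ 2) ^ (-(finrank ℝ E : ℝ) / 2) • c z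

/-- The approximate identity at scale `ρ` that arises as minus the divergence of
`regularizedKernel c ρ`; its total mass does not depend on `ρ`. -/
def mollifier (ρ : ℝ) (z : E) : ℝ :=
  finrank ℝ E * ρ ^ 2 * (ρ ^ 2 + ‖z‖ ^ 2) ^ (-(finrank ℝ E : ℝ) / 2 - 1)

lemma contDiffAt_regularizedKernel (c : E →L[ℝ] V →L[ℝ] V) {ρ : ℝ} {z : E}
    (h : ρ ^ 2 + ‖z‖ ^ 2 ≠ 0) (j : ℕ) : ContDiffAt ℝ j (regularizedKernel c ρ) z :=
  ((contDiffAt_const.add (contDiff_norm_sq ℝ).contDiffAt).rpow_const_of_ne h).smul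
    c.contDiff.contDiffAt

lemma contDiff_regularizedKernel (c : E →L[ℝ] V →L[ℝ] V) {ρ : ℝ} (hρ : 0 < ρ) :
    ContDiff ℝ 1 (regularizedKernel c ρ) :=
  contDiff_iff_contDiffAt.2 fun z => mod_cast
    contDiffAt_regularizedKernel c (by positivity : ρ ^ 2 + ‖z‖ ^ 2 ≠ 0) 1

lemma norm_regularizedKernel_le (c : E →L[ℝ] V →L[ℝ] V) (ρ : ℝ) (z : E) :
    ‖regularizedKernel c ρ z‖ ≤ ‖c‖ * ‖z‖ ^ (1 - finrank ℝ E : ℝ) := by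
  rcases eq_or_ne z 0 with rfl | hz
  · simp only [regularizedKernel, map_zero, smul_zero, norm_zero]
    positivity
  have hz' : 0 < ‖z‖ := norm_pos_iff.2 hz
  have weight_le : (ρ ^ 2 + ‖z‖ ^ 2) ^ (-(finrank ℝ E : ℝ) / 2) ≤ ‖z‖ ^ (-(finrank ℝ E : ℝ)) :=
    calc _ ≤ (‖z‖ ^ 2) ^ (-(finrank ℝ E : ℝ) / 2) :=
          Real.rpow_le_rpow_of_nonpos (by positivity) (by nlinarith [sq_nonneg ρ])
            (by rw [neg_div, neg_nonpos]; positivity)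
      _ = _ := by
          rw [← Real.rpow_natCast, ← Real.rpow_mul hz'.le, Nat.cast_two,
            mul_div_cancel₀ _ two_ne_zero]
  rw [regularizedKernel, norm_smul, Real.norm_of_nonneg (by positivity), sub_eq_add_neg,
    Real.rpow_add hz', Real.rpow_one]
  calc _ ≤ ‖z‖ ^ (-(finrank ℝ E : ℝ)) * (‖c‖ * ‖z‖) := by
        gcongr
        exact c.le_opNorm z
    _ = _ := by ring

lemma smoothHomogeneous_regularizedKernel_zero (c : E →L[ℝ] V →L[ℝ] V) :
    SmoothHomogeneous (regularizedKernel c 0) (1 - finrank ℝ E) where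
  contDiffAt hz := contDiffAt_regularizedKernel c (by positivity)
  map_smul {t} ht z := by
    have weight : (0 ^ 2 + ‖t • z‖ ^ 2) ^ (-(finrank ℝ E : ℝ) / 2) =
        t ^ (-(finrank ℝ E : ℝ)) * (0 ^ 2 + ‖z‖ ^ 2) ^ (-(finrank ℝ E : ℝ) / 2) := by
      rw [norm_smul, Real.norm_of_nonneg ht.le, zero_pow two_ne_zero, zero_add, zero_add, mul_pow,
        Real.mul_rpow (by positivity) (by positivity), ← Real.rpow_natCast t,
        ← Real.rpow_mul ht.le, Nat.cast_two, mul_div_cancel₀ _ two_ne_zero]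
    rw [regularizedKernel, regularizedKernel, weight, map_smul, smul_smul, smul_smul,
      sub_eq_add_neg, Real.rpow_add ht, Real.rpow_one]
    ring_nf

lemma tendsto_regularizedKernel (c : E →L[ℝ] V →L[ℝ] V) {ρ : ℕ → ℝ}
    (hρ : Tendsto ρ atTop (nhds 0)) (z : E) :
    Tendsto (fun k => regularizedKernel c (ρ k) z) atTop (nhds (regularizedKernel c 0 z)) := by
  rcases eq_or_ne z 0 with rfl | hz
  · simp [regularizedKernel]
  · exact (((hρ.pow 2).add_const _).rpow_const (Or.inl (by positivity))).smul_const _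

lemma fderiv_regularizedKernel (c : E →L[ℝ] V →L[ℝ] V) {ρ : ℝ} (hρ : 0 < ρ) (z : E) :
    fderiv ℝ (regularizedKernel c ρ) z = (ρ ^ 2 + ‖z‖ ^ 2) ^ (-(finrank ℝ E : ℝ) / 2) • c +
      ((-(finrank ℝ E : ℝ) * (ρ ^ 2 + ‖z‖ ^ 2) ^ (-(finrank ℝ E : ℝ) / 2 - 1)) •
        innerSL ℝ z).smulRight (c z) := by
  have square : HasFDerivAt (fun z : E => ρ ^ 2 + ‖z‖ ^ 2) ((2 : ℝ) • innerSL ℝ z) z := by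
    simpa [two_smul] using (hasStrictFDerivAt_norm_sq z).hasFDerivAt.const_add (ρ ^ 2)
  have weight := square.rpow_const (p := -(finrank ℝ E : ℝ) / 2) (Or.inl (by positivity))
  have kernel : HasFDerivAt (regularizedKernel c ρ) _ z := weight.smul c.hasFDerivAt
  rw [kernel.fderiv, smul_smul]
  ring_nf

lemma fderiv_regularizedKernel_apply (c : E →L[ℝ] V →L[ℝ] V) {u : E → V} (hu : ContDiff ℝ 1 u)
    {ρ : ℝ} (hρ : 0 < ρ) (x y v w : E) :
    fderiv ℝ (fun y => regularizedKernel c ρ (x - y) (c w (u y))) y v =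
      regularizedKernel c ρ (x - y) (c w (fderiv ℝ u y v)) -
        fderiv ℝ (regularizedKernel c ρ) (x - y) v (c w (u y)) := by
  have kernel : HasFDerivAt (fun y => regularizedKernel c ρ (x - y))
      (-fderiv ℝ (regularizedKernel c ρ) (x - y)) y := by
    rw [← ContinuousLinearMap.comp_id (fderiv ℝ (regularizedKernel c ρ) (x - y)),
      ← ContinuousLinearMap.comp_neg]
    exact ((contDiff_regularizedKernel c hρ).differentiable one_ne_zero (x - y)).hasFDerivAt.comp
      y ((hasFDerivAt_id y).const_sub x)
  have inner := (c w).hasFDerivAt.comp y (hu.differentiable one_ne_zero y).hasFDerivAt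
  have product : HasFDerivAt (fun y => regularizedKernel c ρ (x - y) (c w (u y))) _ y :=
    kernel.clm_apply inner
  rw [product.fderiv]
  simp [sub_eq_add_neg]

lemma sum_fderiv_regularizedKernel {c : E →L[ℝ] V →L[ℝ] V} (hc : IsClifford c) {ι : Type*}
    [Fintype ι] (b : OrthonormalBasis ι ℝ E) {ρ : ℝ} (hρ : 0 < ρ) (z : E) (v : V) :
    ∑ i, fderiv ℝ (regularizedKernel c ρ) z (b i) (c (b i) v) = -(mollifier ρ z • v) := by
  have hq : 0 < ρ ^ 2 + ‖z‖ ^ 2 := by positivity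
  set w := (ρ ^ 2 + ‖z‖ ^ 2) ^ (-(finrank ℝ E : ℝ) / 2 - 1) with hw
  have weight : (ρ ^ 2 + ‖z‖ ^ 2) ^ (-(finrank ℝ E : ℝ) / 2) = w * (ρ ^ 2 + ‖z‖ ^ 2) := by
    rw [hw, ← Real.rpow_add_one hq.ne', sub_add_cancel]
  have radial : ∑ i, ⟪z, b i⟫_ℝ • c z (c (b i) v) = -(‖z‖ ^ 2 • v) := by
    calc _ = c z (c (∑ i, ⟪b i, z⟫_ℝ • b i) v) := by
          simp [map_sum, _root_.sum_apply, real_inner_comm z]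
      _ = _ := by rw [b.sum_repr', hc]
  have term (i : ι) : fderiv ℝ (regularizedKernel c ρ) z (b i) (c (b i) v) =
      -((w * (ρ ^ 2 + ‖z‖ ^ 2)) • v) - (finrank ℝ E * w) • ⟪z, b i⟫_ℝ • c z (c (b i) v) := by
    rw [fderiv_regularizedKernel c hρ, weight]
    simp [hc (b i) v, mul_smul]
    module
  simp only [term, Finset.sum_sub_distrib, ← Finset.smul_sum, radial, Finset.sum_const,
    Finset.card_univ, ← Module.finrank_eq_card_basis b.toBasis, mollifier, ← hw]
  module

section Mollifier

lemma mollifier_smul {ρ : ℝ} (hρ : 0 < ρ) (z : E) :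
    ρ ^ finrank ℝ E * mollifier ρ (ρ • z) = mollifier 1 z := by
  have square : ρ ^ 2 + ‖ρ • z‖ ^ 2 = ρ ^ 2 * (1 ^ 2 + ‖z‖ ^ 2) := by
    rw [norm_smul, Real.norm_of_nonneg hρ.le]
    ring
  have weight : (ρ ^ 2) ^ (-(finrank ℝ E : ℝ) / 2 - 1) = (ρ ^ (finrank ℝ E + 2))⁻¹ := by
    rw [← Real.rpow_natCast, ← Real.rpow_mul hρ.le, ← Real.rpow_natCast, ← Real.rpow_neg hρ.le]
    push_cast
    ring_nf
  rw [mollifier, mollifier, square, Real.mul_rpow (by positivity) (by positivity), weight]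
  field_simp
  ring

variable [FiniteDimensional ℝ E] [MeasurableSpace E] [BorelSpace E]

lemma integrable_mollifier : Integrable (mollifier (E := E) 1) := by
  have h := (integrable_rpow_neg_one_add_norm_sq (E := E) (μ := volume)
    (r := finrank ℝ E + 2) (by simp)).const_mul (finrank ℝ E : ℝ)
  refine h.congr (.of_forall fun z => ?_)
  simp only [mollifier, one_pow, mul_one]
  ring_nf

lemma integral_mollifier_pos [Nontrivial E] : 0 < ∫ z : E, mollifier 1 z := by
  have pos (z : E) : 0 < mollifier 1 z := by
    have : 0 < finrank ℝ E := Module.finrank_pos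
    unfold mollifier
    positivity
  rw [integral_pos_iff_support_of_nonneg (fun z => (pos z).le) integrable_mollifier,
    Function.support_eq_univ fun z => (pos z).ne']
  exact isOpen_univ.measure_pos _ Set.univ_nonempty

lemma integral_mollifier_smul (u : E → V) {ρ : ℝ} (hρ : 0 < ρ) (x : E) :
    ∫ y, mollifier ρ (x - y) • u y = ∫ z, mollifier 1 z • u (x - ρ • z) := by
  have dilate := Measure.integral_comp_smul_of_nonneg (volume : Measure E)
    (fun z => mollifier ρ z • u (x - z)) ρ (hR := hρ.le)
  calc ∫ y, mollifier ρ (x - y) • u y = ∫ z, mollifier ρ z • u (x - z) := by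
        simpa using integral_sub_left_eq_self (fun z : E => mollifier ρ z • u (x - z)) volume x
    _ = ρ ^ finrank ℝ E • ∫ z, mollifier ρ (ρ • z) • u (x - ρ • z) := by
        rw [dilate, smul_inv_smul₀ (by positivity)]
    _ = _ := by
        rw [← integral_smul]
        simp only [smul_smul, mollifier_smul hρ]

lemma tendsto_integral_mollifier_smul {u : E → V} (hu : Continuous u) (hcu : HasCompactSupport u)
    {ρ : ℕ → ℝ} (hρ : Tendsto ρ atTop (nhds 0)) (x : E) :
    Tendsto (fun k => ∫ z, mollifier 1 z • u (x - ρ k • z)) atTop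
      (nhds (∫ z : E, mollifier 1 z • u x)) := by
  obtain ⟨M, hM⟩ := hcu.exists_bound_of_continuous hu
  refine tendsto_integral_of_dominated_convergence (fun z : E => ‖mollifier 1 z‖ * M) (fun k => ?_)
    (integrable_mollifier.norm.mul_const _) (fun k => .of_forall fun z => ?_)
    (.of_forall fun z => ?_)
  · exact integrable_mollifier.1.smul
      (hu.comp (continuous_const.sub (continuous_id.const_smul _))).aestronglyMeasurable
  · rw [norm_smul]
    gcongr
    exact hM _
  · have shrink : Tendsto (fun k => x - ρ k • z) atTop (nhds x) := by
      simpa using tendsto_const_nhds.sub (hρ.smul_const z)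
    exact ((hu.tendsto x).comp shrink).const_smul _

end Mollifier

end CauchyKernel

section SingularIntegrals

open Module (finrank)

lemma indicator_ball_norm_sub_rpow {E : Type*} [NormedAddCommGroup E] (e : ℝ) {R : ℝ}
    {x y : E} (hy : y ∈ ball 0 R) :
    (ball 0 (R + ‖x‖)).indicator (fun z : E => ‖z‖ ^ e) (x - y) = ‖x - y‖ ^ e := by
  rw [Set.indicator_of_mem]
  rw [mem_ball_zero_iff] at hy ⊢
  linarith [norm_sub_le x y]

variable {E : Type*} [NormedAddCommGroup E] [InnerProductSpace ℝ E] [FiniteDimensional ℝ E]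
  [MeasurableSpace E] [BorelSpace E] [Nontrivial E]

lemma integrableOn_ball_norm_rpow {s : ℝ} (hs : 0 < s) (R : ℝ) :
    IntegrableOn (fun z : E => ‖z‖ ^ (s - finrank ℝ E)) (ball 0 R) := by
  refine integrableOn_ball_of_norm_le_rpow (C := 1) (α := finrank ℝ E - s)
    Module.finrank_pos (by simpa using hs) (.of_forall fun x => ?_)
    (Measurable.aestronglyMeasurable (by fun_prop))
  rw [Real.norm_of_nonneg (by positivity), one_mul, neg_sub]

lemma integrable_indicator_ball_norm_sub_rpow {s : ℝ} (hs : 0 < s) (R : ℝ) (x : E) :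
    Integrable fun y =>
      (ball 0 R).indicator (fun z : E => ‖z‖ ^ (s - finrank ℝ E)) (x - y) :=
  ((integrable_indicator_iff measurableSet_ball).2
    (integrableOn_ball_norm_rpow hs R)).comp_sub_left x

lemma integrableOn_ball_norm_sub_rpow {s : ℝ} (hs : 0 < s) (R : ℝ) (x : E) :
    IntegrableOn (fun y : E => ‖x - y‖ ^ (s - finrank ℝ E)) (ball 0 R) :=
  (integrable_indicator_ball_norm_sub_rpow hs (R + ‖x‖) x).integrableOn.congr_fun
    (fun _ hy => indicator_ball_norm_sub_rpow _ hy) measurableSet_ball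

lemma setIntegral_ball_norm_sub_rpow_le {s : ℝ} (hs : 0 < s) (R : ℝ) (x : E) :
    ∫ y in ball (0 : E) R, ‖x - y‖ ^ (s - finrank ℝ E) ≤
      ∫ z in ball (0 : E) (R + ‖x‖), ‖z‖ ^ (s - finrank ℝ E) := by
  rw [← setIntegral_congr_fun measurableSet_ball fun _ hy => indicator_ball_norm_sub_rpow _ hy]
  refine (setIntegral_le_integral (integrable_indicator_ball_norm_sub_rpow hs _ x)
    (.of_forall fun y => Set.indicator_nonneg (fun z _ => by positivity) _)).trans_eq ?_
  rw [integral_sub_left_eq_self ((ball 0 (R + ‖x‖)).indicator fun z : E =>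
    ‖z‖ ^ (s - finrank ℝ E)) volume x, integral_indicator measurableSet_ball]

end SingularIntegrals

section CauchyPompeiu

open Module (finrank)

variable {E V : Type*} [NormedAddCommGroup E] [InnerProductSpace ℝ E] [FiniteDimensional ℝ E]
  [MeasurableSpace E] [BorelSpace E] [NormedAddCommGroup V] [NormedSpace ℝ V]

/-- The fundamental solution of `dirac c`: the homogeneous kernel `‖z‖⁻ⁿ c(z)`, normalised so that
`u = cauchyKernel c * dirac c u`. -/
def cauchyKernel (c : E →L[ℝ] V →L[ℝ] V) (z : E) : V →L[ℝ] V :=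
  (-(∫ x : E, mollifier 1 x)⁻¹) • regularizedKernel c 0 z

lemma smoothHomogeneous_cauchyKernel (c : E →L[ℝ] V →L[ℝ] V) :
    SmoothHomogeneous (cauchyKernel c) (1 - finrank ℝ E) where
  contDiffAt hz j :=
    ((smoothHomogeneous_regularizedKernel_zero c).contDiffAt hz j).const_smul _
  map_smul ht z := by
    rw [cauchyKernel, cauchyKernel, (smoothHomogeneous_regularizedKernel_zero c).map_smul ht,
      smul_comm]

lemma integral_regularizedKernel_dirac [CompleteSpace V] {c : E →L[ℝ] V →L[ℝ] V}
    (hc : IsClifford c) {u : E → V} (hu : ContDiff ℝ 1 u) (hcu : HasCompactSupport u) {ρ : ℝ}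
    (hρ : 0 < ρ) (x : E) :
    ∫ y, regularizedKernel c ρ (x - y) (dirac c u y) = -∫ y, mollifier ρ (x - y) • u y := by
  set b := stdOrthonormalBasis ℝ E
  have kernel : ContDiff ℝ 1 fun y => regularizedKernel c ρ (x - y) :=
    (contDiff_regularizedKernel c hρ).comp (contDiff_const.sub contDiff_id)
  have divergence := integral_sum_fderiv_eq_zero b
    (F := fun i y => regularizedKernel c ρ (x - y) (c (b i) (u y)))
    (fun i => kernel.clm_apply ((c (b i)).contDiff.comp hu))
    (fun i => hcu.mono fun y hy h => hy (by simp [h]))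
  have integrand (y : E) :
      ∑ i, fderiv ℝ (fun y => regularizedKernel c ρ (x - y) (c (b i) (u y))) y (b i) =
        regularizedKernel c ρ (x - y) (dirac c u y) + mollifier ρ (x - y) • u y := by
    simp only [fderiv_regularizedKernel_apply c hu hρ, Finset.sum_sub_distrib,
      sum_fderiv_regularizedKernel hc b hρ, sub_neg_eq_add, dirac, map_sum, b]
  have continuous_mollifier : Continuous fun y => mollifier ρ (x - y) := by
    unfold mollifier
    exact continuous_const.mul
      ((by fun_prop : Continuous fun y => ρ ^ 2 + ‖x - y‖ ^ 2).rpow_const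
        fun y => Or.inl (by positivity))
  rw [eq_neg_iff_add_eq_zero, ← divergence, ← integral_add]
  · simp only [integrand]
  · exact (kernel.continuous.clm_apply (continuous_dirac c hu)).integrable_of_hasCompactSupport
      ((hasCompactSupport_dirac c hcu).mono fun y hy h => hy (by simp [h]))
  · exact (continuous_mollifier.smul hu.continuous).integrable_of_hasCompactSupport hcu.smul_left

variable [Nontrivial E]

lemma exists_integrable_dominating_regularizedKernel (c : E →L[ℝ] V →L[ℝ] V) {g : E → V}
    (hg : Continuous g) (hcg : HasCompactSupport g) (x : E) :
    ∃ F : E → ℝ, Integrable F ∧ ∀ ρ y, ‖regularizedKernel c ρ (x - y) (g y)‖ ≤ F y := by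
  obtain ⟨M, hM⟩ := hcg.exists_bound_of_continuous hg
  obtain ⟨R, hR⟩ := hcg.isCompact.isBounded.subset_ball (0 : E)
  refine ⟨(ball 0 R).indicator fun y => ‖c‖ * ‖x - y‖ ^ (1 - finrank ℝ E : ℝ) * M,
    (integrable_indicator_iff measurableSet_ball).2
      (((integrableOn_ball_norm_sub_rpow one_pos R x).const_mul _).mul_const _), fun ρ y => ?_⟩
  by_cases hy : y ∈ ball (0 : E) R
  · rw [Set.indicator_of_mem hy]
    exact ContinuousLinearMap.le_of_opNorm_le_of_le _ (norm_regularizedKernel_le c ρ _) (hM y)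
  · rw [Set.indicator_of_notMem hy, image_eq_zero_of_notMem_tsupport fun h => hy (hR h), map_zero,
      norm_zero]

lemma integrable_regularizedKernel_apply (c : E →L[ℝ] V →L[ℝ] V) {g : E → V} (hg : Continuous g)
    (hcg : HasCompactSupport g) (ρ : ℝ) (x : E) :
    Integrable fun y => regularizedKernel c ρ (x - y) (g y) := by
  obtain ⟨F, hF, dominated⟩ := exists_integrable_dominating_regularizedKernel c hg hcg x
  refine hF.mono' ?_ (.of_forall (dominated ρ))
  simp only [regularizedKernel, _root_.smul_apply]
  exact (Measurable.aestronglyMeasurable (by fun_prop)).smul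
    ((c.continuous.comp (continuous_const.sub continuous_id)).clm_apply hg).aestronglyMeasurable

lemma integrable_cauchyKernel_apply (c : E →L[ℝ] V →L[ℝ] V) {g : E → V} (hg : Continuous g)
    (hcg : HasCompactSupport g) (x : E) : Integrable fun y => cauchyKernel c (x - y) (g y) :=
  (integrable_regularizedKernel_apply c hg hcg 0 x).smul (-(∫ x : E, mollifier 1 x)⁻¹)

lemma integral_cauchyKernel_dirac [CompleteSpace V] {c : E →L[ℝ] V →L[ℝ] V} (hc : IsClifford c)
    {u : E → V} (hu : ContDiff ℝ 1 u) (hcu : HasCompactSupport u) (x : E) :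
    ∫ y, cauchyKernel c (x - y) (dirac c u y) = u x := by
  have hg := continuous_dirac c hu
  have hcg := hasCompactSupport_dirac c hcu
  obtain ⟨F, hF, dominated⟩ := exists_integrable_dominating_regularizedKernel c hg hcg x
  have hρ : Tendsto (fun k : ℕ => 1 / ((k : ℝ) + 1)) atTop (nhds 0) :=
    tendsto_one_div_add_atTop_nhds_zero_nat
  have kernel_limit := tendsto_integral_of_dominated_convergence F
    (fun k : ℕ => (integrable_regularizedKernel_apply c hg hcg (1 / ((k : ℝ) + 1)) x).1) hF
    (fun k => .of_forall (dominated _))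
    (.of_forall fun y => ((ContinuousLinearMap.apply ℝ V (dirac c u y)).continuous.tendsto _).comp
      (tendsto_regularizedKernel c hρ (x - y)))
  simp only [integral_regularizedKernel_dirac hc hu hcu Nat.one_div_pos_of_nat,
    integral_mollifier_smul u Nat.one_div_pos_of_nat] at kernel_limit
  simp only [ContinuousLinearMap.apply_apply] at kernel_limit
  have limit_eq := tendsto_nhds_unique kernel_limit
    (tendsto_integral_mollifier_smul hu.continuous hcu hρ x).neg
  simp only [cauchyKernel, _root_.smul_apply]
  rw [integral_smul, limit_eq, integral_smul_const, smul_neg, neg_smul, neg_neg,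
    inv_smul_smul₀ integral_mollifier_pos.ne']

end CauchyPompeiu

section KernelRemainder

variable {X W : Type*} [NormedAddCommGroup X] [NormedSpace ℝ X]
  [NormedAddCommGroup W] [NormedSpace ℝ W] {G : X → W} {p β γ : ℝ} {m : ℕ}

/-- The kernel `x ↦ G (x - y)` minus its Taylor polynomial of degree `m` at `x = 0`. -/
def kernelRemainder (G : X → W) (m : ℕ) (x y : X) : W :=
  G (x - y) - ∑ k ∈ Finset.range (m + 1),
    (k.factorial : ℝ)⁻¹ • iteratedFDeriv ℝ k G (-y) (fun _ => x)

namespace SmoothHomogeneous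

variable [FiniteDimensional ℝ X]

lemma exists_kernelRemainder_le_of_near [CompleteSpace W] (hG : SmoothHomogeneous G p)
    (hp : p ≤ m + 1) (hγ0 : 0 ≤ γ) (hγ : γ ≤ m + 1) :
    ∃ C : ℝ, 0 ≤ C ∧ ∀ x y, y ≠ 0 → ‖x‖ ≤ ‖y‖ / 2 →
      ‖kernelRemainder G m x y‖ * ‖y‖ ^ β ≤ C * ‖x‖ ^ γ * ‖y‖ ^ (p + β - γ) := by
  obtain ⟨C, hC0, hC⟩ := hG.exists_norm_sub_taylor_le hp
  refine ⟨C, hC0, fun x y hy hxy => ?_⟩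
  have hy' : 0 < ‖y‖ := norm_pos_iff.2 hy
  have taylor := hC (-y) x (by simpa using hy) (by simpa using hxy)
  rw [neg_add_eq_sub, norm_neg] at taylor
  have trade : ‖x‖ ^ (m + 1) ≤ ‖x‖ ^ γ * ‖y‖ ^ (m + 1 - γ) := calc
    ‖x‖ ^ (m + 1) = ‖x‖ ^ γ * ‖x‖ ^ (m + 1 - γ) := by
      rw [← Real.rpow_add_of_nonneg (norm_nonneg x) hγ0 (by linarith), ← Real.rpow_natCast]
      congr 1
      push_cast
      ring
    _ ≤ _ := by
      gcongr
      linarith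
  calc _ ≤ C * (‖x‖ ^ γ * ‖y‖ ^ (m + 1 - γ)) * ‖y‖ ^ (p - (m + 1 : ℕ)) * ‖y‖ ^ β := by
        gcongr
        exact taylor.trans (by gcongr)
    _ = C * ‖x‖ ^ γ * (‖y‖ ^ (m + 1 - γ) * ‖y‖ ^ (p - (m + 1 : ℕ)) * ‖y‖ ^ β) := by ring
    _ = _ := by
        rw [← Real.rpow_add hy', ← Real.rpow_add hy']
        congr 2
        push_cast
        ring

lemma exists_norm_sub_le_of_far (hG : SmoothHomogeneous G p) (hβ : 0 ≤ β) (hβγ : β ≤ γ) :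
    ∃ C : ℝ, 0 ≤ C ∧ ∀ x y, x ≠ y → ‖y‖ < 2 * ‖x‖ →
      ‖G (x - y)‖ * ‖y‖ ^ β ≤ C * ‖x‖ ^ γ * ‖x - y‖ ^ (p + β - γ) := by
  obtain ⟨C, hC0, hC⟩ := hG.exists_norm_iteratedFDeriv_le 0
  simp only [norm_iteratedFDeriv_zero, Nat.cast_zero, sub_zero] at hC
  refine ⟨C * (3 ^ (γ - β) * 2 ^ β), by positivity, fun x y hxy hy => ?_⟩
  have hx : 0 < ‖x‖ := by linarith [norm_nonneg y]
  have hd : 0 < ‖x - y‖ := norm_pos_iff.2 (sub_ne_zero.2 hxy)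
  calc _ ≤ C * ‖x - y‖ ^ p * (2 * ‖x‖) ^ β := by
        gcongr
        exact hC _ (sub_ne_zero.2 hxy)
    _ = C * (‖x - y‖ ^ (p + β - γ) * ‖x - y‖ ^ (γ - β)) * (2 * ‖x‖) ^ β := by
        rw [← Real.rpow_add hd]
        ring_nf
    _ ≤ C * (‖x - y‖ ^ (p + β - γ) * (3 * ‖x‖) ^ (γ - β)) * (2 * ‖x‖) ^ β := by
        gcongr
        linarith [norm_sub_le x y]
    _ = C * (3 ^ (γ - β) * 2 ^ β) * (‖x‖ ^ (γ - β) * ‖x‖ ^ β) * ‖x - y‖ ^ (p + β - γ) := by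
        rw [Real.mul_rpow (by norm_num) hx.le, Real.mul_rpow (by norm_num) hx.le]
        ring
    _ = _ := by rw [← Real.rpow_add hx, sub_add_cancel]

lemma exists_norm_taylorTerm_le_of_far (hG : SmoothHomogeneous G p) {k : ℕ} (hk : k ≤ γ) :
    ∃ C : ℝ, 0 ≤ C ∧ ∀ x y, y ≠ 0 → ‖y‖ < 2 * ‖x‖ →
      ‖(k.factorial : ℝ)⁻¹ • iteratedFDeriv ℝ k G (-y) (fun _ => x)‖ * ‖y‖ ^ β
        ≤ C * ‖x‖ ^ γ * ‖y‖ ^ (p + β - γ) := by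
  obtain ⟨C, hC0, hC⟩ := hG.exists_norm_iteratedFDeriv_le k
  refine ⟨C * 2 ^ (γ - k), by positivity, fun x y hy hyx => ?_⟩
  have hx : 0 < ‖x‖ := by linarith [norm_nonneg y]
  have hy' : 0 < ‖y‖ := norm_pos_iff.2 hy
  have derivative_le : ‖(k.factorial : ℝ)⁻¹ • iteratedFDeriv ℝ k G (-y) (fun _ => x)‖ ≤
      C * ‖y‖ ^ (p - k) * ‖x‖ ^ k := by
    rw [norm_smul, norm_inv, Real.norm_natCast]
    refine (mul_le_of_le_one_left (norm_nonneg _)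
      (inv_le_one_of_one_le₀ (mod_cast k.factorial_pos))).trans ?_
    simpa using ContinuousMultilinearMap.le_of_opNorm_le (hC (-y) (neg_ne_zero.2 hy)) (fun _ => x)
  calc _ ≤ C * ‖y‖ ^ (p - k) * ‖x‖ ^ (k : ℝ) * ‖y‖ ^ β := by
        rw [Real.rpow_natCast]
        gcongr
    _ = C * ‖x‖ ^ (k : ℝ) * (‖y‖ ^ (p + β - γ) * ‖y‖ ^ (γ - k)) := by
        rw [← Real.rpow_add hy', show p + β - γ + (γ - k) = p - k + β by ring,
          Real.rpow_add hy']
        ring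
    _ ≤ C * ‖x‖ ^ (k : ℝ) * (‖y‖ ^ (p + β - γ) * (2 * ‖x‖) ^ (γ - k)) := by
        gcongr
    _ = C * 2 ^ (γ - k) * (‖x‖ ^ (k : ℝ) * ‖x‖ ^ (γ - k)) * ‖y‖ ^ (p + β - γ) := by
        rw [Real.mul_rpow (by norm_num) hx.le]
        ring
    _ = _ := by rw [← Real.rpow_add hx, add_sub_cancel]

lemma exists_norm_kernelRemainder_le [CompleteSpace W] (hG : SmoothHomogeneous G p)
    (hp : p ≤ m + 1) (hβ : 0 ≤ β) (hβγ : β ≤ γ) (hmγ : m ≤ γ) (hγm : γ ≤ m + 1) :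
    ∃ C : ℝ, 0 ≤ C ∧ ∀ x y, y ≠ 0 → x ≠ y → ‖kernelRemainder G m x y‖ * ‖y‖ ^ β ≤
      C * ‖x‖ ^ γ * (‖y‖ ^ (p + β - γ) + ‖x - y‖ ^ (p + β - γ)) := by
  obtain ⟨C₁, hC₁, near⟩ :=
    hG.exists_kernelRemainder_le_of_near (β := β) hp (hβ.trans hβγ) hγm
  obtain ⟨C₂, hC₂, far_kernel⟩ := hG.exists_norm_sub_le_of_far hβ hβγ
  have far_terms (k : ℕ) (hk : k ∈ Finset.range (m + 1)) :=
    hG.exists_norm_taylorTerm_le_of_far (k := k) (β := β) (γ := γ)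
      (hmγ.trans' (mod_cast Finset.mem_range_succ_iff.1 hk))
  choose! B hB far_term using far_terms
  have hS : 0 ≤ ∑ k ∈ Finset.range (m + 1), B k := Finset.sum_nonneg hB
  refine ⟨C₁ + C₂ + ∑ k ∈ Finset.range (m + 1), B k, by positivity, fun x y hy hxy => ?_⟩
  set s := ‖y‖ ^ (p + β - γ)
  set t := ‖x - y‖ ^ (p + β - γ)
  have hs : 0 ≤ ‖x‖ ^ γ * s := by positivity
  have ht : 0 ≤ ‖x‖ ^ γ * t := by positivity
  rcases le_or_gt ‖x‖ (‖y‖ / 2) with hle | hlt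
  · nlinarith [near x y hy hle]
  · have hlt' : ‖y‖ < 2 * ‖x‖ := by linarith
    have split : ‖kernelRemainder G m x y‖ * ‖y‖ ^ β ≤
        C₂ * ‖x‖ ^ γ * t + ∑ k ∈ Finset.range (m + 1), B k * ‖x‖ ^ γ * s := calc
      _ ≤ (‖G (x - y)‖ + ∑ k ∈ Finset.range (m + 1),
            ‖(k.factorial : ℝ)⁻¹ • iteratedFDeriv ℝ k G (-y) (fun _ => x)‖) * ‖y‖ ^ β := by
          gcongr
          exact (norm_sub_le _ _).trans (by gcongr; exact norm_sum_le _ _)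
      _ ≤ _ := by
          rw [add_mul, Finset.sum_mul]
          exact add_le_add (far_kernel x y hxy hlt')
            (Finset.sum_le_sum fun k hk => far_term k hk x y hy hlt')
    rw [← Finset.sum_mul, ← Finset.sum_mul] at split
    nlinarith

end SmoothHomogeneous

end KernelRemainder

section KernelExpansion

open Module (finrank)

variable {E V W : Type*} [NormedAddCommGroup E] [InnerProductSpace ℝ E]
  [NormedAddCommGroup V] [NormedSpace ℝ V] [NormedAddCommGroup W] [NormedSpace ℝ W]
  [FiniteDimensional ℝ E] [MeasurableSpace E] [BorelSpace E]
  {G : E → V →L[ℝ] W} {g : E → V} {K s β γ : ℝ} {m : ℕ}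

/-- The `k`-th coefficient, as a multilinear form in `x`, of the formal Taylor expansion at the
origin of the potential `x ↦ ∫ y, G (x - y) (g y)`, obtained by expanding the kernel. -/
def taylorMoment (G : E → V →L[ℝ] W) (g : E → V) (k : ℕ) : E [×k]→L[ℝ] W :=
  (k.factorial : ℝ)⁻¹ • ∫ y, (iteratedFDeriv ℝ k G (-y)).flipLinear (g y)

lemma norm_flipLinear_apply_le {X : Type*} [NormedAddCommGroup X] [NormedSpace ℝ X] {k : ℕ}
    (f : X [×k]→L[ℝ] V →L[ℝ] W) (v : V) : ‖f.flipLinear v‖ ≤ ‖f‖ * ‖v‖ :=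
  ContinuousMultilinearMap.opNorm_le_bound (by positivity) fun x =>
    ((f x).le_of_opNorm_le (f.le_opNorm x) v).trans_eq (by ring)

variable [Nontrivial E]

lemma SmoothHomogeneous.aestronglyMeasurable_iteratedFDeriv_neg {p : ℝ}
    (hG : SmoothHomogeneous G p) (k : ℕ) :
    AEStronglyMeasurable (fun y => iteratedFDeriv ℝ k G (-y)) volume := by
  have punctured : (volume : Measure E).restrict {0}ᶜ = volume := restrict_compl_singleton 0
  rw [← punctured]
  refine ContinuousOn.aestronglyMeasurable (fun y hy => ContinuousAt.continuousWithinAt ?_)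
    (measurableSet_singleton 0).compl
  exact (((hG.contDiffAt (neg_ne_zero.2 hy) k).iteratedFDeriv_right (i := k) (m := 0)
    (by simp)).continuousAt).comp (f := fun y : E => -y) continuous_neg.continuousAt

lemma SmoothHomogeneous.aestronglyMeasurable_flipLinear_iteratedFDeriv {p : ℝ}
    (hG : SmoothHomogeneous G p) (hg : AEStronglyMeasurable g volume) (k : ℕ) :
    AEStronglyMeasurable (fun y => (iteratedFDeriv ℝ k G (-y)).flipLinear (g y)) volume :=
  (continuous_fst.clm_apply continuous_snd).comp_aestronglyMeasurable
    (((ContinuousLinearMap.flipMultilinearEquiv ℝ (fun _ : Fin k => E) V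
      W).symm.continuous.comp_aestronglyMeasurable
        (hG.aestronglyMeasurable_iteratedFDeriv_neg k)).prodMk hg)

lemma SmoothHomogeneous.integrable_flipLinear_iteratedFDeriv
    (hG : SmoothHomogeneous G (s - finrank ℝ E)) (hg : AEStronglyMeasurable g volume)
    (hgb : ∀ y, ‖g y‖ ≤ K * ‖y‖ ^ β) (hg_supp : ∀ y ∉ ball 0 1, g y = 0) {k : ℕ}
    (hk : k < s + β) :
    Integrable fun y => (iteratedFDeriv ℝ k G (-y)).flipLinear (g y) := by
  obtain ⟨B, hB0, hB⟩ := hG.exists_norm_iteratedFDeriv_le k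
  refine (((integrable_indicator_iff measurableSet_ball).2
    (integrableOn_ball_norm_rpow (E := E) (s := s + β - k) (by linarith) 1)).const_mul
    (B * K)).mono' (hG.aestronglyMeasurable_flipLinear_iteratedFDeriv hg k) ?_
  filter_upwards [Measure.ae_ne volume 0] with y hy
  by_cases hball : y ∈ ball 0 1
  · rw [Set.indicator_of_mem hball]
    calc _ ≤ ‖iteratedFDeriv ℝ k G (-y)‖ * ‖g y‖ := norm_flipLinear_apply_le _ _
      _ ≤ B * ‖y‖ ^ (s - finrank ℝ E - k) * (K * ‖y‖ ^ β) := by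
        gcongr
        · simpa using hB (-y) (neg_ne_zero.2 hy)
        · exact hgb y
      _ = B * K * (‖y‖ ^ (s - finrank ℝ E - k) * ‖y‖ ^ β) := by ring
      _ = _ := by
        rw [← Real.rpow_add (norm_pos_iff.2 hy)]
        ring_nf
  · rw [Set.indicator_of_notMem hball, hg_supp y hball, map_zero, norm_zero, mul_zero]

lemma SmoothHomogeneous.integral_sub_sum_taylorMoment [CompleteSpace W]
    (hG : SmoothHomogeneous G (s - finrank ℝ E)) (hg : AEStronglyMeasurable g volume)
    (hgb : ∀ y, ‖g y‖ ≤ K * ‖y‖ ^ β) (hg_supp : ∀ y ∉ ball 0 1, g y = 0) (hm : m < s + β)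
    {x : E} (hGg : Integrable fun y => G (x - y) (g y)) :
    (∫ y, G (x - y) (g y)) - ∑ k ∈ Finset.range (m + 1), taylorMoment G g k (fun _ => x) =
      ∫ y, kernelRemainder G m x y (g y) := by
  have flip_integrable (k : ℕ) (hk : k ∈ Finset.range (m + 1)) :
      Integrable fun y => (iteratedFDeriv ℝ k G (-y)).flipLinear (g y) :=
    hG.integrable_flipLinear_iteratedFDeriv hg hgb hg_supp
      (hm.trans_le' (mod_cast Finset.mem_range_succ_iff.1 hk))
  have term_integrable (k : ℕ) (hk : k ∈ Finset.range (m + 1)) :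
      Integrable fun y => (k.factorial : ℝ)⁻¹ • iteratedFDeriv ℝ k G (-y) (fun _ => x) (g y) :=
    ((ContinuousMultilinearMap.apply ℝ (fun _ : Fin k => E) W fun _ => x).integrable_comp
      (flip_integrable k hk)).smul _
  have moment_eq (k : ℕ) (hk : k ∈ Finset.range (m + 1)) : taylorMoment G g k (fun _ => x) =
      ∫ y, (k.factorial : ℝ)⁻¹ • iteratedFDeriv ℝ k G (-y) (fun _ => x) (g y) := by
    rw [taylorMoment, _root_.smul_apply,
      ContinuousMultilinearMap.integral_apply (flip_integrable k hk), integral_smul]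
    rfl
  rw [Finset.sum_congr rfl moment_eq, ← integral_finsetSum _ term_integrable,
    ← integral_sub hGg (integrable_finsetSum _ term_integrable)]
  simp only [kernelRemainder, _root_.sub_apply, _root_.sum_apply, _root_.smul_apply]

lemma nonneg_of_norm_le_mul_norm_rpow {X W : Type*} [NormedAddCommGroup X] [Nontrivial X]
    [SeminormedAddCommGroup W] {g : X → W} {K b : ℝ} (hg : ∀ y, ‖g y‖ ≤ K * ‖y‖ ^ b) : 0 ≤ K := by
  obtain ⟨y, hy⟩ := exists_ne (0 : X)
  exact nonneg_of_mul_nonneg_left ((norm_nonneg _).trans (hg y)) (by positivity)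

lemma SmoothHomogeneous.exists_norm_kernelRemainder_apply_le [CompleteSpace W] {p : ℝ}
    (hG : SmoothHomogeneous G p) (hp : p ≤ m + 1)
    (hβ : 0 ≤ β) (hβγ : β ≤ γ) (hmγ : m ≤ γ) (hγm : γ ≤ m + 1) :
    ∃ C : ℝ, 0 ≤ C ∧ ∀ (g : E → V) (K : ℝ), (∀ y, ‖g y‖ ≤ K * ‖y‖ ^ β) → ∀ x,
      ∀ᵐ y, ‖kernelRemainder G m x y (g y)‖ ≤
        C * K * ‖x‖ ^ γ * (‖y‖ ^ (p + β - γ) + ‖x - y‖ ^ (p + β - γ)) := by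
  obtain ⟨C, hC0, hC⟩ := hG.exists_norm_kernelRemainder_le hp hβ hβγ hmγ hγm
  refine ⟨C, hC0, fun g K hgb x => ?_⟩
  have hK : 0 ≤ K := nonneg_of_norm_le_mul_norm_rpow hgb
  filter_upwards [Measure.ae_ne volume 0, Measure.ae_ne volume x] with y hy hyx
  calc _ ≤ ‖kernelRemainder G m x y‖ * (K * ‖y‖ ^ β) :=
        (kernelRemainder G m x y).le_opNorm_of_le (hgb y)
    _ = K * (‖kernelRemainder G m x y‖ * ‖y‖ ^ β) := by ring
    _ ≤ K * (C * ‖x‖ ^ γ * (‖y‖ ^ (p + β - γ) + ‖x - y‖ ^ (p + β - γ))) :=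
        mul_le_mul_of_nonneg_left (hC x y hy hyx.symm) hK
    _ = _ := by ring

lemma SmoothHomogeneous.exists_norm_integral_sub_sum_taylorMoment_le [CompleteSpace W]
    (hG : SmoothHomogeneous G (s - finrank ℝ E)) (hs : s ≤ finrank ℝ E)
    (hβ : 0 ≤ β) (hβγ : β ≤ γ) (hmγ : m ≤ γ) (hγm : γ ≤ m + 1) (hγ : γ < s + β) :
    ∃ C : ℝ, 0 ≤ C ∧ ∀ (g : E → V) (K : ℝ), AEStronglyMeasurable g volume →
      (∀ y, ‖g y‖ ≤ K * ‖y‖ ^ β) → (∀ y ∉ ball 0 1, g y = 0) →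
      (∀ x, Integrable fun y => G (x - y) (g y)) → ∀ x, ‖x‖ ≤ 1 →
      ‖(∫ y, G (x - y) (g y)) - ∑ k ∈ Finset.range (m + 1), taylorMoment G g k (fun _ => x)‖ ≤
        C * K * ‖x‖ ^ γ := by
  obtain ⟨C, hC0, hC⟩ := hG.exists_norm_kernelRemainder_apply_le
    (by linarith [(m.cast_nonneg : (0 : ℝ) ≤ m)]) hβ hβγ hmγ hγm
  rw [show s - finrank ℝ E + β - γ = s + β - γ - finrank ℝ E by ring] at hC
  set e : ℝ := s + β - γ - finrank ℝ E
  have hε : 0 < s + β - γ := by linarith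
  have near_origin : IntegrableOn (fun z : E => ‖z‖ ^ e) (ball 0 1) :=
    integrableOn_ball_norm_rpow hε 1
  refine ⟨C * ((∫ z in ball (0 : E) 1, ‖z‖ ^ e) + ∫ z in ball (0 : E) 2, ‖z‖ ^ e),
    by positivity, fun g K hg hgb hg_supp hGg x hx => ?_⟩
  have near_x : IntegrableOn (fun y : E => ‖x - y‖ ^ e) (ball 0 1) :=
    integrableOn_ball_norm_sub_rpow hε 1 x
  have translate : ∫ y in ball (0 : E) 1, ‖x - y‖ ^ e ≤ ∫ z in ball (0 : E) 2, ‖z‖ ^ e :=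
    (setIntegral_ball_norm_sub_rpow_le hε 1 x).trans <|
      setIntegral_mono_set (integrableOn_ball_norm_rpow hε 2) (.of_forall fun z => by positivity)
        (ball_subset_ball (by linarith)).eventuallyLE
  have hK : 0 ≤ K := nonneg_of_norm_le_mul_norm_rpow hgb
  rw [hG.integral_sub_sum_taylorMoment hg hgb hg_supp (hγ.trans_le' hmγ) (hGg x),
    ← setIntegral_eq_integral_of_forall_compl_eq_zero fun y hy => by rw [hg_supp y hy, map_zero]]
  calc _ ≤ ∫ y in ball 0 1, C * K * ‖x‖ ^ γ * (‖y‖ ^ e + ‖x - y‖ ^ e) :=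
        norm_integral_le_of_norm_le ((near_origin.add near_x).const_mul _)
          (ae_restrict_of_ae (hC g K hgb x))
    _ = C * K * ‖x‖ ^ γ * ((∫ y in ball (0 : E) 1, ‖y‖ ^ e) + ∫ y in ball 0 1, ‖x - y‖ ^ e) := by
        rw [integral_const_mul, integral_add near_origin near_x]
    _ ≤ C * K * ‖x‖ ^ γ *
          ((∫ y in ball (0 : E) 1, ‖y‖ ^ e) + ∫ y in ball (0 : E) 2, ‖y‖ ^ e) := by gcongr
    _ = _ := by ring

end KernelExpansion

section VanishingOrder

open Asymptotics

/-- `f` vanishes to infinite order at the origin. -/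
def IsFlat {E F : Type*} [NormedAddCommGroup E] [NormedAddCommGroup F] (f : E → F) : Prop :=
  ∀ k : ℕ, f =O[nhds 0] fun x => ‖x‖ ^ k

lemma isLittleO_norm_rpow_norm_rpow {X : Type*} [SeminormedAddCommGroup X] {a b : ℝ} (ha : 0 ≤ a)
    (hab : a < b) : (fun x : X => ‖x‖ ^ b) =o[nhds 0] fun x => ‖x‖ ^ a := by
  have small : (fun x : X => ‖x‖ ^ (b - a)) =o[nhds 0] fun _ => (1 : ℝ) := by
    rw [isLittleO_one_iff]
    have := (continuous_norm (E := X)).rpow_const fun _ => .inr (sub_pos.2 hab).le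
    simpa [Real.zero_rpow (sub_pos.2 hab).ne'] using this.tendsto 0
  simpa [← Real.rpow_add_of_nonneg (norm_nonneg _) (sub_pos.2 hab).le ha] using
    small.mul_isBigO (isBigO_refl (fun x : X => ‖x‖ ^ a) (nhds 0))

lemma isBigO_norm_rpow_norm_rpow {X : Type*} [SeminormedAddCommGroup X] {a b : ℝ} (ha : 0 ≤ a)
    (hab : a ≤ b) : (fun x : X => ‖x‖ ^ b) =O[nhds 0] fun x => ‖x‖ ^ a := by
  rcases hab.eq_or_lt with rfl | hab
  · exact isBigO_refl _ _
  · exact (isLittleO_norm_rpow_norm_rpow ha hab).isBigO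

lemma isBigO_norm_rpow_principal_closedBall {X F : Type*} [NormedAddCommGroup X] [ProperSpace X]
    [NormedAddCommGroup F] {f : X → F} {R e : ℝ} (he : 0 ≤ e)
    (hf : ContinuousOn f (closedBall 0 R)) (hO : f =O[nhds 0] fun x => ‖x‖ ^ e) :
    f =O[𝓟 (closedBall 0 R)] fun x => ‖x‖ ^ e := by
  obtain ⟨C, hC⟩ := hO.bound
  obtain ⟨ε, hε, near⟩ := Metric.eventually_nhds_iff_ball.1 hC
  have compact : IsCompact (closedBall (0 : X) R \ ball 0 ε) :=
    (isCompact_closedBall 0 R).diff isOpen_ball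
  have away : f =O[𝓟 (closedBall 0 R \ ball 0 ε)] fun x => ‖x‖ ^ e :=
    ((hf.mono Set.sdiff_subset).isBigO_principal compact (c := (1 : ℝ)) (by simp)).trans <|
      (continuous_norm.rpow_const fun _ => .inr he).continuousOn.isBigO_rev_principal compact
        (fun x hx => (Real.rpow_pos_of_pos (hε.trans_le (by simpa using hx.2)) e).ne') 1
  refine ((isBigO_principal.2 ⟨C, near⟩).sup away).mono ?_
  rw [sup_principal, Set.union_sdiff_self]
  exact principal_mono.2 Set.subset_union_right

lemma isBigO_diag {X W : Type*} [SeminormedAddCommGroup X] [NormedSpace ℝ X]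
    [SeminormedAddCommGroup W] [NormedSpace ℝ W] {m : ℕ} (Q : X [×m]→L[ℝ] W)
    (l : Filter X) : (fun x => Q fun _ => x) =O[l] fun x => ‖x‖ ^ (m : ℝ) :=
  isBigO_of_le' (c := ‖Q‖) _ fun x => by simpa using Q.le_opNorm fun _ => x

lemma forall_diag_eq_zero_of_isBigO {X W : Type*} [NormedAddCommGroup X] [NormedSpace ℝ X]
    [NormedAddCommGroup W] [NormedSpace ℝ W] (Q : ∀ k : ℕ, X [×k]→L[ℝ] W) (m : ℕ)
    (h : (fun x => ∑ k ∈ Finset.range m, Q k fun _ => x) =O[nhds 0] fun x => ‖x‖ ^ (m : ℝ)) :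
    ∀ k < m, ∀ x, (Q k fun _ => x) = 0 := by
  induction m with
  | zero => simp
  | succ m ih =>
    simp only [Finset.sum_range_succ] at h
    have lower_isBigO : (fun x => ∑ k ∈ Finset.range m, Q k fun _ => x) =O[nhds 0]
        fun x => ‖x‖ ^ (m : ℝ) := by
      simpa using (h.trans (isBigO_norm_rpow_norm_rpow m.cast_nonneg (by simp))).sub
        (isBigO_diag (Q m) _)
    have lower_eq_zero := ih lower_isBigO
    have top_eq_zero : ∀ x, (Q m fun _ => x) = 0 := by
      refine IsBigO.continuousMultilinearMap_apply_eq_zero ?_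
      refine h.congr (fun x => ?_) fun x => Real.rpow_natCast _ _
      rw [Finset.sum_eq_zero fun k hk => lower_eq_zero k (Finset.mem_range.1 hk) x, zero_add]
    exact Nat.forall_lt_succ_right.2 ⟨lower_eq_zero, top_eq_zero⟩

end VanishingOrder

section LeadingTerm

open Asymptotics

variable {E V : Type*} [NormedAddCommGroup E] [InnerProductSpace ℝ E] [FiniteDimensional ℝ E]
  [MeasurableSpace E] [BorelSpace E] [NormedAddCommGroup V] [NormedSpace ℝ V]
  {c : E →L[ℝ] V →L[ℝ] V} {u : E → V} {m : ℕ}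

/-- The degree-`k` term of the expansion at the origin of a compactly supported `u`, read off from
the representation `u = cauchyKernel c * dirac c u`. -/
def diracTaylor (c : E →L[ℝ] V →L[ℝ] V) (u : E → V) (k : ℕ) : E [×k]→L[ℝ] V :=
  taylorMoment (cauchyKernel c) (dirac c u) k

variable [Nontrivial E] [CompleteSpace V]

lemma isBigO_sub_sum_diracTaylor (hc : IsClifford c) (hu : ContDiff ℝ 1 u)
    (hsupp : tsupport u ⊆ ball 0 1) {β γ : ℝ} (hβ : 0 ≤ β) (hβγ : β ≤ γ) (hmγ : m ≤ γ)
    (hγm : γ ≤ m + 1) (hγ : γ < 1 + β) (hDu : dirac c u =O[nhds 0] fun x => ‖x‖ ^ β) :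
    (fun x => u x - ∑ k ∈ Finset.range (m + 1), diracTaylor c u k fun _ => x) =O[nhds 0]
      fun x => ‖x‖ ^ γ := by
  have hcu : HasCompactSupport u :=
    (isCompact_closedBall 0 1).of_isClosed_subset (isClosed_tsupport u)
      (hsupp.trans ball_subset_closedBall)
  have hDu_cont := continuous_dirac c hu
  obtain ⟨K, hK0, hK⟩ :=
    (isBigO_norm_rpow_principal_closedBall hβ hDu_cont.continuousOn hDu).exists_nonneg
  rw [isBigOWith_principal] at hK
  have vanish : ∀ y ∉ ball (0 : E) 1, dirac c u y = 0 := fun y hy =>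
    dirac_eq_zero_of_notMem_tsupport c fun h => hy (hsupp h)
  have bound : ∀ y, ‖dirac c u y‖ ≤ K * ‖y‖ ^ β := fun y => by
    by_cases hy : y ∈ ball (0 : E) 1
    · simpa [abs_of_nonneg (Real.rpow_nonneg (norm_nonneg y) β)] using
        hK y (ball_subset_closedBall hy)
    · rw [vanish y hy, norm_zero]
      positivity
  obtain ⟨C, -, hC⟩ :=
    (smoothHomogeneous_cauchyKernel c).exists_norm_integral_sub_sum_taylorMoment_le
      (by exact_mod_cast Module.finrank_pos) hβ hβγ hmγ hγm hγ
  refine IsBigO.of_bound (C * K) (Metric.eventually_nhds_iff_ball.2 ⟨1, one_pos, fun x hx => ?_⟩)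
  rw [Real.norm_of_nonneg (by positivity)]
  simpa only [diracTaylor, integral_cauchyKernel_dirac hc hu hcu] using
    hC _ K hDu_cont.aestronglyMeasurable bound vanish
      (integrable_cauchyKernel_apply c hDu_cont (hasCompactSupport_dirac c hcu)) x
      (mem_ball_zero_iff.1 hx).le

lemma diracTaylor_diag_eq_zero (hc : IsClifford c) (hu : ContDiff ℝ 1 u)
    (hsupp : tsupport u ⊆ ball 0 1) (hDu : dirac c u =O[nhds 0] u)
    (hum : u =O[nhds 0] fun x => ‖x‖ ^ (m : ℝ)) {k : ℕ} (hk : k < m) (x : E) :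
    (diracTaylor c u k fun _ => x) = 0 := by
  obtain _ | m := m
  · simp at hk
  push_cast at hum
  have expansion := isBigO_sub_sum_diracTaylor hc hu hsupp (m := m) (γ := m + 1) (by positivity)
    le_rfl (by simp) le_rfl (by simp) (hDu.trans hum)
  refine forall_diag_eq_zero_of_isBigO (diracTaylor c u) (m + 1) ?_ k hk x
  push_cast
  simpa using hum.sub expansion

lemma isBigO_sub_diracTaylor (hc : IsClifford c) (hu : ContDiff ℝ 1 u)
    (hsupp : tsupport u ⊆ ball 0 1) (hDu : dirac c u =O[nhds 0] u)
    (hum : u =O[nhds 0] fun x => ‖x‖ ^ (m : ℝ)) {δ : ℝ} (hδ0 : 0 ≤ δ) (hδ1 : δ < 1) :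
    (fun x => u x - diracTaylor c u m fun _ => x) =O[nhds 0] fun x => ‖x‖ ^ (m + δ) := by
  refine (isBigO_sub_sum_diracTaylor hc hu hsupp (m := m) (γ := m + δ) m.cast_nonneg (by simpa)
    (by simpa) (by linarith) (by linarith) (hDu.trans hum)).congr_left fun x => ?_
  rw [Finset.sum_range_succ, Finset.sum_eq_zero fun k hk =>
    diracTaylor_diag_eq_zero hc hu hsupp hDu hum (Finset.mem_range.1 hk) x, zero_add]

lemma isBigO_succ_of_diracTaylor_diag_eq_zero (hc : IsClifford c) (hu : ContDiff ℝ 1 u)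
    (hsupp : tsupport u ⊆ ball 0 1) (hDu : dirac c u =O[nhds 0] u)
    (hum : u =O[nhds 0] fun x => ‖x‖ ^ (m : ℝ)) (hT : ∀ x, (diracTaylor c u m fun _ => x) = 0) :
    u =O[nhds 0] fun x => ‖x‖ ^ ((m + 1 : ℕ) : ℝ) := by
  have half : u =O[nhds 0] fun x => ‖x‖ ^ (m + 1 / 2 : ℝ) := by
    simpa [hT] using isBigO_sub_diracTaylor hc hu hsupp hDu hum (δ := 1 / 2) (by norm_num)
      (by norm_num)
  have full := isBigO_sub_sum_diracTaylor hc hu hsupp (m := m) (γ := m + 1) (by positivity)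
    (by linarith) (by simp) le_rfl (by linarith) (hDu.trans half)
  rw [Nat.cast_succ]
  refine full.congr_left fun x => ?_
  rw [Finset.sum_range_succ, hT, Finset.sum_eq_zero fun k hk =>
    diracTaylor_diag_eq_zero hc hu hsupp hDu hum (Finset.mem_range.1 hk) x, zero_add, sub_zero]

lemma exists_order_of_not_isFlat (hc : IsClifford c) (hu : ContDiff ℝ 1 u)
    (hsupp : tsupport u ⊆ ball 0 1) (hDu : dirac c u =O[nhds 0] u) (hu0 : u 0 = 0)
    (hflat : ¬ IsFlat u) :
    ∃ k : ℕ, (u =O[nhds 0] fun x => ‖x‖ ^ ((k + 1 : ℕ) : ℝ)) ∧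
      ∃ x, (diracTaylor c u (k + 1) fun _ => x) ≠ 0 := by
  by_contra! next
  have linear : u =O[nhds 0] fun x => ‖x‖ ^ ((0 + 1 : ℕ) : ℝ) := by
    simpa [hu0] using (hu.differentiable one_ne_zero 0).isBigO_sub.norm_right
  have all : ∀ k : ℕ, u =O[nhds 0] fun x => ‖x‖ ^ ((k + 1 : ℕ) : ℝ) := fun k => by
    induction k with
    | zero => exact linear
    | succ k ih => exact isBigO_succ_of_diracTaylor_diag_eq_zero hc hu hsupp hDu ih (next k ih)
  refine hflat fun k => ?_
  simpa only [Real.rpow_natCast] using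
    (all k).trans (isBigO_norm_rpow_norm_rpow k.cast_nonneg (by simp))

end LeadingTerm

section BlowUp

open Asymptotics
open scoped Gradient ContDiff

variable {E V : Type*} [NormedAddCommGroup E] [InnerProductSpace ℝ E] [FiniteDimensional ℝ E]
  [NormedAddCommGroup V] [NormedSpace ℝ V]

lemma continuous_gradient_of_contDiff {φ : E → ℝ} (hφ : ContDiff ℝ 1 φ) : Continuous (∇ φ) :=
  (InnerProductSpace.toDual ℝ E).symm.continuous.comp (hφ.continuous_fderiv one_ne_zero)

lemma hasCompactSupport_gradient {φ : E → ℝ} (hφ : HasCompactSupport φ) :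
    HasCompactSupport (∇ φ) :=
  (hφ.fderiv ℝ).comp_left (map_zero _)

variable [MeasurableSpace E] [BorelSpace E]

lemma isLittleO_integral_comp_smul {A W : Type*} [NormedAddCommGroup A] [NormedSpace ℝ A]
    [NormedAddCommGroup W] [NormedSpace ℝ W] (B : A →L[ℝ] V →L[ℝ] W) {φ : E → A} {g : E → V}
    {p : ℕ} (hφ : Continuous φ) (hcφ : HasCompactSupport φ)
    (hg : g =o[nhds 0] fun x => ‖x‖ ^ (p : ℝ)) :
    (fun r : ℝ => ∫ x, B (φ x) (g (r • x))) =o[nhds 0] fun r => r ^ p := by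
  obtain ⟨ρ, hρ, hφρ⟩ := hcφ.isCompact.isBounded.subset_ball_lt 0 (0 : E)
  let weight : E → ℝ := fun x => ‖B‖ * ‖φ x‖ * ‖x‖ ^ p
  have hweight : Integrable weight :=
    (by fun_prop : Continuous weight).integrable_of_hasCompactSupport hcφ.norm.mul_left.mul_right
  have : 0 ≤ ∫ x, weight x := integral_nonneg fun x => by positivity
  rw [isLittleO_iff]
  intro ε hε
  obtain ⟨η, hη, small⟩ := Metric.eventually_nhds_iff_ball.1
    (hg.def (show 0 < ε / ((∫ x, weight x) + 1) by positivity))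
  refine Metric.eventually_nhds_iff_ball.2 ⟨η / ρ, by positivity, fun r hr => ?_⟩
  have pointwise : ∀ x, ‖B (φ x) (g (r • x))‖ ≤
      ε / ((∫ x, weight x) + 1) * ‖r ^ p‖ * weight x := fun x => by
    by_cases hx : φ x = 0
    · simp [hx, weight]
    have hxρ : ‖x‖ < ρ := mem_ball_zero_iff.1 (hφρ (subset_tsupport φ hx))
    have hrx : r • x ∈ ball 0 η := by
      rw [mem_ball_zero_iff] at hr ⊢
      rw [norm_smul]
      calc ‖r‖ * ‖x‖ ≤ ‖r‖ * ρ := by gcongr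
        _ < η := (lt_div_iff₀ hρ).1 hr
    have hgr := small _ hrx
    rw [Real.rpow_natCast, norm_pow, norm_norm, norm_smul, mul_pow] at hgr
    calc _ ≤ ‖B‖ * ‖φ x‖ * ‖g (r • x)‖ := B.le_opNorm₂ _ _
      _ ≤ ‖B‖ * ‖φ x‖ * (ε / ((∫ x, weight x) + 1) * (‖r‖ ^ p * ‖x‖ ^ p)) := by gcongr
      _ = _ := by rw [norm_pow]; ring
  calc _ ≤ ∫ x, ε / ((∫ x, weight x) + 1) * ‖r ^ p‖ * weight x :=
        norm_integral_le_of_norm_le (hweight.const_mul _) (.of_forall pointwise)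
    _ = ε * ‖r ^ p‖ * ((∫ x, weight x) / ((∫ x, weight x) + 1)) := by
        rw [integral_const_mul]; ring
    _ ≤ ε * ‖r ^ p‖ * 1 := by
        gcongr
        exact div_le_one_of_le₀ (by linarith) (by positivity)
    _ = _ := mul_one _

variable [CompleteSpace V] (c : E →L[ℝ] V →L[ℝ] V) {φ : E → ℝ} {u P : E → V} {m : ℕ}

lemma integral_smul_dirac (hφ : ContDiff ℝ 1 φ) (hcφ : HasCompactSupport φ)
    (hu : ContDiff ℝ 1 u) :
    ∫ x, φ x • dirac c u x = -∫ x, c (∇ φ x) (u x) := by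
  have parts := integral_dirac_eq_zero c (hφ.smul hu) hcφ.smul_right
  have hint₁ : Integrable fun x => φ x • dirac c u x :=
    (hφ.continuous.smul (continuous_dirac c hu)).integrable_of_hasCompactSupport hcφ.smul_right
  have hint₂ : Integrable fun x => c (∇ φ x) (u x) :=
    ((c.continuous.comp (continuous_gradient_of_contDiff hφ)).clm_apply
      hu.continuous).integrable_of_hasCompactSupport <|
      (hasCompactSupport_gradient hcφ).mono fun x hx h => hx (by simp [h])
  rw [eq_neg_iff_add_eq_zero, ← integral_add hint₁ hint₂, ← parts]
  exact integral_congr_ae <| .of_forall fun x =>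
    (dirac_smul c (hφ.differentiable one_ne_zero x) (hu.differentiable one_ne_zero x)).symm

lemma pow_smul_integral_smul_dirac (hφ : ContDiff ℝ 1 φ) (hcφ : HasCompactSupport φ)
    (hu : ContDiff ℝ 1 u) (hP : ContDiff ℝ 1 P)
    (hPhom : ∀ (t : ℝ) x, P (t • x) = t ^ (m + 1) • P x) (r : ℝ) :
    r ^ (m + 1) • ∫ x, φ x • dirac c P x =
      r • (∫ x, φ x • dirac c u (r • x)) + ∫ x, c (∇ φ x) (u (r • x) - P (r • x)) := by
  have hur : ContDiff ℝ 1 fun x => u (r • x) := hu.comp (contDiff_const_smul r)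
  have dirac_rescaled : ∀ x, dirac c (fun y => u (r • y) - r ^ (m + 1) • P y) x =
      r • dirac c u (r • x) - r ^ (m + 1) • dirac c P x := fun x => by
    have hPx := hP.differentiable one_ne_zero x
    have dirac_ur := dirac_comp_add_smul c 0 r x (hu.differentiable one_ne_zero (0 + r • x))
    simp only [zero_add] at dirac_ur
    rw [dirac_sub c (hur.differentiable one_ne_zero x) (hPx.fun_const_smul _),
      dirac_const_smul c hPx, dirac_ur]
  have hint_u : Integrable fun x => r • φ x • dirac c u (r • x) := Integrable.smul r <|
    (hφ.continuous.smul ((continuous_dirac c hu).comp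
      (continuous_const_smul r))).integrable_of_hasCompactSupport hcφ.smul_right
  have hint_P : Integrable fun x => r ^ (m + 1) • φ x • dirac c P x := Integrable.smul _ <|
    (hφ.continuous.smul (continuous_dirac c hP)).integrable_of_hasCompactSupport hcφ.smul_right
  have parts := integral_smul_dirac c hφ hcφ (u := fun x => u (r • x) - r ^ (m + 1) • P x)
    (hur.sub (hP.const_smul _))
  simp_rw [dirac_rescaled, smul_sub, smul_comm (φ _)] at parts
  rw [integral_sub hint_u hint_P, integral_smul, integral_smul]
    at parts
  simp_rw [hPhom]
  rw [← neg_eq_iff_eq_neg, neg_sub] at parts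
  rw [← parts]
  abel

/- Tested against `φ`, the rescaled remainders `r⁻ᵐ⁻¹ (u - P)(r •)` tend to `0`, and hence so do
their images under `dirac c`, which differ from `-dirac c P` by `r⁻ᵐ (dirac c u)(r •) → 0`. -/
lemma dirac_eq_zero_of_isLittleO (hu : ContDiff ℝ 1 u) (hP : ContDiff ℝ 1 P)
    (hPhom : ∀ (t : ℝ) x, P (t • x) = t ^ (m + 1) • P x)
    (hDu : dirac c u =o[nhds 0] fun x => ‖x‖ ^ (m : ℝ))
    (huP : (fun x => u x - P x) =o[nhds 0] fun x => ‖x‖ ^ ((m + 1 : ℕ) : ℝ)) (x : E) :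
    dirac c P x = 0 := by
  have hDP := continuous_dirac c hP
  suffices h : dirac c P =ᵐ[volume] fun _ => 0 from
    congrFun ((hDP.ae_eq_iff_eq volume continuous_const).1 h) x
  refine ae_eq_zero_of_integral_contDiff_smul_eq_zero hDP.locallyIntegrable fun φ hφ hcφ => ?_
  have hφ₁ : ContDiff ℝ 1 φ := hφ.of_le (by exact_mod_cast le_top)
  have small : (fun r : ℝ => r ^ (m + 1) • ∫ x, φ x • dirac c P x) =o[nhds 0]
      fun r => r ^ (m + 1) := by
    simp_rw [pow_smul_integral_smul_dirac c hφ₁ hcφ hu hP hPhom]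
    refine .add ?_ (isLittleO_integral_comp_smul c (continuous_gradient_of_contDiff hφ₁)
      (hasCompactSupport_gradient hcφ) huP)
    simp_rw [pow_succ']
    exact (isBigO_refl (fun r : ℝ => r) (nhds 0)).smul_isLittleO
      (isLittleO_integral_comp_smul (ContinuousLinearMap.lsmul ℝ ℝ) hφ₁.continuous hcφ hDu)
  by_contra hne
  refine isLittleO_irrefl (l := nhds (0 : ℝ)) (f'' := fun r : ℝ => r ^ (m + 1)) ?_ ?_
  · exact ((eventually_mem_nhdsWithin (s := {(0 : ℝ)}ᶜ)).mono fun r hr =>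
      pow_ne_zero (m + 1) hr).frequently.filter_mono nhdsWithin_le_nhds
  · rw [← isLittleO_const_mul_left_iff (norm_ne_zero_iff.2 hne)]
    exact (small.norm_left.congr_left fun r => by
      rw [norm_smul, norm_mul, norm_norm, mul_comm]).of_norm_left

lemma contDiff_diag {X W : Type*} [NormedAddCommGroup X] [NormedSpace ℝ X] [NormedAddCommGroup W]
    [NormedSpace ℝ W] {k : ℕ} (Q : X [×k]→L[ℝ] W) {i : WithTop ℕ∞} :
    ContDiff ℝ i fun x => Q fun _ => x :=
  Q.contDiff.comp (contDiff_pi' fun _ => contDiff_id)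

lemma dirac_diracTaylor_diag_eq_zero [Nontrivial E] {c : E →L[ℝ] V →L[ℝ] V} (hc : IsClifford c)
    (hu : ContDiff ℝ 1 u) (hsupp : tsupport u ⊆ ball 0 1) (hDu : dirac c u =O[nhds 0] u)
    (hum : u =O[nhds 0] fun x => ‖x‖ ^ ((m + 1 : ℕ) : ℝ)) (x : E) :
    dirac c (fun y => diracTaylor c u (m + 1) fun _ => y) x = 0 := by
  refine dirac_eq_zero_of_isLittleO c hu (contDiff_diag _)
    (fun t y => by simpa using (diracTaylor c u (m + 1)).map_smul_univ (fun _ => t) fun _ => y)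
    ((hDu.trans hum).trans_isLittleO (isLittleO_norm_rpow_norm_rpow m.cast_nonneg (by simp))) ?_ x
  exact (isBigO_sub_diracTaylor hc hu hsupp hDu hum (δ := 1 / 2) (by norm_num)
    (by norm_num)).trans_isLittleO (isLittleO_norm_rpow_norm_rpow (by positivity) (by simp))

end BlowUp

section GradientEstimate

open Asymptotics

variable {E V : Type*} [NormedAddCommGroup E] [NormedSpace ℝ E] [NormedAddCommGroup V]
  [NormedSpace ℝ V] {w : E → V}

lemma norm_fderiv_le_of_norm_sub_le {x : E} {h A B : ℝ} (hh : 0 < h) (hB : 0 ≤ B)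
    (hw : Differentiable ℝ w)
    (hfderiv : ∀ y ∈ closedBall x h, ‖fderiv ℝ w y - fderiv ℝ w x‖ ≤ B)
    (hA : ∀ z, ‖z‖ ≤ h → ‖w (x + z) - w x‖ ≤ A) : ‖fderiv ℝ w x‖ ≤ A / h + B := by
  have hA0 : 0 ≤ A := (norm_nonneg _).trans (hA 0 (by simpa using hh.le))
  refine ContinuousLinearMap.opNorm_le_of_unit_norm (by positivity) fun z hz => ?_
  have hzh : ‖h • z‖ = h := by rw [norm_smul, hz, mul_one, Real.norm_of_nonneg hh.le]
  have taylor : ‖w (x + h • z) - w x - fderiv ℝ w x (h • z)‖ ≤ B * h := by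
    simpa [hzh] using (convex_closedBall x h).norm_image_sub_le_of_norm_fderiv_le'
      (fun y _ => hw y) hfderiv (mem_closedBall_self hh.le) (y := x + h • z) (by simp [hzh])
  have split : h * ‖fderiv ℝ w x z‖ ≤ A + B * h := calc
    h * ‖fderiv ℝ w x z‖ = ‖fderiv ℝ w x (h • z)‖ := by
        rw [map_smul, norm_smul, Real.norm_of_nonneg hh.le]
    _ ≤ ‖w (x + h • z) - w x‖ + ‖w (x + h • z) - w x - fderiv ℝ w x (h • z)‖ :=
        norm_le_insert _ _
    _ ≤ A + B * h := add_le_add (hA _ hzh.le) taylor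
  rw [div_add' _ _ _ hh.ne', le_div_iff₀' hh]
  exact split

lemma norm_fderiv_le_of_holderOnWith {L a : ℝ≥0} {s : Set E}
    (hwL : HolderOnWith L a (fderiv ℝ w) s) (hw : Differentiable ℝ w) {x : E} {h A : ℝ} (hh : 0 < h)
    (hs : closedBall x h ⊆ s) (hA : ∀ z, ‖z‖ ≤ h → ‖w (x + z) - w x‖ ≤ A) :
    ‖fderiv ℝ w x‖ ≤ A / h + L * h ^ (a : ℝ) := by
  refine norm_fderiv_le_of_norm_sub_le hh (by positivity) hw (fun y hy => ?_) hA
  rw [← dist_eq_norm]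
  exact hwL.dist_le_of_le (hs hy) (hs (mem_closedBall_self hh.le)) hy

lemma fderiv_zero_eq_zero_of_isBigO {e : ℝ} (he : 1 < e)
    (hw : w =O[nhds 0] fun x => ‖x‖ ^ e) : fderiv ℝ w 0 = 0 := by
  have hw0 : w 0 = 0 := by
    obtain ⟨C, hC⟩ := hw.bound
    simpa [Real.zero_rpow (zero_lt_one.trans he).ne'] using hC.self_of_nhds
  have littleO : w =o[nhds 0] fun x => x := by
    refine IsLittleO.of_norm_right ?_
    simpa using hw.trans_isLittleO (isLittleO_norm_rpow_norm_rpow zero_le_one he)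
  exact HasFDerivAt.fderiv (hasFDerivAt_iff_isLittleO_nhds_zero.2 (by simpa [hw0] using littleO))

end GradientEstimate

section InteriorHolder

open Asymptotics

variable {E V : Type*} [NormedAddCommGroup E] [InnerProductSpace ℝ E] [FiniteDimensional ℝ E]
  [MeasurableSpace E] [BorelSpace E] [Nontrivial E] [NormedAddCommGroup V] [NormedSpace ℝ V]
  [CompleteSpace V] {c : E →L[ℝ] V →L[ℝ] V}

lemma exists_norm_sub_zero_le_of_norm_dirac_le (hc : IsClifford c) {γ : ℝ} (hγ0 : 0 < γ)
    (hγ1 : γ < 1) : ∃ C : ℝ, 0 ≤ C ∧ ∀ (v : E → V) (K : ℝ), ContDiff ℝ 1 v →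
      tsupport v ⊆ ball 0 1 → (∀ y, ‖dirac c v y‖ ≤ K) →
      ∀ y, ‖y‖ ≤ 1 → ‖v y - v 0‖ ≤ C * K * ‖y‖ ^ γ := by
  obtain ⟨C, hC0, hC⟩ :=
    (smoothHomogeneous_cauchyKernel c).exists_norm_integral_sub_sum_taylorMoment_le (m := 0)
      (β := 0) (γ := γ) (by exact_mod_cast Module.finrank_pos) le_rfl hγ0.le (by simpa using hγ0.le)
      (by simpa using hγ1.le) (by simpa using hγ1)
  refine ⟨C, hC0, fun v K hv hsupp hK => ?_⟩
  have hcv : HasCompactSupport v :=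
    (isCompact_closedBall 0 1).of_isClosed_subset (isClosed_tsupport v)
      (hsupp.trans ball_subset_closedBall)
  have expansion (y : E) (hy : ‖y‖ ≤ 1) :
      ‖v y - taylorMoment (cauchyKernel c) (dirac c v) 0 (fun _ => y)‖ ≤ C * K * ‖y‖ ^ γ := by
    simpa only [integral_cauchyKernel_dirac hc hv hcv, zero_add, Finset.sum_range_one] using
      hC _ K (continuous_dirac c hv).aestronglyMeasurable (by simpa using hK)
        (fun z hz => dirac_eq_zero_of_notMem_tsupport c fun h => hz (hsupp h))
        (integrable_cauchyKernel_apply c (continuous_dirac c hv) (hasCompactSupport_dirac c hcv))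
        y hy
  have at_zero := expansion 0 (by simp)
  rw [norm_zero, Real.zero_rpow hγ0.ne', mul_zero, norm_le_zero_iff, sub_eq_zero] at at_zero
  intro y hy
  rw [at_zero, Subsingleton.elim (fun _ : Fin 0 => (0 : E)) fun _ => y]
  exact expansion y hy

lemma exists_interior_holder_estimate (hc : IsClifford c) {γ : ℝ} (hγ0 : 0 < γ) (hγ1 : γ < 1) :
    ∃ C : ℝ, 0 ≤ C ∧ ∀ (w : E → V) (M : ℝ), ContDiff ℝ 1 w → (∀ y ∈ ball 0 1, ‖w y‖ ≤ M) →
      (∀ y ∈ ball 0 1, ‖dirac c w y‖ ≤ M) →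
      ∀ y, ‖y‖ ≤ 1 / 2 → ‖w y - w 0‖ ≤ C * M * ‖y‖ ^ γ := by
  obtain ⟨C, hC0, hC⟩ := exists_norm_sub_zero_le_of_norm_dirac_le hc hγ0 hγ1
  let χ : ContDiffBump (0 : E) := ⟨1 / 2, 3 / 4, by norm_num, by norm_num⟩
  have hχ : ContDiff ℝ 1 χ := χ.contDiff
  obtain ⟨B, hB⟩ := (continuous_gradient_of_contDiff hχ).bounded_above_of_compact_support
    (hasCompactSupport_gradient χ.hasCompactSupport)
  have hB0 : 0 ≤ B := (norm_nonneg _).trans (hB 0)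
  refine ⟨C * (1 + ‖c‖ * B), by positivity, fun w M hw hwM hDw y hy => ?_⟩
  have hM : 0 ≤ M := (norm_nonneg _).trans (hwM 0 (by simp))
  have hsupp : tsupport (fun x => χ x • w x) ⊆ ball 0 1 :=
    (tsupport_smul_subset_left χ w).trans <| χ.tsupport_eq.trans_subset <|
      closedBall_subset_ball (by norm_num)
  have norm_dirac_le (x : E) :
      ‖dirac c (fun x => χ x • w x) x‖ ≤ (1 + ‖c‖ * B) * M := by
    by_cases hx : x ∈ tsupport fun x => χ x • w x
    · have hx1 := hsupp hx
      rw [dirac_smul c (hχ.differentiable one_ne_zero x) (hw.differentiable one_ne_zero x),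
        one_add_mul, mul_assoc]
      refine norm_add_le_of_le ?_ ((c.le_opNorm₂ _ _).trans ?_)
      · rw [norm_smul, Real.norm_of_nonneg χ.nonneg]
        exact (mul_le_of_le_one_left (norm_nonneg _) χ.le_one).trans (hDw x hx1)
      · rw [mul_assoc]
        gcongr
        exacts [hB x, hwM x hx1]
    · rw [dirac_eq_zero_of_notMem_tsupport c hx, norm_zero]
      positivity
  have eq_w (x : E) (hx : ‖x‖ ≤ 1 / 2) : χ x • w x = w x := by
    rw [χ.one_of_mem_closedBall (mem_closedBall_zero_iff.2 hx), one_smul]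
  simpa only [eq_w y hy, eq_w 0 (by simp), mul_assoc] using
    hC (fun x => χ x • w x) _ (hχ.smul hw) hsupp norm_dirac_le y (hy.trans (by norm_num))

lemma exists_interior_holder_estimate_ball (hc : IsClifford c) {γ : ℝ} (hγ0 : 0 < γ)
    (hγ1 : γ < 1) : ∃ C : ℝ, 0 ≤ C ∧ ∀ (w : E → V) (x : E) (R M : ℝ), 0 < R → ContDiff ℝ 1 w →
      (∀ y ∈ ball x R, ‖w y‖ ≤ M) → (∀ y ∈ ball x R, R * ‖dirac c w y‖ ≤ M) →
      ∀ z, ‖z‖ ≤ R / 2 → ‖w (x + z) - w x‖ ≤ C * M * (‖z‖ / R) ^ γ := by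
  obtain ⟨C, hC0, hC⟩ := exists_interior_holder_estimate hc hγ0 hγ1
  refine ⟨C, hC0, fun w x R M hR hw hwM hDw z hz => ?_⟩
  have mem_ball {y : E} (hy : y ∈ ball 0 1) : x + R • y ∈ ball x R := by
    simpa [norm_smul, abs_of_pos hR] using mul_lt_of_lt_one_right hR (mem_ball_zero_iff.1 hy)
  have rescaled := hC (fun y => w (x + R • y)) M
    (hw.comp (contDiff_const.add (contDiff_const_smul R))) (fun y hy => hwM _ (mem_ball hy))
    (fun y hy => by
      rw [dirac_comp_add_smul c x R y (hw.differentiable one_ne_zero _), norm_smul,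
        Real.norm_of_nonneg hR.le]
      exact hDw _ (mem_ball hy))
    (R⁻¹ • z) (by
      rw [norm_smul, norm_inv, Real.norm_of_nonneg hR.le, inv_mul_le_iff₀ hR]
      linarith)
  simpa [smul_smul, hR.ne', norm_smul, abs_of_pos hR, div_eq_inv_mul] using rescaled

lemma exists_norm_sub_le_of_isBigO_dirac (hc : IsClifford c) {γ : ℝ} (hγ0 : 0 < γ) (hγ1 : γ < 1)
    {w : E → V} {e : ℝ} (he : 1 ≤ e) (hw : ContDiff ℝ 1 w) (hwe : w =O[nhds 0] fun x => ‖x‖ ^ e)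
    (hDw : dirac c w =O[nhds 0] fun x => ‖x‖ ^ (e - 1)) :
    ∃ K : ℝ, 0 ≤ K ∧ ∀ᶠ x in nhds 0, ∀ z, ‖z‖ ≤ ‖x‖ / 2 →
      ‖w (x + z) - w x‖ ≤ K * ‖x‖ ^ (e - γ) * ‖z‖ ^ γ := by
  obtain ⟨C, hC0, hC⟩ := exists_interior_holder_estimate_ball hc hγ0 hγ1
  obtain ⟨A, hA0, hA⟩ := hwe.exists_nonneg
  obtain ⟨B, hB0, hB⟩ := hDw.exists_nonneg
  obtain ⟨ρ, hρ, hAB⟩ := Metric.eventually_nhds_iff_ball.1 (hA.bound.and hB.bound)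
  refine ⟨C * ((A + B) * 2 ^ e), by positivity,
    Metric.eventually_nhds_iff_ball.2 ⟨ρ / 2, by positivity, fun x hx z hz => ?_⟩⟩
  rcases eq_or_ne x 0 with rfl | hx0
  · have : z = 0 := by simpa using hz
    simp [this, Real.zero_rpow hγ0.ne']
  have hx_pos : 0 < ‖x‖ := norm_pos_iff.2 hx0
  have norm_le {y : E} (hy : y ∈ ball x ‖x‖) : ‖y‖ ≤ 2 * ‖x‖ := by
    linarith [norm_sub_norm_le y x, mem_ball_iff_norm.1 hy]
  have bounds {y : E} (hy : y ∈ ball x ‖x‖) :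
      ‖w y‖ ≤ A * ‖y‖ ^ e ∧ ‖dirac c w y‖ ≤ B * ‖y‖ ^ (e - 1) := by
    simpa only [Real.norm_of_nonneg (Real.rpow_nonneg (norm_nonneg y) _)] using hAB y
      (mem_ball_zero_iff.2 ((norm_le hy).trans_lt (by linarith [mem_ball_zero_iff.1 hx])))
  have norm_w_le (y : E) (hy : y ∈ ball x ‖x‖) : ‖w y‖ ≤ (A + B) * (2 * ‖x‖) ^ e := by
    refine (bounds hy).1.trans ?_
    gcongr
    exacts [le_add_of_nonneg_right hB0, norm_le hy]
  have norm_dirac_le (y : E) (hy : y ∈ ball x ‖x‖) :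
      ‖x‖ * ‖dirac c w y‖ ≤ (A + B) * (2 * ‖x‖) ^ e := calc
    ‖x‖ * ‖dirac c w y‖ ≤ 2 * ‖x‖ * (B * (2 * ‖x‖) ^ (e - 1)) := by
        gcongr ?_ * ?_
        · linarith
        · refine (bounds hy).2.trans (mul_le_mul_of_nonneg_left ?_ hB0)
          exact Real.rpow_le_rpow (norm_nonneg y) (norm_le hy) (sub_nonneg.2 he)
    _ = B * (2 * ‖x‖) ^ e := by
        rw [Real.rpow_sub_one (by positivity)]
        field_simp
    _ ≤ (A + B) * (2 * ‖x‖) ^ e := by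
        gcongr
        exact le_add_of_nonneg_left hA0
  refine (hC w x ‖x‖ _ hx_pos hw norm_w_le norm_dirac_le z hz).trans_eq ?_
  rw [Real.mul_rpow zero_le_two hx_pos.le, Real.div_rpow (norm_nonneg z) hx_pos.le,
    Real.rpow_sub hx_pos]
  ring

lemma exists_scale_exponent {a e e' : ℝ} (he' : 1 ≤ e') (hee' : e' < e) (ha : 0 < a) :
    ∃ q γ : ℝ, 1 < q ∧ e' - 1 ≤ q * a ∧ 0 < γ ∧ γ < 1 ∧ q * (1 - γ) = e - e' := by
  have hqa : (e' / a + e) * a = e' + e * a := by field_simp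
  have hpos : 0 < e' / a := by positivity
  refine ⟨e' / a + e, 1 - (e - e') / (e' / a + e), by linarith, by nlinarith,
    sub_pos.2 ((div_lt_one (by linarith)).2 (by linarith)),
    sub_lt_self _ (div_pos (by linarith) (by linarith)), ?_⟩
  rw [sub_sub_cancel, mul_div_cancel₀ _ (by linarith)]

/- The difference quotient of `fderiv ℝ w x` is taken at scale `‖x‖ ^ q` with `q` large: the Hölder
bound on `fderiv ℝ w` then makes the linearisation error negligible, and choosing `γ` close to `1`
loses only an arbitrarily small power. -/
lemma isBigO_fderiv_of_isBigO_dirac (hc : IsClifford c) {w : E → V} {e e' ρ : ℝ} {L a : ℝ≥0}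
    (he' : 1 ≤ e') (hee' : e' < e) (ha : 0 < a) (hρ : 0 < ρ) (hw : ContDiff ℝ 1 w)
    (hwL : HolderOnWith L a (fderiv ℝ w) (ball 0 ρ)) (hwe : w =O[nhds 0] fun x => ‖x‖ ^ e)
    (hDw : dirac c w =O[nhds 0] fun x => ‖x‖ ^ (e - 1)) :
    fderiv ℝ w =O[nhds 0] fun x => ‖x‖ ^ (e' - 1) := by
  obtain ⟨q, γ, hq1, hqa, hγ0, hγ1, hqγ⟩ := exists_scale_exponent he' hee' (a := a) ha
  obtain ⟨K, hK0, hK⟩ := exists_norm_sub_le_of_isBigO_dirac hc hγ0 hγ1 (by linarith) hw hwe hDw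
  have scale : ∀ᶠ x : E in nhds 0, ‖‖x‖ ^ q‖ ≤ 1 / 2 * ‖‖x‖ ^ (1 : ℝ)‖ :=
    (isLittleO_norm_rpow_norm_rpow zero_le_one hq1).def (by norm_num)
  refine IsBigO.of_bound (K + L) ?_
  filter_upwards [hK, scale, ball_mem_nhds 0 one_pos, ball_mem_nhds 0 (half_pos hρ)]
    with x hKx hscale hx1 hxρ
  rcases eq_or_ne x 0 with rfl | hx0
  · rw [fderiv_zero_eq_zero_of_isBigO (he'.trans_lt hee') hwe, norm_zero]
    positivity
  have hx_pos : 0 < ‖x‖ := norm_pos_iff.2 hx0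
  have hx_le : ‖x‖ ≤ 1 := (mem_ball_zero_iff.1 hx1).le
  rw [Real.norm_of_nonneg (by positivity), Real.norm_of_nonneg (by positivity), Real.rpow_one]
    at hscale
  have subset : closedBall x (‖x‖ ^ q) ⊆ ball 0 ρ := fun y hy => by
    rw [mem_closedBall_iff_norm] at hy
    rw [mem_ball_zero_iff] at hxρ ⊢
    linarith [norm_sub_norm_le y x]
  calc ‖fderiv ℝ w x‖
      ≤ K * ‖x‖ ^ (e - γ) * (‖x‖ ^ q) ^ γ / ‖x‖ ^ q + L * (‖x‖ ^ q) ^ (a : ℝ) :=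
        norm_fderiv_le_of_holderOnWith hwL (hw.differentiable one_ne_zero) (by positivity) subset
          fun z hz => (hKx z (by linarith)).trans (by gcongr)
    _ = K * ‖x‖ ^ (e' - γ) + L * ‖x‖ ^ (q * a) := by
        rw [← Real.rpow_mul hx_pos.le, ← Real.rpow_mul hx_pos.le, mul_assoc,
          ← Real.rpow_add hx_pos, mul_div_assoc, ← Real.rpow_sub hx_pos]
        congr 3
        linarith
    _ ≤ K * ‖x‖ ^ (e' - 1) + L * ‖x‖ ^ (e' - 1) := by
        gcongr ?_ * ?_ + ?_ * ?_
        · exact Real.rpow_le_rpow_of_exponent_ge hx_pos hx_le (by linarith)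
        · exact Real.rpow_le_rpow_of_exponent_ge hx_pos hx_le hqa
    _ = (K + L) * ‖‖x‖ ^ (e' - 1)‖ := by rw [Real.norm_of_nonneg (by positivity), add_mul]

end InteriorHolder

section Dilation

open Module (finrank)
open scoped InnerProductSpace

lemma add_eq_of_hasDerivAt_of_eq_inv_pow_mul {F G : ℝ → ℝ} {F' G' : ℝ} {d : ℕ}
    (hF : HasDerivAt F F' 1) (hG : HasDerivAt G G' 1)
    (h : ∀ t > 0, F t = (t ^ d)⁻¹ * G t⁻¹) : F' + G' = -(d * G 1) := by
  have hG' : HasDerivAt (fun t : ℝ => G t⁻¹) (-G') 1 := by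
    have inv := hasDerivAt_inv (one_ne_zero (α := ℝ))
    have : HasDerivAt (fun t : ℝ => G t⁻¹) _ 1 := hG.comp_of_eq 1 inv inv_one.symm
    simpa using this
  have hpow : HasDerivAt (fun t : ℝ => (t ^ d)⁻¹) (-(d : ℝ)) 1 := by
    simpa using (hasDerivAt_pow d (1 : ℝ)).fun_inv (by simp)
  have product := (hpow.fun_mul hG').congr_of_eventuallyEq
    ((eventually_gt_nhds one_pos).mono h)
  have := hF.unique product
  simp only [inv_one, one_pow] at this
  linarith

variable {E V : Type*} [NormedAddCommGroup E] [InnerProductSpace ℝ E]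
  [NormedAddCommGroup V] [InnerProductSpace ℝ V] {u v f g : E → V}

/-- The generator `x·∇ + n/2` of the unitary dilations `u ↦ t^(n/2) u(t ·)` of `L²(E)`, where `n`
is the dimension of `E`. -/
def dilationGenerator (u : E → V) (x : E) : V :=
  fderiv ℝ u x x + (finrank ℝ E / 2 : ℝ) • u x

lemma continuous_dilationGenerator (hu : ContDiff ℝ 1 u) : Continuous (dilationGenerator u) :=
  ((hu.continuous_fderiv one_ne_zero).clm_apply continuous_id).add (hu.continuous.const_smul _)

lemma hasCompactSupport_dilationGenerator (hu : HasCompactSupport u) :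
    HasCompactSupport (dilationGenerator u) :=
  HasCompactSupport.add ((hu.fderiv ℝ).mono fun x hx h => hx (by simp [h])) hu.smul_left

lemma dilationGenerator_smul {g : E → ℝ} {x : E} (hg : DifferentiableAt ℝ g x)
    (hu : DifferentiableAt ℝ u x) : dilationGenerator (fun y => g y • u y) x =
      fderiv ℝ g x x • u x + g x • dilationGenerator u x := by
  simp only [dilationGenerator, fderiv_fun_smul hg hu, _root_.add_apply, _root_.smul_apply,
    ContinuousLinearMap.smulRight_apply]
  module

variable [FiniteDimensional ℝ E] [MeasurableSpace E] [BorelSpace E]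

lemma integrable_inner_of_hasCompactSupport (hf : Continuous f) (hg : Continuous g)
    (hcf : HasCompactSupport f) : Integrable fun x => ⟪f x, g x⟫_ℝ :=
  (hf.inner hg).integrable_of_hasCompactSupport <|
    hcf.mono fun x hx h => hx (by simp [h])

lemma hasDerivAt_integral_inner_comp_smul (hu : ContDiff ℝ 1 u) (hcu : HasCompactSupport u)
    (hf : Continuous f) (hcf : HasCompactSupport f) :
    HasDerivAt (fun t : ℝ => ∫ x, ⟪u (t • x), f x⟫_ℝ) (∫ x, ⟪fderiv ℝ u x x, f x⟫_ℝ) 1 := by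
  obtain ⟨M, hM⟩ :=
    (hu.continuous_fderiv one_ne_zero).bounded_above_of_compact_support (hcu.fderiv ℝ)
  have integrable (t : ℝ) : Integrable fun x => ⟪u (t • x), f x⟫_ℝ := by
    simpa only [real_inner_comm, Function.comp_apply] using
      integrable_inner_of_hasCompactSupport hf
      (hu.continuous.comp (continuous_const_smul t)) hcf
  have hasDerivAt_integrand (x : E) (t : ℝ) :
      HasDerivAt (fun t : ℝ => ⟪u (t • x), f x⟫_ℝ) ⟪fderiv ℝ u (t • x) x, f x⟫_ℝ t := by
    have line : HasDerivAt (fun t : ℝ => t • x) x t := by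
      simpa using (hasDerivAt_id t).smul_const x
    have along : HasDerivAt (fun t : ℝ => u (t • x)) (fderiv ℝ u (t • x) x) t :=
      (hu.differentiable one_ne_zero (t • x)).hasFDerivAt.comp_hasDerivAt t line
    simpa using along.inner ℝ (hasDerivAt_const t (f x))
  have bound : Integrable fun x => M * ‖x‖ * ‖f x‖ :=
    ((continuous_const.mul continuous_norm).mul hf.norm).integrable_of_hasCompactSupport
      hcf.norm.mul_left
  have main := (hasDerivAt_integral_of_dominated_loc_of_deriv_le (Filter.univ_mem (f := nhds 1))
    (.of_forall fun t => (integrable t).aestronglyMeasurable) (integrable 1)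
    (F' := fun t x => ⟪fderiv ℝ u (t • x) x, f x⟫_ℝ) ?_ (.of_forall fun x t _ => ?_) bound
    (.of_forall fun x t _ => hasDerivAt_integrand x t)).2
  · simpa using main
  · exact (((hu.continuous_fderiv one_ne_zero).comp (continuous_const_smul 1)).clm_apply
      continuous_id |>.inner hf).aestronglyMeasurable
  · refine (norm_inner_le_norm _ _).trans ?_
    gcongr
    exact (ContinuousLinearMap.le_opNorm _ _).trans (by gcongr; exact hM _)

lemma integral_inner_comp_smul_left (u v : E → V) {t : ℝ} (ht : 0 < t) :
    ∫ x, ⟪u (t • x), v x⟫_ℝ = (t ^ finrank ℝ E)⁻¹ * ∫ x, ⟪v (t⁻¹ • x), u x⟫_ℝ := by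
  have := Measure.integral_comp_smul volume (fun x => ⟪v (t⁻¹ • x), u x⟫_ℝ) t
  rw [abs_of_pos (by positivity), smul_eq_mul] at this
  rw [← this]
  refine integral_congr_ae (.of_forall fun x => ?_)
  simp [smul_smul, ht.ne', real_inner_comm]

lemma integral_inner_dilationGenerator_add_eq_zero (hu : ContDiff ℝ 1 u)
    (hcu : HasCompactSupport u) (hv : ContDiff ℝ 1 v) (hcv : HasCompactSupport v)
    (hf : Continuous f) (hcf : HasCompactSupport f) (hg : Continuous g) (hcg : HasCompactSupport g)
    (h : ∀ t > 0, ∫ x, ⟪u (t • x), f x⟫_ℝ =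
      (t ^ finrank ℝ E)⁻¹ * ∫ x, ⟪v (t⁻¹ • x), g x⟫_ℝ) :
    (∫ x, ⟪dilationGenerator u x, f x⟫_ℝ) + ∫ x, ⟪dilationGenerator v x, g x⟫_ℝ = 0 := by
  have expand {u f : E → V} (hu : ContDiff ℝ 1 u) (hcu : HasCompactSupport u)
      (hf : Continuous f) : ∫ x, ⟪dilationGenerator u x, f x⟫_ℝ =
        (∫ x, ⟪fderiv ℝ u x x, f x⟫_ℝ) + finrank ℝ E / 2 * ∫ x, ⟪u x, f x⟫_ℝ := by
    simp only [dilationGenerator, inner_add_left, real_inner_smul_left]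
    rw [integral_add, integral_const_mul]
    · exact integrable_inner_of_hasCompactSupport ((hu.continuous_fderiv one_ne_zero).clm_apply
        continuous_id) hf ((hcu.fderiv ℝ).mono fun x hx h => hx (by simp [h]))
    · exact (integrable_inner_of_hasCompactSupport hu.continuous hf hcu).const_mul _
  have derivatives := add_eq_of_hasDerivAt_of_eq_inv_pow_mul
    (hasDerivAt_integral_inner_comp_smul hu hcu hf hcf)
    (hasDerivAt_integral_inner_comp_smul hv hcv hg hcg) h
  have values := h 1 one_pos
  simp only [inv_one, one_pow, one_mul, one_smul] at derivatives values
  rw [expand hu hcu hf, expand hv hcv hg]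
  linear_combination derivatives + finrank ℝ E / 2 * values

lemma integral_inner_dilationGenerator_left (hu : ContDiff ℝ 1 u) (hcu : HasCompactSupport u)
    (hv : ContDiff ℝ 1 v) (hcv : HasCompactSupport v) :
    ∫ x, ⟪dilationGenerator u x, v x⟫_ℝ = -∫ x, ⟪u x, dilationGenerator v x⟫_ℝ := by
  simp_rw [real_inner_comm (dilationGenerator v _)]
  exact eq_neg_of_add_eq_zero_left <| integral_inner_dilationGenerator_add_eq_zero hu hcu hv hcv
    hv.continuous hcv hu.continuous hcu fun t ht => integral_inner_comp_smul_left u v ht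

end Dilation

section Carleman

open Module (finrank)
open InnerProductSpace
open scoped Gradient

variable {E V : Type*} [NormedAddCommGroup E] [InnerProductSpace ℝ E]
  [NormedAddCommGroup V] [InnerProductSpace ℝ V] {c : E →L[ℝ] V →L[ℝ] V} {u v w : E → V}

/-- Vectors act through `c` by skew-adjoint operators; for a Clifford multiplication this makes
the Dirac operator formally self-adjoint. -/
def IsSkew (c : E →L[ℝ] V →L[ℝ] V) : Prop :=
  ∀ z v w, ⟪c z v, w⟫_ℝ = -⟪v, c z w⟫_ℝ

lemma IsClifford.norm_apply (hc : IsClifford c) (hs : IsSkew c) (z : E) (v : V) :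
    ‖c z v‖ = ‖z‖ * ‖v‖ := by
  rw [← sq_eq_sq₀ (norm_nonneg _) (by positivity), ← real_inner_self_eq_norm_sq, hs, hc,
    inner_neg_right, neg_neg, real_inner_smul_right, real_inner_self_eq_norm_sq, mul_pow]

variable [FiniteDimensional ℝ E]

lemma dirac_clifford_self (hc : IsClifford c) {x : E} (hv : DifferentiableAt ℝ v x) :
    dirac c (fun y => c y (v y)) x =
      -(c x (dirac c v x) + (2 : ℝ) • dilationGenerator v x) := by
  set e := stdOrthonormalBasis ℝ E with he
  have product (z : E) : fderiv ℝ (fun y => c y (v y)) x z = c z (v x) + c x (fderiv ℝ v x z) := by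
    rw [(c.hasFDerivAt.clm_apply hv.hasFDerivAt).fderiv]
    simp [add_comm]
  have euler : fderiv ℝ v x x = ∑ i, ⟪e i, x⟫_ℝ • fderiv ℝ v x (e i) := by
    simp_rw [← map_smul, ← map_sum, e.sum_repr']
  have square (i) : c (e i) (c (e i) (v x)) = -v x := by
    rw [hc, e.orthonormal.1 i, one_pow, one_smul]
  have commute (i) : c (e i) (c x (fderiv ℝ v x (e i))) =
      -((2 * ⟪e i, x⟫_ℝ) • fderiv ℝ v x (e i)) - c x (c (e i) (fderiv ℝ v x (e i))) :=
    eq_sub_of_add_eq (hc.add_swap (e i) x _)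
  simp only [dilationGenerator, dirac, ← he, product, map_add, map_sum, euler, square, commute,
    mul_smul, Finset.sum_add_distrib, Finset.sum_sub_distrib, Finset.sum_neg_distrib,
    ← Finset.smul_sum, Finset.sum_const, Finset.card_univ, Fintype.card_fin,
    ← Nat.cast_smul_eq_nsmul ℝ]
  module

/-- The self-adjoint part `c(x) D + x·∇ + n/2` of `c(x) D`; it differentiates only tangentially to
the spheres centred at the origin. -/
def sphericalDirac (c : E →L[ℝ] V →L[ℝ] V) (u : E → V) (x : E) : V :=
  c x (dirac c u x) + dilationGenerator u x

lemma sphericalDirac_comp_smul (c : E →L[ℝ] V →L[ℝ] V) (hu : Differentiable ℝ u) (t : ℝ) (x : E) :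
    sphericalDirac c (fun y => u (t • y)) x = sphericalDirac c u (t • x) := by
  have dirac_scaled := dirac_comp_add_smul c 0 t x (hu _)
  simp only [zero_add] at dirac_scaled
  simp [sphericalDirac, dilationGenerator, dirac_scaled, fderiv_comp_smul]

lemma continuous_sphericalDirac (c : E →L[ℝ] V →L[ℝ] V) (hu : ContDiff ℝ 1 u) :
    Continuous (sphericalDirac c u) :=
  (c.continuous.clm_apply (continuous_dirac c hu)).add (continuous_dilationGenerator hu)

lemma hasCompactSupport_sphericalDirac (c : E →L[ℝ] V →L[ℝ] V) (hu : HasCompactSupport u) :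
    HasCompactSupport (sphericalDirac c u) :=
  HasCompactSupport.add ((hasCompactSupport_dirac c hu).mono fun x hx h => hx (by simp [h]))
    (hasCompactSupport_dilationGenerator hu)

variable [MeasurableSpace E] [BorelSpace E]

lemma integral_inner_dirac_left (hs : IsSkew c) (hu : ContDiff ℝ 1 u) (hcu : HasCompactSupport u)
    (hv : ContDiff ℝ 1 v) :
    ∫ x, ⟪dirac c u x, v x⟫_ℝ = ∫ x, ⟪u x, dirac c v x⟫_ℝ := by
  let e := stdOrthonormalBasis ℝ E
  have divergence := integral_sum_fderiv_eq_zero e (F := fun i x => ⟪c (e i) (u x), v x⟫_ℝ)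
    (fun i => ((c _).contDiff.comp hu).inner ℝ hv)
    fun i => hcu.mono fun x hx h => hx (by simp [h])
  have product (x : E) (i) : fderiv ℝ (fun x => ⟪c (e i) (u x), v x⟫_ℝ) x (e i) =
      ⟪c (e i) (fderiv ℝ u x (e i)), v x⟫_ℝ - ⟪u x, c (e i) (fderiv ℝ v x (e i))⟫_ℝ := by
    have hcliff := (c (e i)).hasFDerivAt.comp x (hu.differentiable one_ne_zero x).hasFDerivAt
    have : HasFDerivAt (fun x => ⟪c (e i) (u x), v x⟫_ℝ) _ x :=
      hcliff.inner ℝ (hv.differentiable one_ne_zero x).hasFDerivAt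
    rw [this.fderiv]
    simp [hs _ (u x), sub_eq_neg_add]
  simp only [product, Finset.sum_sub_distrib, ← sum_inner, ← inner_sum] at divergence
  rw [integral_sub, sub_eq_zero] at divergence
  · exact divergence
  · exact integrable_inner_of_hasCompactSupport (continuous_dirac c hu) hv.continuous
      (hasCompactSupport_dirac c hcu)
  · exact integrable_inner_of_hasCompactSupport hu.continuous (continuous_dirac c hv) hcu

lemma integral_inner_sphericalDirac_left (hc : IsClifford c) (hs : IsSkew c) (hu : ContDiff ℝ 1 u)
    (hcu : HasCompactSupport u) (hv : ContDiff ℝ 1 v) (hcv : HasCompactSupport v) :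
    ∫ x, ⟪sphericalDirac c u x, v x⟫_ℝ = ∫ x, ⟪u x, sphericalDirac c v x⟫_ℝ := by
  have hcliff : ContDiff ℝ 1 fun x => c x (v x) := c.contDiff.clm_apply hv
  have left (x : E) : ⟪sphericalDirac c u x, v x⟫_ℝ =
      ⟪dilationGenerator u x, v x⟫_ℝ - ⟪dirac c u x, c x (v x)⟫_ℝ := by
    rw [sphericalDirac, inner_add_left, hs]
    ring
  have right (x : E) : ⟪u x, dirac c (fun y => c y (v y)) x⟫_ℝ =
      -(⟪u x, dilationGenerator v x⟫_ℝ + ⟪u x, sphericalDirac c v x⟫_ℝ) := by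
    rw [dirac_clifford_self hc (hv.differentiable one_ne_zero x), sphericalDirac, inner_neg_right]
    simp only [inner_add_right, real_inner_smul_right]
    ring
  simp_rw [left]
  rw [integral_sub, integral_inner_dirac_left hs hu hcu hcliff]
  · simp_rw [right]
    rw [integral_neg, integral_add, integral_inner_dilationGenerator_left hu hcu hv hcv]
    · ring
    · exact integrable_inner_of_hasCompactSupport hu.continuous
        (continuous_dilationGenerator hv) hcu
    · exact integrable_inner_of_hasCompactSupport hu.continuous (continuous_sphericalDirac c hv) hcu
  · exact integrable_inner_of_hasCompactSupport (continuous_dilationGenerator hu) hv.continuous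
      (hasCompactSupport_dilationGenerator hcu)
  · exact integrable_inner_of_hasCompactSupport (continuous_dirac c hu) hcliff.continuous
      (hasCompactSupport_dirac c hcu)

lemma integral_inner_dilationGenerator_sphericalDirac (hc : IsClifford c) (hs : IsSkew c)
    (hw : ContDiff ℝ 1 w) (hcw : HasCompactSupport w) :
    ∫ x, ⟪dilationGenerator w x, sphericalDirac c w x⟫_ℝ = 0 := by
  have reflect (t : ℝ) (ht : 0 < t) :
      ∫ x, ⟪w (t • x), sphericalDirac c w x⟫_ℝ =
        (t ^ finrank ℝ E)⁻¹ * ∫ x, ⟪w (t⁻¹ • x), sphericalDirac c w x⟫_ℝ := by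
    have symmetric := integral_inner_sphericalDirac_left (u := fun x => w (t • x)) hc hs
      (hw.comp (contDiff_const_smul t)) (hcw.comp_smul ht.ne') hw hcw
    rw [← symmetric]
    simp_rw [sphericalDirac_comp_smul c (hw.differentiable one_ne_zero)]
    exact integral_inner_comp_smul_left (sphericalDirac c w) w ht
  have hA := continuous_sphericalDirac c hw
  have hcA := hasCompactSupport_sphericalDirac c hcw
  linarith [integral_inner_dilationGenerator_add_eq_zero hw hcw hw hcw hA hcA hA hcA reflect]

lemma two_mul_integral_inner_dilationGenerator_smul {g : E → ℝ} (hg : ContDiff ℝ 1 g)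
    (hw : ContDiff ℝ 1 w) (hcw : HasCompactSupport w) :
    2 * ∫ x, ⟪dilationGenerator w x, g x • w x⟫_ℝ = -∫ x, fderiv ℝ g x x * ‖w x‖ ^ 2 := by
  have hgw : ContDiff ℝ 1 fun x => g x • w x := hg.smul hw
  have product (x : E) : ⟪w x, dilationGenerator (fun y => g y • w y) x⟫_ℝ =
      fderiv ℝ g x x * ‖w x‖ ^ 2 + ⟪dilationGenerator w x, g x • w x⟫_ℝ := by
    rw [dilationGenerator_smul (hg.differentiable one_ne_zero x) (hw.differentiable one_ne_zero x),
      inner_add_right, real_inner_smul_right, real_inner_smul_right, real_inner_smul_right,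
      real_inner_self_eq_norm_sq, real_inner_comm]
  have by_parts := integral_inner_dilationGenerator_left hw hcw hgw hcw.smul_left
  simp_rw [product] at by_parts
  rw [integral_add] at by_parts
  · linarith
  · exact (((hg.continuous_fderiv one_ne_zero).clm_apply continuous_id).mul
      (hw.continuous.norm.pow 2)).integrable_of_hasCompactSupport <|
        hcw.mono fun x hx h => hx (by simp [h])
  · exact integrable_inner_of_hasCompactSupport (continuous_dilationGenerator hw) hgw.continuous
      (hasCompactSupport_dilationGenerator hcw)

lemma integral_fderiv_self_mul_norm_sq_le (hc : IsClifford c) (hs : IsSkew c) {g : E → ℝ}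
    (hg : ContDiff ℝ 1 g) (hw : ContDiff ℝ 1 w) (hcw : HasCompactSupport w) :
    ∫ x, fderiv ℝ g x x * ‖w x‖ ^ 2 ≤ ∫ x, ‖c x (dirac c w x) + g x • w x‖ ^ 2 := by
  have integrable_generator {f : E → V} (hf : Continuous f) :
      Integrable fun x => ⟪dilationGenerator w x, f x⟫_ℝ :=
    integrable_inner_of_hasCompactSupport (continuous_dilationGenerator hw) hf
      (hasCompactSupport_dilationGenerator hcw)
  have cross₁ : Integrable fun x => 2 * ⟪dilationGenerator w x, sphericalDirac c w x⟫_ℝ :=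
    (integrable_generator (continuous_sphericalDirac c hw)).const_mul 2
  have cross₂ : Integrable fun x => 2 * ⟪dilationGenerator w x, g x • w x⟫_ℝ :=
    (integrable_generator (hg.continuous.smul hw.continuous)).const_mul 2
  have square : Integrable fun x => ‖c x (dirac c w x) + g x • w x‖ ^ 2 := by
    have compact : HasCompactSupport fun x => c x (dirac c w x) + g x • w x :=
      HasCompactSupport.add ((hasCompactSupport_dirac c hcw).mono fun x hx h => hx (by simp [h]))
        hcw.smul_left
    exact (((c.continuous.clm_apply (continuous_dirac c hw)).add (hg.continuous.smul
      hw.continuous)).norm.pow 2).integrable_of_hasCompactSupport <|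
        compact.mono fun x hx h => hx (by simp [h])
  have complete_square (x : E) :
      -(2 * ⟪dilationGenerator w x, sphericalDirac c w x⟫_ℝ +
        2 * ⟪dilationGenerator w x, g x • w x⟫_ℝ) ≤ ‖c x (dirac c w x) + g x • w x‖ ^ 2 := by
    have split : c x (dirac c w x) + g x • w x =
        (sphericalDirac c w x + g x • w x) - dilationGenerator w x := by
      rw [sphericalDirac]; abel
    rw [split, norm_sub_sq_real, real_inner_comm (dilationGenerator w x), inner_add_right]
    nlinarith [sq_nonneg ‖sphericalDirac c w x + g x • w x‖, sq_nonneg ‖dilationGenerator w x‖]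
  have estimate := integral_mono (cross₁.add cross₂).neg square complete_square
  simp only [Pi.neg_apply, Pi.add_apply] at estimate
  rwa [integral_neg, integral_add cross₁ cross₂, integral_const_mul, integral_const_mul,
    integral_inner_dilationGenerator_sphericalDirac hc hs hw hcw, mul_zero, zero_add,
    two_mul_integral_inner_dilationGenerator_smul hg hw hcw, neg_neg] at estimate

end Carleman

section Flat

open InnerProductSpace

/-- The radial weight `exp(τ(r² - log r²)/2) = r^(-τ) exp(τr²/2)`; at `r = 0` its value is `1`
since `Real.log 0 = 0`, and all functions it multiplies vanish there. -/
def carlemanWeight (τ r : ℝ) : ℝ :=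
  Real.exp (τ / 2 * (r ^ 2 - Real.log (r ^ 2)))

lemma carlemanWeight_pos (τ r : ℝ) : 0 < carlemanWeight τ r :=
  Real.exp_pos _

lemma carlemanWeight_antitoneOn {τ : ℝ} (hτ : 0 ≤ τ) :
    AntitoneOn (carlemanWeight τ) (Set.Ioc 0 1) := by
  rintro r ⟨hr, -⟩ s ⟨hs, hs1⟩ hrs
  have log_lower := Real.one_sub_inv_le_log_of_pos (x := s ^ 2 / r ^ 2) (by positivity)
  rw [Real.log_div (by positivity) (by positivity), inv_div, one_sub_div (by positivity)]
    at log_lower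
  have : s ^ 2 - r ^ 2 ≤ (s ^ 2 - r ^ 2) / s ^ 2 :=
    le_div_self (by nlinarith) (by positivity) (by nlinarith)
  unfold carlemanWeight
  exact Real.exp_le_exp.2 (mul_le_mul_of_nonneg_left (by linarith) (by linarith))

lemma carlemanWeight_mul_pow_le {τ r : ℝ} {m : ℕ} (hτ : 0 ≤ τ) (hm : τ ≤ m) (hr : 0 < r)
    (hr1 : r ≤ 1) : carlemanWeight τ r * r ^ m ≤ Real.exp (τ / 2) := by
  have : r ^ m = Real.exp (m * Real.log r) := by
    rw [mul_comm, Real.exp_mul, Real.exp_log hr, Real.rpow_natCast]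
  rw [carlemanWeight, this, ← Real.exp_add, Real.log_pow]
  gcongr
  push_cast
  nlinarith [Real.log_nonpos hr.le hr1, pow_le_one₀ (n := 2) hr.le hr1,
    mul_le_mul_of_nonpos_right hm (Real.log_nonpos hr.le hr1)]

variable {E F G : Type*} [NormedAddCommGroup E] [NormedAddCommGroup F] [NormedAddCommGroup G]
  {f : E → F} {g : E → G}

lemma IsFlat.map_zero (hf : IsFlat f) : f 0 = 0 := by
  simpa using (hf 1).eq_zero_imp.self_of_nhds

lemma IsFlat.of_isBigO_pow_mul (hf : IsFlat f) (m : ℕ) (hg0 : g 0 = 0)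
    (h : (fun x => ‖x‖ ^ m * ‖g x‖) =O[nhds 0] f) : IsFlat g := by
  intro k
  obtain ⟨K, hK⟩ := (h.trans (hf (m + k))).bound
  refine Asymptotics.IsBigO.of_bound |K| (hK.mono fun x hx => ?_)
  rcases eq_or_ne x 0 with rfl | hx0
  · simp only [hg0, norm_zero]
    positivity
  · have hpos : 0 < ‖x‖ ^ m := by positivity
    refine le_of_mul_le_mul_left ?_ hpos
    simp only [norm_mul, norm_pow, norm_norm, pow_add] at hx ⊢
    calc ‖x‖ ^ m * ‖g x‖ ≤ K * (‖x‖ ^ m * ‖x‖ ^ k) := hx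
      _ ≤ |K| * (‖x‖ ^ m * ‖x‖ ^ k) := by gcongr; exact le_abs_self K
      _ = ‖x‖ ^ m * (|K| * ‖x‖ ^ k) := by ring

lemma IsFlat.tendsto_zero (hf : IsFlat f) : Tendsto f (nhds 0) (nhds 0) :=
  (hf 1).trans_tendsto <| by simpa using (continuous_norm (E := E)).tendsto 0

lemma IsFlat.inv_norm_smul [NormedSpace ℝ F] (hf : IsFlat f) : IsFlat fun x => ‖x‖⁻¹ • f x := by
  refine hf.of_isBigO_pow_mul 1 (by simp) (.of_bound 1 (.of_forall fun x => ?_))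
  rcases eq_or_ne x 0 with rfl | hx
  · simp
  · simp [norm_smul, hx]

lemma IsFlat.carlemanWeight_smul [NormedSpace ℝ F] (hf : IsFlat f) {τ : ℝ} (hτ : 0 ≤ τ) :
    IsFlat fun x => carlemanWeight τ ‖x‖ • f x := by
  refine hf.of_isBigO_pow_mul ⌈τ⌉₊ (by simp [hf.map_zero]) (.of_bound (Real.exp (τ / 2)) ?_)
  filter_upwards [closedBall_mem_nhds 0 one_pos] with x hx1
  rcases eq_or_ne x 0 with rfl | hx
  · simp [hf.map_zero]
  have := carlemanWeight_mul_pow_le hτ (Nat.le_ceil τ) (norm_pos_iff.2 hx)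
    (mem_closedBall_zero_iff.1 hx1)
  rw [norm_mul, norm_pow, norm_norm, norm_norm, norm_smul, Real.norm_eq_abs, carlemanWeight,
    Real.abs_exp, ← carlemanWeight, ← mul_assoc, mul_comm (‖x‖ ^ _)]
  gcongr

end Flat

section Extension

lemma holderOnWith_of_eqOn {X Y : Type*} [PseudoEMetricSpace X] [PseudoEMetricSpace Y]
    {f g : X → Y} {L a : ℝ≥0} {s : Set X} (hf : HolderOnWith L a f s) (hfg : Set.EqOn f g s) :
    HolderOnWith L a g s := fun x hx y hy => by
  rw [← hfg hx, ← hfg hy]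
  exact hf x hx y hy

variable {E V : Type*} [NormedAddCommGroup E] [NormedSpace ℝ E] [HasContDiffBump E]
  [NormedAddCommGroup V] [NormedSpace ℝ V] {ψ : E → V}

lemma exists_contDiff_extension (hψ : ContDiffOn ℝ 1 ψ (ball 0 1)) {R : ℝ} (hR : 0 < R)
    (hR1 : R < 1) :
    ∃ u : E → V, ContDiff ℝ 1 u ∧ tsupport u ⊆ ball 0 1 ∧ Set.EqOn u ψ (ball 0 R) := by
  let bump : ContDiffBump (0 : E) := ⟨R, (1 + R) / 2, hR, by linarith⟩
  have hsupp : tsupport (fun x => bump x • ψ x) ⊆ ball 0 1 :=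
    (tsupport_smul_subset_left _ _).trans <| bump.tsupport_eq.trans_subset <|
      closedBall_subset_ball (by change (1 + R) / 2 < 1; linarith)
  refine ⟨fun x => bump x • ψ x, contDiff_iff_contDiffAt.2 fun x => ?_, hsupp, fun x hx => ?_⟩
  · by_cases hx : x ∈ tsupport fun x => bump x • ψ x
    · exact bump.contDiffAt.smul (hψ.contDiffAt (isOpen_ball.mem_nhds (hsupp hx)))
    · exact contDiffAt_const.congr_of_eventuallyEq (notMem_tsupport_iff_eventuallyEq.1 hx)
  · simp [bump.one_of_mem_closedBall (ball_subset_closedBall hx)]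

end Extension

section UniqueContinuation

open InnerProductSpace Asymptotics
open scoped Gradient

variable {E V : Type*} [NormedAddCommGroup E] [InnerProductSpace ℝ E]
  [NormedAddCommGroup V] [InnerProductSpace ℝ V]

lemma contDiffAt_carlemanWeight (τ : ℝ) {x : E} (hx : x ≠ 0) :
    ContDiffAt ℝ 1 (fun y => carlemanWeight τ ‖y‖) x := by
  have norm_sq : ContDiffAt ℝ 1 (fun y : E => ‖y‖ ^ 2) x := contDiff_norm_sq ℝ |>.contDiffAt
  exact (contDiffAt_const.mul (norm_sq.sub (norm_sq.log (by simpa using hx)))).exp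

lemma hasGradientAt_carlemanWeight [CompleteSpace E] (τ : ℝ) {x : E} (hx : x ≠ 0) :
    HasGradientAt (fun y => carlemanWeight τ ‖y‖)
      ((carlemanWeight τ ‖x‖ * (τ * (1 - (‖x‖ ^ 2)⁻¹))) • x) x := by
  have norm_sq : HasFDerivAt (fun y : E => ‖y‖ ^ 2) _ x := (hasStrictFDerivAt_norm_sq x).hasFDerivAt
  have exponent : HasFDerivAt (fun y : E => carlemanWeight τ ‖y‖) _ x :=
    ((norm_sq.sub (norm_sq.log (by simpa using hx))).const_mul (τ / 2)).exp
  rw [hasGradientAt_iff_hasFDerivAt]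
  refine exponent.congr_fderiv (ContinuousLinearMap.ext fun y => ?_)
  simp [carlemanWeight]
  ring

lemma norm_gradient_carlemanWeight_le [CompleteSpace E] {τ : ℝ} (hτ : 0 ≤ τ) {x : E} (hx : x ≠ 0)
    (hx1 : ‖x‖ ≤ 1) :
    ‖∇ (fun y : E => carlemanWeight τ ‖y‖) x‖ ≤ τ * carlemanWeight τ ‖x‖ * ‖x‖⁻¹ := by
  have hpos : 0 < ‖x‖ := norm_pos_iff.2 hx
  have one_le : 1 ≤ (‖x‖ ^ 2)⁻¹ := (one_le_inv₀ (by positivity)).2 (pow_le_one₀ hpos.le hx1)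
  have hW := (carlemanWeight_pos τ ‖x‖).le
  rw [(hasGradientAt_carlemanWeight τ hx).gradient, norm_smul, Real.norm_eq_abs, abs_mul, abs_mul,
    abs_of_nonneg hW, abs_of_nonneg hτ, abs_of_nonpos (by linarith)]
  calc carlemanWeight τ ‖x‖ * (τ * -(1 - (‖x‖ ^ 2)⁻¹)) * ‖x‖
      ≤ carlemanWeight τ ‖x‖ * (τ * (‖x‖ ^ 2)⁻¹) * ‖x‖ := by gcongr; linarith
    _ = τ * carlemanWeight τ ‖x‖ * ‖x‖⁻¹ := by field_simp

lemma contDiff_carlemanWeight_smul [CompleteSpace E] {φ : E → V} {τ : ℝ} (hτ : 0 ≤ τ)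
    (hφ : ContDiff ℝ 1 φ) (hflat : IsFlat φ) (hflat' : IsFlat (fderiv ℝ φ)) :
    ContDiff ℝ 1 fun x => carlemanWeight τ ‖x‖ • φ x := by
  set w : E → V := fun x => carlemanWeight τ ‖x‖ • φ x
  have away {x : E} (hx : x ≠ 0) : ContDiffAt ℝ 1 w x :=
    (contDiffAt_carlemanWeight τ hx).smul hφ.contDiffAt
  have at_zero : HasFDerivAt w 0 0 :=
    IsBigO.hasFDerivAt (𝕜 := ℝ) (n := 2) (by simpa using hflat.carlemanWeight_smul hτ 2) one_lt_two
  have fderiv_bound : ∀ᶠ x in nhds 0, ‖fderiv ℝ w x‖ ≤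
      ‖carlemanWeight τ ‖x‖ • fderiv ℝ φ x‖ + τ * ‖carlemanWeight τ ‖x‖ • ‖x‖⁻¹ • φ x‖ := by
    filter_upwards [closedBall_mem_nhds 0 one_pos] with x hx1
    rcases eq_or_ne x 0 with rfl | hx
    · rw [at_zero.fderiv, norm_zero]
      positivity
    have hW : DifferentiableAt ℝ (fun y => carlemanWeight τ ‖y‖) x :=
      (hasGradientAt_carlemanWeight τ hx).differentiableAt
    have hW' := norm_gradient_carlemanWeight_le hτ hx (mem_closedBall_zero_iff.1 hx1)
    rw [gradient, LinearIsometryEquiv.norm_map] at hW'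
    rw [fderiv_fun_smul hW (hφ.differentiable one_ne_zero x)]
    refine (norm_add_le _ _).trans ?_
    gcongr
    rw [ContinuousLinearMap.norm_smulRight_apply]
    refine (mul_le_mul_of_nonneg_right hW' (norm_nonneg _)).trans_eq ?_
    rw [norm_smul, norm_smul, norm_inv, norm_norm, carlemanWeight, Real.norm_eq_abs, Real.abs_exp]
    ring
  have tendsto_zero : Tendsto (fderiv ℝ w) (nhds 0) (nhds 0) := by
    refine squeeze_zero_norm' fderiv_bound ?_
    simpa using (hflat'.carlemanWeight_smul hτ).tendsto_zero.norm.add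
      ((hflat.inv_norm_smul.carlemanWeight_smul hτ).tendsto_zero.norm.const_mul τ)
  rw [contDiff_one_iff_fderiv]
  refine ⟨fun x => ?_, continuous_iff_continuousAt.2 fun x => ?_⟩
  · rcases eq_or_ne x 0 with rfl | hx
    · exact at_zero.differentiableAt
    · exact (away hx).differentiableAt one_ne_zero
  · rcases eq_or_ne x 0 with rfl | hx
    · rwa [ContinuousAt, at_zero.fderiv]
    · exact ((away hx).fderiv_right (m := 0) le_rfl).continuousAt

variable [FiniteDimensional ℝ E] {c : E →L[ℝ] V →L[ℝ] V} {φ ψ : E → V}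

lemma clifford_dirac_carlemanWeight_smul (hc : IsClifford c) (τ : ℝ) {x : E} (hx : x ≠ 0)
    (hφ : DifferentiableAt ℝ φ x) :
    c x (dirac c (fun y => carlemanWeight τ ‖y‖ • φ y) x) +
        (τ * (‖x‖ ^ 2 - 1)) • carlemanWeight τ ‖x‖ • φ x =
      carlemanWeight τ ‖x‖ • c x (dirac c φ x) := by
  have hW := hasGradientAt_carlemanWeight τ hx
  rw [dirac_smul c hW.differentiableAt hφ, hW.gradient]
  simp only [map_add, map_smul, _root_.smul_apply, hc x]
  have : ‖x‖ ^ 2 ≠ 0 := by simpa using hx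
  match_scalars
  · ring
  · field_simp
    ring

lemma carlemanWeight_mul_norm_dirac_sq_le {R C τ : ℝ} (hR : 0 < R) (hR1 : R < 1) (hτ : 0 ≤ τ)
    (hsupp : tsupport φ ⊆ ball 0 1) (hD : ∀ x ∈ ball (0 : E) R, ‖dirac c φ x‖ ≤ C * ‖φ x‖) (x : E) :
    (carlemanWeight τ ‖x‖ * (‖x‖ * ‖dirac c φ x‖)) ^ 2 ≤
      C ^ 2 * (carlemanWeight τ ‖x‖ * (‖x‖ * ‖φ x‖)) ^ 2 +
        carlemanWeight τ R ^ 2 * (‖x‖ * ‖dirac c φ x‖) ^ 2 := by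
  rcases lt_or_ge ‖x‖ R with hx | hx
  · have near := pow_le_pow_left₀ (norm_nonneg _) (hD x (mem_ball_zero_iff.2 hx)) 2
    calc (carlemanWeight τ ‖x‖ * (‖x‖ * ‖dirac c φ x‖)) ^ 2
        = (carlemanWeight τ ‖x‖ * ‖x‖) ^ 2 * ‖dirac c φ x‖ ^ 2 := by ring
      _ ≤ (carlemanWeight τ ‖x‖ * ‖x‖) ^ 2 * (C * ‖φ x‖) ^ 2 := by gcongr
      _ = C ^ 2 * (carlemanWeight τ ‖x‖ * (‖x‖ * ‖φ x‖)) ^ 2 := by ring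
      _ ≤ _ := le_add_of_nonneg_right (by positivity)
  rcases le_or_gt ‖x‖ 1 with hx1 | hx1
  · have far := carlemanWeight_antitoneOn hτ ⟨hR, hR1.le⟩ ⟨hR.trans_le hx, hx1⟩ hx
    calc (carlemanWeight τ ‖x‖ * (‖x‖ * ‖dirac c φ x‖)) ^ 2
        ≤ (carlemanWeight τ R * (‖x‖ * ‖dirac c φ x‖)) ^ 2 := by
          have := (carlemanWeight_pos τ ‖x‖).le
          gcongr
      _ = carlemanWeight τ R ^ 2 * (‖x‖ * ‖dirac c φ x‖) ^ 2 := by ring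
      _ ≤ _ := le_add_of_nonneg_left (by positivity)
  · have outside : dirac c φ x = 0 := dirac_eq_zero_of_notMem_tsupport c fun h =>
      (mem_ball_zero_iff.1 (hsupp h)).not_gt hx1
    rw [outside]
    simp only [norm_zero, mul_zero, ne_eq, OfNat.ofNat_ne_zero, not_false_eq_true, zero_pow]
    positivity

variable [MeasurableSpace E] [BorelSpace E]

lemma carleman_estimate (hc : IsClifford c) (hs : IsSkew c) {τ : ℝ} (hτ : 0 ≤ τ)
    (hφ : ContDiff ℝ 1 φ) (hcφ : HasCompactSupport φ) (hflat : IsFlat φ)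
    (hflat' : IsFlat (fderiv ℝ φ)) :
    2 * τ * ∫ x, (carlemanWeight τ ‖x‖ * (‖x‖ * ‖φ x‖)) ^ 2 ≤
      ∫ x, (carlemanWeight τ ‖x‖ * (‖x‖ * ‖dirac c φ x‖)) ^ 2 := by
  have hg : ContDiff ℝ 1 fun x : E => τ * (‖x‖ ^ 2 - 1) :=
    contDiff_const.mul ((contDiff_norm_sq ℝ).sub contDiff_const)
  have euler_g (x : E) : fderiv ℝ (fun x : E => τ * (‖x‖ ^ 2 - 1)) x x = 2 * τ * ‖x‖ ^ 2 := by
    have : HasFDerivAt (fun x : E => τ * (‖x‖ ^ 2 - 1)) _ x :=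
      ((hasStrictFDerivAt_norm_sq x).hasFDerivAt.sub_const 1).const_mul τ
    rw [this.fderiv]
    simp
    ring
  have estimate := integral_fderiv_self_mul_norm_sq_le hc hs hg
    (contDiff_carlemanWeight_smul hτ hφ hflat hflat') hcφ.smul_left
  rw [← integral_const_mul]
  convert estimate using 1
  · refine integral_congr_ae (.of_forall fun x => ?_)
    simp only [euler_g, norm_smul, Real.norm_eq_abs, mul_pow, sq_abs]
    ring
  · refine integral_congr_ae (.of_forall fun x => ?_)
    rcases eq_or_ne x 0 with rfl | hx
    · simp [hflat.map_zero]
    · simp only [clifford_dirac_carlemanWeight_smul hc τ hx (hφ.differentiable one_ne_zero x),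
        norm_smul, hc.norm_apply hs, Real.norm_eq_abs, mul_pow, sq_abs]

lemma mul_setIntegral_ball_le (hc : IsClifford c) (hs : IsSkew c) (hφ : ContDiff ℝ 1 φ)
    (hsupp : tsupport φ ⊆ ball 0 1) (hflat : IsFlat φ) (hflat' : IsFlat (fderiv ℝ φ)) {R C : ℝ}
    (hR : 0 < R) (hR1 : R < 1) (hD : ∀ x ∈ ball (0 : E) R, ‖dirac c φ x‖ ≤ C * ‖φ x‖) {τ : ℝ}
    (hτ : 0 ≤ τ) (hCτ : C ^ 2 ≤ 2 * τ) :
    (2 * τ - C ^ 2) * ∫ x in ball (0 : E) R, (‖x‖ * ‖φ x‖) ^ 2 ≤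
      ∫ x, (‖x‖ * ‖dirac c φ x‖) ^ 2 := by
  have hcφ : HasCompactSupport φ :=
    (isCompact_closedBall (0 : E) 1).of_isClosed_subset (isClosed_tsupport φ)
      (hsupp.trans ball_subset_closedBall)
  have integrable_sq {u : E → V} (hu : Continuous u) (hcu : HasCompactSupport u) :
      Integrable fun x => (‖x‖ * ‖u x‖) ^ 2 :=
    ((continuous_norm.mul hu.norm).pow 2).integrable_of_hasCompactSupport <|
      hcu.mono fun x hx h => hx (by simp [h])
  have weighted : Integrable fun x => (carlemanWeight τ ‖x‖ * (‖x‖ * ‖φ x‖)) ^ 2 := by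
    refine (integrable_sq (contDiff_carlemanWeight_smul hτ hφ hflat hflat').continuous
      hcφ.smul_left).congr (.of_forall fun x => ?_)
    simp only [norm_smul, Real.norm_eq_abs, mul_pow, sq_abs]
    ring
  have source := integrable_sq (continuous_dirac c hφ) (hasCompactSupport_dirac c hcφ)
  have absorb := (carleman_estimate hc hs hτ hφ hcφ hflat hflat').trans <|
    integral_mono_of_nonneg (.of_forall fun x => sq_nonneg _)
      ((weighted.const_mul (C ^ 2)).add (source.const_mul (carlemanWeight τ R ^ 2)))
      (.of_forall (carlemanWeight_mul_norm_dirac_sq_le hR hR1 hτ hsupp hD))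
  have localize : carlemanWeight τ R ^ 2 * ∫ x in ball (0 : E) R, (‖x‖ * ‖φ x‖) ^ 2 ≤
      ∫ x, (carlemanWeight τ ‖x‖ * (‖x‖ * ‖φ x‖)) ^ 2 := by
    rw [← integral_const_mul]
    refine (setIntegral_mono_on ((integrable_sq hφ.continuous hcφ).const_mul _).integrableOn
      weighted.integrableOn measurableSet_ball fun x hx => ?_).trans
      (setIntegral_le_integral weighted (.of_forall fun x => sq_nonneg _))
    rcases eq_or_ne x 0 with rfl | hx0
    · simp
    have hxR := mem_ball_zero_iff.1 hx
    have weight_le := carlemanWeight_antitoneOn hτ ⟨norm_pos_iff.2 hx0, (hxR.trans hR1).le⟩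
      ⟨hR, hR1.le⟩ hxR.le
    rw [← mul_pow]
    have := (carlemanWeight_pos τ R).le
    gcongr
  simp only [Pi.add_apply] at absorb
  rw [integral_add (weighted.const_mul _) (source.const_mul _), integral_const_mul,
    integral_const_mul] at absorb
  have hW : 0 < carlemanWeight τ R ^ 2 := pow_pos (carlemanWeight_pos τ R) 2
  refine le_of_mul_le_mul_left ?_ hW
  have := mul_le_mul_of_nonneg_left localize (sub_nonneg.2 hCτ)
  linarith

lemma eqOn_zero_of_isFlat_of_tsupport_subset (hc : IsClifford c) (hs : IsSkew c)
    (hφ : ContDiff ℝ 1 φ) (hsupp : tsupport φ ⊆ ball 0 1) (hflat : IsFlat φ)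
    (hflat' : IsFlat (fderiv ℝ φ)) {R C : ℝ} (hR : 0 < R) (hR1 : R < 1)
    (hD : ∀ x ∈ ball (0 : E) R, ‖dirac c φ x‖ ≤ C * ‖φ x‖) : Set.EqOn φ 0 (ball 0 R) := by
  set mass := ∫ x in ball (0 : E) R, (‖x‖ * ‖φ x‖) ^ 2
  have bounded (t : ℝ) (ht : 0 ≤ t) : t * mass ≤ ∫ x, (‖x‖ * ‖dirac c φ x‖) ^ 2 := by
    have := mul_setIntegral_ball_le hc hs hφ hsupp hflat hflat' hR hR1 hD
      (τ := (t + C ^ 2) / 2) (by positivity) (by linarith)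
    simpa [mul_div_cancel₀] using this
  have mass_zero : mass = 0 := by
    by_contra hmass
    have : 0 < mass :=
      (setIntegral_nonneg measurableSet_ball fun x _ => sq_nonneg _).lt_of_ne' hmass
    have := bounded (((∫ x, (‖x‖ * ‖dirac c φ x‖) ^ 2) + 1) / mass) (by positivity)
    rw [div_mul_cancel₀ _ hmass] at this
    linarith
  have hcont : Continuous fun x => (‖x‖ * ‖φ x‖) ^ 2 :=
    (continuous_norm.mul hφ.continuous.norm).pow 2
  have vanish := Measure.eqOn_open_of_ae_eq ((setIntegral_eq_zero_iff_of_nonneg_ae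
    (.of_forall fun x => sq_nonneg _) ((hcont.continuousOn.integrableOn_compact
      (isCompact_closedBall 0 R)).mono_set ball_subset_closedBall)).1 mass_zero)
    isOpen_ball hcont.continuousOn continuousOn_const
  intro x hx
  rcases eq_or_ne x 0 with rfl | hx0
  · exact hflat.map_zero
  · simpa [hx0] using vanish hx

lemma IsFlat.fderiv_of_dirac [CompleteSpace V] [Nontrivial E] (hc : IsClifford c)
    {L a : ℝ≥0} {ρ : ℝ} (ha : 0 < a) (hρ : 0 < ρ) (hφ : ContDiff ℝ 1 φ)
    (hφL : HolderOnWith L a (fderiv ℝ φ) (ball 0 ρ)) (hflat : IsFlat φ)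
    (hD : dirac c φ =O[nhds 0] φ) : IsFlat (fderiv ℝ φ) := by
  intro k
  have dirac_bound : dirac c φ =O[nhds 0] fun x => ‖x‖ ^ (((k + 2 : ℕ) : ℝ) - 1) := by
    have : ((k + 2 : ℕ) : ℝ) - 1 = (k + 1 : ℕ) := by push_cast; ring
    simpa only [this, Real.rpow_natCast] using hD.trans (hflat (k + 1))
  have gradient_bound := isBigO_fderiv_of_isBigO_dirac hc (e' := (k + 1 : ℕ)) (by simp) (by simp)
    ha hρ hφ hφL (by simpa only [Real.rpow_natCast] using hflat (k + 2)) dirac_bound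
  have : ((k + 1 : ℕ) : ℝ) - 1 = k := by push_cast; ring
  simpa only [this, Real.rpow_natCast] using gradient_bound

lemma eqOn_zero_of_isFlat [CompleteSpace V] [Nontrivial E] (hc : IsClifford c) (hs : IsSkew c)
    (hψ : ContDiffOn ℝ 1 ψ (ball 0 1)) {L a : ℝ≥0} (ha : 0 < a)
    (hψL : HolderOnWith L a (fderiv ℝ ψ) (ball 0 1))
    (hD : ∀ R < 1, ∃ C, ∀ x ∈ ball (0 : E) R, ‖dirac c ψ x‖ ≤ C * ‖ψ x‖) (hflat : IsFlat ψ) :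
    Set.EqOn ψ 0 (ball 0 1) := by
  intro y hy
  rw [mem_ball_zero_iff] at hy
  obtain ⟨R, hyR, hR1⟩ := exists_between hy
  have hR : 0 < R := (norm_nonneg y).trans_lt hyR
  obtain ⟨φ, hφ, hsupp, hφψ⟩ := exists_contDiff_extension hψ hR hR1
  have germ {x : E} (hx : x ∈ ball 0 R) : φ =ᶠ[nhds x] ψ := hφψ.eventuallyEq_of_mem
    (isOpen_ball.mem_nhds hx)
  obtain ⟨C, hC⟩ := hD R hR1
  have hDφ (x : E) (hx : x ∈ ball 0 R) : ‖dirac c φ x‖ ≤ C * ‖φ x‖ := by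
    rw [dirac_congr c (germ hx), hφψ hx]
    exact hC x hx
  have hφL : HolderOnWith L a (fderiv ℝ φ) (ball 0 R) :=
    holderOnWith_of_eqOn (hψL.mono (ball_subset_ball hR1.le)) fun x hx => (germ hx).fderiv_eq.symm
  have φ_flat : IsFlat φ := fun k => (germ (mem_ball_self hR)).trans_isBigO (hflat k)
  have φ_flat' : IsFlat (fderiv ℝ φ) := φ_flat.fderiv_of_dirac hc ha hR hφ hφL <|
    .of_bound C (eventually_of_mem (ball_mem_nhds 0 hR) hDφ)
  have hyR := mem_ball_zero_iff.2 hyR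
  rw [← hφψ hyR]
  exact eqOn_zero_of_isFlat_of_tsupport_subset hc hs hφ hsupp φ_flat φ_flat' hR hR1 hDφ hyR

end UniqueContinuation

section Expansion

open Asymptotics

lemma exists_holderOnWith_sub {X W : Type*} [PseudoMetricSpace X] [NormedAddCommGroup W]
    {f g : X → W} {L K a b : ℝ≥0} {s : Set X} (hs : Bornology.IsBounded s)
    (hf : HolderOnWith L a f s) (hg : HolderOnWith K b g s) :
    ∃ M, HolderOnWith M (min a b) (fun x => f x - g x) s := by
  obtain ⟨L', hf'⟩ := HolderOnWith.exists_holderOnWith_of_le ⟨L, hf⟩ (min_le_left a b) hs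
  obtain ⟨K', hg'⟩ := HolderOnWith.exists_holderOnWith_of_le ⟨K, hg⟩ (min_le_right a b) hs
  refine ⟨L' + K', fun x hx y hy => ?_⟩
  rw [ENNReal.coe_add, add_mul]
  have : edist (f x - g x) (f y - g y) ≤ edist (f x) (f y) + edist (g x) (g y) := by
    simpa only [sub_eq_add_neg, edist_neg_neg] using edist_add_add_le (f x) (-g x) (f y) (-g y)
  exact this.trans (add_le_add (hf' x hx y hy) (hg' x hx y hy))

variable {E V : Type*} [NormedAddCommGroup E] [InnerProductSpace ℝ E] [FiniteDimensional ℝ E]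
  [Nontrivial E] [MeasurableSpace E] [BorelSpace E] [NormedAddCommGroup V] [NormedSpace ℝ V]
  [CompleteSpace V] {c : E →L[ℝ] V →L[ℝ] V} {u : E → V}

lemma isBigO_fderiv_sub_diracTaylor (hc : IsClifford c) (hu : ContDiff ℝ 1 u)
    (hsupp : tsupport u ⊆ ball 0 1) (hDu : dirac c u =O[nhds 0] u) {k : ℕ}
    (huk : u =O[nhds 0] fun x => ‖x‖ ^ ((k + 1 : ℕ) : ℝ)) {L a : ℝ≥0} {ρ : ℝ} (ha : 0 < a)
    (hρ : 0 < ρ) (huL : HolderOnWith L a (fderiv ℝ u) (ball 0 ρ)) {δ : ℝ} (hδ0 : 0 ≤ δ)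
    (hδ1 : δ < 1) :
    fderiv ℝ (fun x => u x - diracTaylor c u (k + 1) fun _ => x) =O[nhds 0]
      fun x => ‖x‖ ^ ((k + 1 : ℕ) + δ - 1) := by
  set P : E → V := fun x => diracTaylor c u (k + 1) fun _ => x
  have hP : ContDiff ℝ 2 P := contDiff_diag _
  have hDP (x : E) : dirac c P x = 0 := dirac_diracTaylor_diag_eq_zero hc hu hsupp hDu huk x
  obtain ⟨δ', hδδ', hδ'1⟩ := exists_between hδ1
  have remainder := isBigO_sub_diracTaylor hc hu hsupp hDu huk (hδ0.trans hδδ'.le) hδ'1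
  have source : dirac c (fun x => u x - P x) =O[nhds 0]
      fun x => ‖x‖ ^ ((k + 1 : ℕ) + δ' - 1) := by
    refine ((hDu.trans huk).trans (isBigO_norm_rpow_norm_rpow ?_ (by linarith))).congr_left
      fun x => ?_
    · push_cast
      linarith [k.cast_nonneg (α := ℝ)]
    · rw [dirac_sub c (hu.differentiable one_ne_zero x) (hP.differentiable two_ne_zero x), hDP,
        sub_zero]
  obtain ⟨K, t, ht, hPK⟩ := (hP.fderiv_right (m := 1) le_rfl).contDiffAt (x := 0)
    |>.exists_lipschitzOnWith
  obtain ⟨r, hr, hrt⟩ := Metric.mem_nhds_iff.1 ht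
  obtain ⟨M, hM⟩ := exists_holderOnWith_sub isBounded_ball
    (huL.mono (ball_subset_ball (min_le_left ρ r)))
    ((hPK.mono hrt).holderOnWith.mono (ball_subset_ball (min_le_right ρ r)))
  refine isBigO_fderiv_of_isBigO_dirac hc (by push_cast; linarith [k.cast_nonneg (α := ℝ)])
    (by linarith) (lt_min ha one_pos) (lt_min hρ hr) (hu.sub (hP.of_le one_le_two))
    (holderOnWith_of_eqOn hM fun x _ => ?_) remainder source
  exact (fderiv_fun_sub (hu.differentiable one_ne_zero x)
    (hP.differentiable two_ne_zero x)).symm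

/-- A homogeneous polynomial map of degree `k`, presented as the diagonal of the multilinear map
`Q`, is a leading term of `ψ` at the origin for the Dirac operator of `c` when it is nonzero and
Dirac-harmonic and `ψ - Q` vanishes, together with its derivative, to every order below `k + 1`,
uniformly on the ball of radius `R`. -/
structure IsDiracLeadingTerm (c : E →L[ℝ] V →L[ℝ] V) (ψ : E → V) (R : ℝ) {k : ℕ}
    (Q : E [×k]→L[ℝ] V) : Prop where
  exists_ne_zero : ∃ x, (Q fun _ => x) ≠ 0
  dirac_eq_zero (x : E) : dirac c (fun y => Q fun _ => y) x = 0
  isBigO_sub {δ : ℝ} (hδ0 : 0 < δ) (hδ1 : δ < 1) :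
    (fun x => ψ x - Q fun _ => x) =O[𝓟 (ball 0 R)] fun x => ‖x‖ ^ (k + δ)
  isBigO_fderiv_sub {δ : ℝ} (hδ0 : 0 < δ) (hδ1 : δ < 1) :
    fderiv ℝ (fun x => ψ x - Q fun _ => x) =O[𝓟 (ball 0 R)] fun x => ‖x‖ ^ (k + δ - 1)

lemma exists_isDiracLeadingTerm (hc : IsClifford c) {ψ : E → V} (hψ : ContDiffOn ℝ 1 ψ (ball 0 1))
    {L a : ℝ≥0} (ha : 0 < a) (hψL : HolderOnWith L a (fderiv ℝ ψ) (ball 0 1))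
    (hDψ : dirac c ψ =O[nhds 0] ψ) (hψ0 : ψ 0 = 0) (hflat : ¬ IsFlat ψ) {R : ℝ} (hR : 0 < R)
    (hR1 : R < 1) : ∃ (k : ℕ) (Q : E [×k + 1]→L[ℝ] V), IsDiracLeadingTerm c ψ R Q := by
  obtain ⟨ρ, hRρ, hρ1⟩ := exists_between hR1
  obtain ⟨u, hu, hsupp, huψ⟩ := exists_contDiff_extension hψ (hR.trans hRρ) hρ1
  have germ {x : E} (hx : x ∈ ball 0 ρ) : u =ᶠ[nhds x] ψ :=
    huψ.eventuallyEq_of_mem (isOpen_ball.mem_nhds hx)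
  have germ0 : u =ᶠ[nhds 0] ψ := germ (mem_ball_self (hR.trans hRρ))
  have hDu : dirac c u =O[nhds 0] u :=
    hDψ.congr' (germ0.eventuallyEq_nhds.mono fun x hx => (dirac_congr c hx).symm) germ0.symm
  have huL : HolderOnWith L a (fderiv ℝ u) (ball 0 ρ) :=
    holderOnWith_of_eqOn (hψL.mono (ball_subset_ball hρ1.le)) fun x hx => (germ hx).fderiv_eq.symm
  obtain ⟨k, huk, hQ⟩ := exists_order_of_not_isFlat hc hu hsupp hDu (germ0.eq_of_nhds.trans hψ0)
    fun hu => hflat fun k => germ0.symm.trans_isBigO (hu k)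
  set Q := diracTaylor c u (k + 1)
  have hQ1 : ContDiff ℝ 1 fun x => Q fun _ => x := contDiff_diag Q
  have hball : 𝓟 (ball (0 : E) R) ≤ 𝓟 (closedBall 0 R) := principal_mono.2 ball_subset_closedBall
  have sub_germ {x : E} (hx : x ∈ ball 0 R) :
      (fun x => u x - Q fun _ => x) =ᶠ[nhds x] fun x => ψ x - Q fun _ => x :=
    (germ (ball_subset_ball hRρ.le hx)).sub (.refl _ fun x => Q fun _ => x)
  refine ⟨k, Q, hQ, dirac_diracTaylor_diag_eq_zero hc hu hsupp hDu huk, fun {δ} hδ0 hδ1 => ?_,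
    fun {δ} hδ0 hδ1 => ?_⟩
  · have remainder := isBigO_norm_rpow_principal_closedBall (R := R) (by positivity)
      (hu.sub hQ1).continuous.continuousOn (isBigO_sub_diracTaylor hc hu hsupp hDu huk hδ0.le hδ1)
    exact (remainder.mono hball).congr'
      (Set.EqOn.eventuallyEq fun x hx => (sub_germ hx).eq_of_nhds) .rfl
  · have gradient := isBigO_norm_rpow_principal_closedBall (R := R)
      (by push_cast; linarith [k.cast_nonneg (α := ℝ)])
      ((hu.sub hQ1).continuous_fderiv one_ne_zero).continuousOn
      (isBigO_fderiv_sub_diracTaylor hc hu hsupp hDu huk ha (hR.trans hRρ) huL hδ0.le hδ1)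
    exact (gradient.mono hball).congr'
      (Set.EqOn.eventuallyEq fun x hx => (sub_germ hx).fderiv_eq) .rfl

end Expansion

section Weitzenbock

open InnerProductSpace
open scoped Laplacian

variable {E V : Type*} [NormedAddCommGroup E] [InnerProductSpace ℝ E]
  [NormedAddCommGroup V] [NormedSpace ℝ V] {c : E →L[ℝ] V →L[ℝ] V}

lemma IsClifford.sum_sum_apply_of_symm {ι : Type*} [Fintype ι] {e : ι → E} (hc : IsClifford c)
    (he : Orthonormal ℝ e) {w : ι → ι → V} (hw : ∀ i j, w i j = w j i) :
    ∑ i, ∑ j, c (e i) (c (e j) (w i j)) = -∑ i, w i i := by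
  classical
  refine smul_right_injective V (two_ne_zero (α := ℝ)) ?_
  calc (2 : ℝ) • ∑ i, ∑ j, c (e i) (c (e j) (w i j))
      = ∑ i, ∑ j, (c (e i) (c (e j) (w i j)) + c (e j) (c (e i) (w i j))) := by
        simp only [Finset.sum_add_distrib, two_smul]
        rw [Finset.sum_comm (f := fun i j => c (e j) (c (e i) (w i j)))]
        simp only [fun i j => hw j i]
    _ = (2 : ℝ) • -∑ i, w i i := by
        simp [hc.add_swap, orthonormal_iff_ite.1 he, Finset.smul_sum]

lemma IsClifford.dirac_dirac [FiniteDimensional ℝ E] (hc : IsClifford c) {u : E → V}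
    (hu : ContDiff ℝ 2 u) (x : E) : dirac c (dirac c u) x = -Δ u x := by
  have hd : DifferentiableAt ℝ (fderiv ℝ u) x :=
    (hu.fderiv_right (m := 1) le_rfl).differentiable one_ne_zero x
  have symm : IsSymmSndFDerivAt ℝ u x := hu.contDiffAt.isSymmSndFDerivAt (by simp)
  have expand (v : E) : fderiv ℝ (dirac c u) x v = ∑ j, c (stdOrthonormalBasis ℝ E j)
      (fderiv ℝ (fderiv ℝ u) x v (stdOrthonormalBasis ℝ E j)) := by
    have : HasFDerivAt (dirac c u) _ x := HasFDerivAt.fun_sum (u := Finset.univ) fun j _ =>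
      (c (stdOrthonormalBasis ℝ E j)).hasFDerivAt.comp x
        (hd.hasFDerivAt.clm_apply (hasFDerivAt_const (stdOrthonormalBasis ℝ E j) x))
    simp [this.fderiv, _root_.sum_apply]
  rw [laplacian_eq_iteratedFDeriv_stdOrthonormalBasis, dirac]
  simp only [expand, map_sum, iteratedFDeriv_two_apply, Matrix.cons_val_zero,
    Matrix.cons_val_one]
  exact hc.sum_sum_apply_of_symm (stdOrthonormalBasis ℝ E).orthonormal
    fun i j => symm.eq _ _

lemma IsClifford.laplacian_eq_zero [FiniteDimensional ℝ E] (hc : IsClifford c) {u : E → V}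
    (hu : ContDiff ℝ 2 u) (h : ∀ x, dirac c u x = 0) (x : E) : Δ u x = 0 := by
  rw [← neg_eq_zero, ← hc.dirac_dirac hu, funext h]
  simp [dirac]

end Weitzenbock

section Intertwining

open Asymptotics

variable {E V W : Type*} [NormedAddCommGroup E] [InnerProductSpace ℝ E] [FiniteDimensional ℝ E]
  [NormedAddCommGroup V] [InnerProductSpace ℝ V] [NormedAddCommGroup W] [InnerProductSpace ℝ W]
  {c : E →L[ℝ] V →L[ℝ] V} {c' : E →L[ℝ] W →L[ℝ] W}

lemma dirac_comp_of_intertwines (B : V →L[ℝ] W) (hB : ∀ z v, c' z (B v) = B (c z v)) {u : E → V}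
    {x : E} (hu : DifferentiableAt ℝ u x) :
    dirac c' (fun y => B (u y)) x = B (dirac c u x) := by
  have chain : HasFDerivAt (fun y => B (u y)) _ x := B.hasFDerivAt.comp x hu.hasFDerivAt
  simp only [dirac, chain.fderiv, ContinuousLinearMap.comp_apply, hB, map_sum]

lemma eqOn_zero_of_isFlat_of_intertwines [MeasurableSpace E] [BorelSpace E] [Nontrivial E]
    [CompleteSpace W] (hc' : IsClifford c') (hs : IsSkew c') (B : V ≃L[ℝ] W)
    (hB : ∀ z v, c' z (B v) = B (c z v)) {ψ : E → V} (hψ : ContDiffOn ℝ 1 ψ (ball 0 1))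
    {L a : ℝ≥0} (ha : 0 < a) (hψL : HolderOnWith L a (fderiv ℝ ψ) (ball 0 1))
    (hD : ∀ R < 1, ∃ C, ∀ x ∈ ball (0 : E) R, ‖dirac c ψ x‖ ≤ C * ‖ψ x‖) (hflat : IsFlat ψ) :
    Set.EqOn ψ 0 (ball 0 1) := by
  have hd {x : E} (hx : x ∈ ball 0 1) : DifferentiableAt ℝ ψ x :=
    (hψ.contDiffAt (isOpen_ball.mem_nhds hx)).differentiableAt one_ne_zero
  let compB : (E →L[ℝ] V) →L[ℝ] E →L[ℝ] W :=
    ContinuousLinearMap.compL ℝ E V W (B : V →L[ℝ] W)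
  have holder : HolderOnWith (‖compB‖₊ * L ^ ((1 : ℝ≥0) : ℝ)) (1 * a)
      (fderiv ℝ fun x => B (ψ x)) (ball 0 1) :=
    holderOnWith_of_eqOn (compB.lipschitz.holderWith.comp_holderOnWith hψL) fun x hx =>
      ((B : V →L[ℝ] W).hasFDerivAt.comp x (hd hx).hasFDerivAt).fderiv.symm
  have zero := eqOn_zero_of_isFlat hc' hs ((B : V →L[ℝ] W).contDiff.comp_contDiffOn hψ)
    (by simpa using ha) holder (fun R hR => ?_)
    fun k => ((B : V →L[ℝ] W).isBigO_comp ψ (nhds 0)).trans (hflat k)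
  · exact fun x hx => B.injective (by simpa using zero hx)
  · obtain ⟨C, hC⟩ := hD R hR
    have eq_dirac : Set.EqOn (fun x => B (dirac c ψ x)) (dirac c' fun x => B (ψ x)) (ball 0 R) :=
      fun x hx => (dirac_comp_of_intertwines (B : V →L[ℝ] W) hB
        (hd (ball_subset_ball hR.le hx))).symm
    have bound : dirac c' (fun x => B (ψ x)) =O[𝓟 (ball 0 R)] fun x => B (ψ x) :=
      (((B : V →L[ℝ] W).isBigO_comp (dirac c ψ) _).congr' eq_dirac.eventuallyEq .rfl).trans
        ((isBigO_principal.2 ⟨C, hC⟩).trans (B.isBigO_comp_rev ψ _))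
    exact isBigO_principal.1 bound

end Intertwining

section RealPoints

open InnerProductSpace MvPolynomial
open scoped Laplacian

variable {ι : Type*}

/-- The function on real space defined by a polynomial with complex coefficients. -/
def evalReal (p : MvPolynomial ι ℂ) (x : EuclideanSpace ℝ ι) : ℂ :=
  eval (fun j => (x j : ℂ)) p

lemma eq_zero_of_evalReal_eq_zero {p : MvPolynomial ι ℂ} (h : ∀ x, evalReal p x = 0) :
    p = 0 := by
  refine funext_set (fun _ => Set.range Complex.ofReal)
    (fun _ => Set.infinite_range_of_injective Complex.ofReal_injective) fun y hy => ?_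
  choose x hx using fun j => hy j (Set.mem_univ j)
  simpa [evalReal, hx] using h (WithLp.toLp 2 x)

lemma contDiff_evalReal [Fintype ι] (p : MvPolynomial ι ℂ) {m : ℕ∞} :
    ContDiff ℝ m (evalReal p) := by
  let coords : EuclideanSpace ℝ ι →L[ℝ] ι → ℂ :=
    ContinuousLinearMap.pi fun j => Complex.ofRealCLM.comp (EuclideanSpace.proj j)
  exact contDiff_iff_contDiffAt.2 fun x =>
    (AnalyticOnNhd.eval_continuousLinearMap coords p x (Set.mem_univ x)).contDiffAt

lemma fderiv_evalReal_single [Finite ι] [DecidableEq ι] (p : MvPolynomial ι ℂ)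
    (x : EuclideanSpace ℝ ι) (j : ι) :
    fderiv ℝ (evalReal p) x (EuclideanSpace.single j 1) = evalReal (pderiv j p) x := by
  have := Fintype.ofFinite ι
  have hd (q : MvPolynomial ι ℂ) : DifferentiableAt ℝ (evalReal q) x :=
    (contDiff_evalReal q (m := 1)).differentiable one_ne_zero x
  induction p using MvPolynomial.induction_on with
  | C a =>
    have : evalReal (C a : MvPolynomial ι ℂ) = fun _ => a := funext fun _ => eval_C a
    simp [this, evalReal]
  | add p q hp hq =>
    have : evalReal (p + q) = fun y => evalReal p y + evalReal q y := funext fun _ => eval_add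
    rw [this, fderiv_fun_add (hd p) (hd q), _root_.add_apply, hp, hq]
    simp [evalReal]
  | mul_X p k hp =>
    have coord : evalReal (X k : MvPolynomial ι ℂ) =
        Complex.ofRealCLM.comp (EuclideanSpace.proj k : EuclideanSpace ℝ ι →L[ℝ] ℝ) :=
      funext fun x => eval_X k
    have : evalReal (p * X k) = fun y => evalReal p y * evalReal (X k) y :=
      funext fun _ => eval_mul
    rw [this, fderiv_fun_mul (hd p) (hd (X k)), _root_.add_apply, _root_.smul_apply,
      _root_.smul_apply, hp, coord, ContinuousLinearMap.fderiv]
    simp [evalReal, pderiv_X, Pi.single_apply, apply_ite]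

lemma laplacian_evalReal [Fintype ι] (p : MvPolynomial ι ℂ) (x : EuclideanSpace ℝ ι) :
    Δ (evalReal p) x = evalReal (∑ j, pderiv j (pderiv j p)) x := by
  classical
  have hd : DifferentiableAt ℝ (fderiv ℝ (evalReal p)) x :=
    ((contDiff_evalReal p (m := 2)).fderiv_right (m := 1) le_rfl).differentiable one_ne_zero x
  have second (j : ι) : fderiv ℝ (fderiv ℝ (evalReal p)) x (EuclideanSpace.single j 1)
      (EuclideanSpace.single j 1) = evalReal (pderiv j (pderiv j p)) x := by
    rw [← fderiv_evalReal_single (pderiv j p)]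
    simp only [← funext (fderiv_evalReal_single p · j)]
    rw [fderiv_clm_apply hd (differentiableAt_const _)]
    simp
  rw [laplacian_eq_iteratedFDeriv_orthonormalBasis _ (EuclideanSpace.basisFun ι ℝ)]
  simp [iteratedFDeriv_two_apply, second, evalReal]

lemma diag_eq_sum_prod_smul [Fintype ι] [DecidableEq ι] {W : Type*}
    [NormedAddCommGroup W] [NormedSpace ℝ W] {k : ℕ} (Q : EuclideanSpace ℝ ι [×k]→L[ℝ] W)
    (x : EuclideanSpace ℝ ι) :
    (Q fun _ => x) =
      ∑ J : Fin k → ι, (∏ l, x (J l)) • Q fun l => EuclideanSpace.single (J l) 1 := by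
  have expand : x = ∑ j, x j • EuclideanSpace.single j (1 : ℝ) := by
    simpa using ((EuclideanSpace.basisFun ι ℝ).sum_repr x).symm
  conv_lhs => rw [expand]
  rw [Q.map_sum]
  exact Finset.sum_congr rfl fun J _ => Q.map_smul_univ _ _

lemma exists_isHomogeneous_evalReal_eq_diag [Finite ι] {k : ℕ}
    (Q : EuclideanSpace ℝ ι [×k]→L[ℝ] ℂ) :
    ∃ p : MvPolynomial ι ℂ, p.IsHomogeneous k ∧ ∀ x, evalReal p x = Q fun _ => x := by
  classical
  have := Fintype.ofFinite ι
  refine ⟨∑ J : Fin k → ι, C (Q fun l => EuclideanSpace.single (J l) 1) * ∏ l, X (J l),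
    .sum _ _ _ fun J _ => ?_, fun x => ?_⟩
  · simpa using (isHomogeneous_C ι _).mul
      (IsHomogeneous.prod Finset.univ (fun l => X (J l)) _ fun l _ => isHomogeneous_X ℂ (J l))
  · simp [diag_eq_sum_prod_smul, evalReal, mul_comm]

lemma exists_harmonic_evalReal_eq_diag [Fintype ι] {k : ℕ}
    {Q : EuclideanSpace ℝ ι [×k]→L[ℝ] ℂ}
    (hQ : ∀ x, Δ (fun y => Q fun _ => y) x = 0) :
    ∃ p : MvPolynomial ι ℂ, p.IsHomogeneous k ∧ ∑ j, pderiv j (pderiv j p) = 0 ∧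
      ∀ x, evalReal p x = Q fun _ => x := by
  obtain ⟨p, hp, hpQ⟩ := exists_isHomogeneous_evalReal_eq_diag Q
  refine ⟨p, hp, eq_zero_of_evalReal_eq_zero fun x => ?_, hpQ⟩
  rw [← laplacian_evalReal, funext hpQ, hQ]

end RealPoints

section CliffordMatrices

open InnerProductSpace
open scoped ComplexOrder MatrixOrder Matrix.Norms.L2Operator

variable {n N : ℕ} {α : Fin n → Matrix (Fin N) (Fin N) ℂ}

/-- The matrices `α` as a coefficient map: `z` acts on spinors by the matrix `∑ⱼ zⱼ αⱼ`. -/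
def cliffordMul (α : Fin n → Matrix (Fin N) (Fin N) ℂ) :
    EuclideanSpace ℝ (Fin n) →L[ℝ] EuclideanSpace ℂ (Fin N) →L[ℝ] EuclideanSpace ℂ (Fin N) :=
  ∑ j, (EuclideanSpace.proj j : EuclideanSpace ℝ (Fin n) →L[ℝ] ℝ).smulRight
    ((Matrix.toEuclideanCLM (𝕜 := ℂ) (α j)).restrictScalars ℝ)

lemma cliffordMul_apply (z : EuclideanSpace ℝ (Fin n)) (v : EuclideanSpace ℂ (Fin N)) :
    cliffordMul α z v = Matrix.toEuclideanCLM (𝕜 := ℂ) (∑ j, (z j : ℂ) • α j) v := by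
  simp only [cliffordMul, map_sum, map_smul, _root_.sum_apply]
  exact Finset.sum_congr rfl fun j _ => (Complex.coe_smul _ _).symm

lemma dirac_cliffordMul (α : Fin n → Matrix (Fin N) (Fin N) ℂ) :
    dirac (cliffordMul α) = diracOp α := by
  funext ψ x
  rw [dirac_eq_sum (EuclideanSpace.basisFun (Fin n) ℝ)]
  refine Finset.sum_congr rfl fun j _ => ?_
  simp [cliffordMul_apply]
  rfl

lemma CliffordRel.sum_smul_mul_self (h : CliffordRel α) (z : Fin n → ℂ) :
    (∑ j, z j • α j) * ∑ j, z j • α j = -((∑ j, z j ^ 2) • 1) := by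
  refine smul_right_injective _ (two_ne_zero (α := ℂ)) ?_
  calc (2 : ℂ) • ((∑ j, z j • α j) * ∑ j, z j • α j)
      = ∑ j, ∑ k, (z j * z k) • (α j * α k + α k * α j) := by
        simp only [Finset.sum_mul_sum, smul_mul_smul_comm, smul_add, Finset.sum_add_distrib,
          two_smul]
        rw [Finset.sum_comm (f := fun j k => (z j * z k) • (α k * α j))]
        simp only [mul_comm]
    _ = (2 : ℂ) • -((∑ j, z j ^ 2) • 1) := by
        simp only [h _ _, smul_ite, smul_zero, Finset.sum_ite_eq, Finset.mem_univ, if_true,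
          Finset.sum_smul, Finset.smul_sum, ← Finset.sum_neg_distrib]
        exact Finset.sum_congr rfl fun j _ => by module

lemma CliffordRel.isClifford (h : CliffordRel α) : IsClifford (cliffordMul α) := fun z v => by
  have sum_sq : ∑ j, (z j : ℂ) ^ 2 = ((‖z‖ ^ 2 : ℝ) : ℂ) := by
    simp [EuclideanSpace.norm_sq_eq]
  rw [cliffordMul_apply, cliffordMul_apply, ← mul_apply_eq_comp, ← map_mul,
    h.sum_smul_mul_self, sum_sq, map_neg, map_smul, map_one]
  exact congrArg Neg.neg (Complex.coe_smul _ v)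

lemma isSkew_cliffordMul (h : ∀ j, (α j)ᴴ = -α j) : IsSkew (cliffordMul α) := fun z v w => by
  have real_inner (x y : EuclideanSpace ℂ (Fin N)) : ⟪x, y⟫_ℝ = (⟪x, y⟫_ℂ).re := by
    simp [PiLp.inner_apply, Complex.inner]
  have skew : star (∑ j, (z j : ℂ) • α j) = -∑ j, (z j : ℂ) • α j := by
    simp [star_sum, Matrix.star_eq_conjTranspose, h]
  rw [real_inner, real_inner, cliffordMul_apply, cliffordMul_apply,
    ← ContinuousLinearMap.adjoint_inner_right, ← ContinuousLinearMap.star_eq_adjoint, ← map_star,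
    skew, map_neg, _root_.neg_apply, inner_neg_right, Complex.neg_re]

lemma CliffordRel.mul_self (h : CliffordRel α) (j : Fin n) : α j * α j = -1 := by
  have := h.sum_smul_mul_self (Pi.single j 1)
  simpa [Pi.single_apply, ite_smul] using this

lemma CliffordRel.exists_posDef_invariant (h : CliffordRel α) (s : Finset (Fin n)) :
    ∃ H : Matrix (Fin N) (Fin N) ℂ, H.PosDef ∧ ∀ j ∈ s, (α j)ᴴ * H * α j = H := by
  induction s using Finset.induction_on with
  | empty => exact ⟨1, .one, by simp⟩
  | insert k s hk ih =>
    obtain ⟨H, hH, invariant⟩ := ih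
    have conj_conj (j : Fin n) : (α j)ᴴ * ((α k)ᴴ * H * α k) * α j =
        (α k * α j)ᴴ * H * (α k * α j) := by
      simp only [Matrix.conjTranspose_mul, Matrix.mul_assoc]
    refine ⟨H + (α k)ᴴ * H * α k,
      hH.add_posSemidef (hH.posSemidef.conjTranspose_mul_mul_same _), fun j hj => ?_⟩
    rw [Matrix.mul_add, Matrix.add_mul, conj_conj]
    obtain rfl | hjs := Finset.mem_insert.1 hj
    · simp [h.mul_self, add_comm]
    · have anticomm : α k * α j = -(α j * α k) := eq_neg_of_add_eq_zero_left <| by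
        rw [h, if_neg (by rintro rfl; exact hk hjs), smul_zero]
      have : (α k * α j)ᴴ * H * (α k * α j) = (α k)ᴴ * ((α j)ᴴ * H * α j) * α k := by
        simp [anticomm, Matrix.mul_assoc]
      rw [this, invariant j hjs]

lemma CliffordRel.exists_conj_skew (h : CliffordRel α) : ∃ B : (Matrix (Fin N) (Fin N) ℂ)ˣ,
    ∀ j, (B.1 * α j * (B⁻¹).1)ᴴ = -(B.1 * α j * (B⁻¹).1) := by
  obtain ⟨H, hH, invariant⟩ := h.exists_posDef_invariant Finset.univ
  obtain ⟨_, ⟨B, rfl⟩, factor⟩ :=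
    CStarAlgebra.isStrictlyPositive_iff_eq_star_mul_self.1 hH.isStrictlyPositive
  refine ⟨B, fun j => ?_⟩
  have skew : (α j)ᴴ * H = -(H * α j) := by
    conv_rhs => rw [← invariant j (Finset.mem_univ j)]
    simp only [Matrix.mul_assoc, h.mul_self, Matrix.mul_neg, Matrix.mul_one, neg_neg]
  have inv_star : (B⁻¹).1ᴴ * B.1ᴴ = 1 := by
    rw [← Matrix.conjTranspose_mul, B.mul_inv, Matrix.conjTranspose_one]
  rw [Matrix.star_eq_conjTranspose] at factor
  calc (B.1 * α j * (B⁻¹).1)ᴴ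
      = (B⁻¹).1ᴴ * (α j)ᴴ * B.1ᴴ * (B.1 * (B⁻¹).1) := by
        simp only [Matrix.conjTranspose_mul, B.mul_inv, Matrix.mul_one, Matrix.mul_assoc]
    _ = (B⁻¹).1ᴴ * ((α j)ᴴ * H) * (B⁻¹).1 := by simp only [factor, Matrix.mul_assoc]
    _ = -((B⁻¹).1ᴴ * B.1ᴴ * (B.1 * α j * (B⁻¹).1)) := by
        rw [skew, factor]
        simp only [Matrix.mul_assoc, Matrix.mul_neg, Matrix.neg_mul]
    _ = -(B.1 * α j * (B⁻¹).1) := by rw [inv_star, Matrix.one_mul]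

lemma CliffordRel.conj (h : CliffordRel α) (B : (Matrix (Fin N) (Fin N) ℂ)ˣ) :
    CliffordRel fun j => B.1 * α j * (B⁻¹).1 := fun j k => by
  have mul_conj (j k : Fin n) :
      B.1 * α j * (B⁻¹).1 * (B.1 * α k * (B⁻¹).1) = B.1 * (α j * α k) * (B⁻¹).1 := by
    simp [mul_assoc]
  rw [mul_conj, mul_conj, ← add_mul, ← mul_add, h j k]
  split_ifs <;> simp

/-- An invertible matrix as a real continuous linear automorphism of the spinor space. -/
def unitEquiv (B : (Matrix (Fin N) (Fin N) ℂ)ˣ) :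
    EuclideanSpace ℂ (Fin N) ≃L[ℝ] EuclideanSpace ℂ (Fin N) :=
  (ContinuousLinearEquiv.unitsEquiv ℂ _ <|
    Units.map (Matrix.toEuclideanCLM (𝕜 := ℂ) (n := Fin N)).toMonoidHom B).restrictScalars ℝ

lemma cliffordMul_conj_unitEquiv (B : (Matrix (Fin N) (Fin N) ℂ)ˣ) (z : EuclideanSpace ℝ (Fin n))
    (v : EuclideanSpace ℂ (Fin N)) :
    cliffordMul (fun j => B.1 * α j * (B⁻¹).1) z (unitEquiv B v) =
      unitEquiv B (cliffordMul α z v) := by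
  have unitEquiv_apply (w) : unitEquiv B w = Matrix.toEuclideanCLM (𝕜 := ℂ) B.1 w := rfl
  have mul_right : (∑ j, (z j : ℂ) • (B.1 * α j * (B⁻¹).1)) * B.1 =
      B.1 * ∑ j, (z j : ℂ) • α j := by
    simp [Finset.sum_mul, Finset.mul_sum, mul_assoc]
  simp only [unitEquiv_apply, cliffordMul_apply, ← mul_apply_eq_comp,
    ← map_mul, mul_right]

end CliffordMatrices

lemma exists_le_mul_of_le_mul_rpow {X : Type*} [PseudoMetricSpace X] [ProperSpace X] {z : X}
    {R : ℝ} {f g : X → ℝ} (hg : ContinuousOn g (ball z R)) (hg0 : ∀ x, 0 ≤ g x) {C σ : ℝ}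
    (hσ : 1 ≤ σ) (h : ∀ x ∈ ball z R, f x ≤ C * g x ^ σ) {r : ℝ} (hr : r < R) :
    ∃ C', ∀ x ∈ ball z r, f x ≤ C' * g x := by
  have closedBall_sub : closedBall z r ⊆ ball z R := closedBall_subset_ball hr
  obtain ⟨M, hM⟩ :=
    (isCompact_closedBall z r).exists_bound_of_continuousOn (hg.mono closedBall_sub)
  refine ⟨|C| * M ^ (σ - 1), fun x hx => ?_⟩
  have hx' := ball_subset_closedBall hx
  have le_M : g x ≤ M := (le_abs_self _).trans (hM x hx')
  calc f x ≤ |C| * g x ^ σ := (h x (closedBall_sub hx')).trans <|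
        mul_le_mul_of_nonneg_right (le_abs_self C) (Real.rpow_nonneg (hg0 x) σ)
    _ = |C| * (g x ^ (σ - 1) * g x) := by
        rw [← Real.rpow_add_one' (hg0 x) (by linarith), sub_add_cancel]
    _ ≤ |C| * (M ^ (σ - 1) * g x) := by
        have := Real.rpow_le_rpow (hg0 x) le_M (sub_nonneg.2 hσ)
        gcongr
        exact hg0 x
    _ = |C| * M ^ (σ - 1) * g x := by ring

lemma IsDiracLeadingTerm.exists_remainder_bound {E V : Type*} [NormedAddCommGroup E]
    [InnerProductSpace ℝ E] [FiniteDimensional ℝ E] [NormedAddCommGroup V] [NormedSpace ℝ V]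
    {c : E →L[ℝ] V →L[ℝ] V} {ψ : E → V} {R : ℝ} {k : ℕ} {Q : E [×k]→L[ℝ] V}
    (hQ : IsDiracLeadingTerm c ψ R Q) {δ : ℝ} (hδ0 : 0 < δ) (hδ1 : δ < 1) :
    ∃ C, 0 < C ∧ ∀ x ∈ ball (0 : E) R, ‖ψ x - Q fun _ => x‖ ≤ C * ‖x‖ ^ (k + δ) ∧
      ‖fderiv ℝ (fun y => ψ y - Q fun _ => y) x‖ ≤ C * ‖x‖ ^ (k + δ - 1) := by
  obtain ⟨A, hA, bound⟩ := (hQ.isBigO_sub hδ0 hδ1).exists_pos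
  obtain ⟨A', hA', bound'⟩ := (hQ.isBigO_fderiv_sub hδ0 hδ1).exists_pos
  rw [Asymptotics.isBigOWith_principal] at bound bound'
  have norm_rpow (x : E) (s : ℝ) : ‖‖x‖ ^ s‖ = ‖x‖ ^ s := Real.norm_of_nonneg (by positivity)
  simp only [norm_rpow] at bound bound'
  exact ⟨A + A', by positivity, fun x hx =>
    ⟨(bound x hx).trans (by gcongr; linarith), (bound' x hx).trans (by gcongr; linarith)⟩⟩

section DiracMatrices

open scoped Laplacian

variable {n N : ℕ} {α : Fin n → Matrix (Fin N) (Fin N) ℂ}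
  {ψ : EuclideanSpace ℝ (Fin n) → EuclideanSpace ℂ (Fin N)}

lemma CliffordRel.eqOn_zero_of_isFlat [Nontrivial (EuclideanSpace ℝ (Fin n))] (h : CliffordRel α)
    (hψ : ContDiffOn ℝ 1 ψ (ball 0 1)) {L a : ℝ≥0} (ha : 0 < a)
    (hψL : HolderOnWith L a (fderiv ℝ ψ) (ball 0 1))
    (hD : ∀ R < 1, ∃ C, ∀ x ∈ ball (0 : EuclideanSpace ℝ (Fin n)) R,
      ‖diracOp α ψ x‖ ≤ C * ‖ψ x‖)
    (hflat : IsFlat ψ) : Set.EqOn ψ 0 (ball 0 1) := by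
  obtain ⟨B, skew⟩ := h.exists_conj_skew
  rw [← dirac_cliffordMul] at hD
  exact eqOn_zero_of_isFlat_of_intertwines (h.conj B).isClifford (isSkew_cliffordMul skew)
    (unitEquiv B) (cliffordMul_conj_unitEquiv B) hψ ha hψL hD hflat

lemma exists_harmonic_apply_eq_evalReal (hα : CliffordRel α) {k : ℕ}
    {Q : EuclideanSpace ℝ (Fin n) [×k]→L[ℝ] EuclideanSpace ℂ (Fin N)}
    (hQ : ∀ x, diracOp α (fun y => Q fun _ => y) x = 0) (i : Fin N) :
    ∃ p : MvPolynomial (Fin n) ℂ, p.IsHomogeneous k ∧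
      ∑ j, MvPolynomial.pderiv j (MvPolynomial.pderiv j p) = 0 ∧
      ∀ x, (Q fun _ => x) i = evalReal p x := by
  let coord : EuclideanSpace ℂ (Fin N) →L[ℝ] ℂ :=
    (EuclideanSpace.proj i : EuclideanSpace ℂ (Fin N) →L[ℂ] ℂ).restrictScalars ℝ
  have smooth : ContDiff ℝ 2 fun y => Q fun _ => y := contDiff_diag Q
  have harmonic (x) : Δ (fun y => coord (Q fun _ => y)) x = 0 := by
    rw [← dirac_cliffordMul] at hQ
    have := smooth.contDiffAt.laplacian_CLM_comp_left (x := x) (l := coord)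
    simpa [Function.comp_def, hα.isClifford.laplacian_eq_zero smooth hQ x] using this
  obtain ⟨p, homogeneous, laplace, eval⟩ :=
    exists_harmonic_evalReal_eq_diag (Q := coord.compContinuousMultilinearMap Q) harmonic
  exact ⟨p, homogeneous, laplace, fun x => (eval x).symm⟩

theorem homogeneous_decomposition_general {n N : ℕ} {α : Fin n → Matrix (Fin N) (Fin N) ℂ}
    (hcl : CliffordRel α) {ψ : EuclideanSpace ℝ (Fin n) → EuclideanSpace ℂ (Fin N)} {a : ℝ≥0}
    (ha : 0 < a) (hreg : ContDiffOn ℝ 1 ψ (ball 0 1))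
    (hHol : ∃ C : ℝ≥0, HolderOnWith C a (fderiv ℝ ψ) (ball 0 1)) {C σ : ℝ} (hσ : 1 ≤ σ)
    (hD : ∀ x ∈ ball (0 : EuclideanSpace ℝ (Fin n)) 1, ‖diracOp α ψ x‖ ≤ C * ‖ψ x‖ ^ σ)
    (h0 : ψ 0 = 0) (hne : ∃ x ∈ ball (0 : EuclideanSpace ℝ (Fin n)) 1, ψ x ≠ 0) :
    ∃ (k : ℕ) (R : ℝ) (P Γ : EuclideanSpace ℝ (Fin n) → EuclideanSpace ℂ (Fin N)),
      1 ≤ k ∧ 0 < R ∧ R ≤ 1 ∧ (∀ x ∈ ball (0 : EuclideanSpace ℝ (Fin n)) R, ψ x = P x + Γ x) ∧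
      (∃ x, P x ≠ 0) ∧
      (∀ i : Fin N, ∃ p : MvPolynomial (Fin n) ℂ, p.IsHomogeneous k ∧
        ∑ j, MvPolynomial.pderiv j (MvPolynomial.pderiv j p) = 0 ∧
        ∀ x, P x i = MvPolynomial.eval (fun j => ((x j : ℝ) : ℂ)) p) ∧
      (∀ x, diracOp α P x = 0) ∧
      ∀ δ : ℝ, 0 < δ → δ < 1 → ∃ Cδ : ℝ, 0 < Cδ ∧
        ∀ x ∈ ball (0 : EuclideanSpace ℝ (Fin n)) R, ‖Γ x‖ ≤ Cδ * ‖x‖ ^ ((k : ℝ) + δ) ∧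
          ‖fderiv ℝ Γ x‖ ≤ Cδ * ‖x‖ ^ ((k : ℝ) + δ - 1) := by
  obtain ⟨x, hx, hψx⟩ := hne
  obtain ⟨L, hψL⟩ := hHol
  have : Nontrivial (EuclideanSpace ℝ (Fin n)) := ⟨x, 0, by rintro rfl; exact hψx h0⟩
  have linear_bound (R : ℝ) (hR : R < 1) :
      ∃ C', ∀ x ∈ ball (0 : EuclideanSpace ℝ (Fin n)) R, ‖diracOp α ψ x‖ ≤ C' * ‖ψ x‖ :=
    exists_le_mul_of_le_mul_rpow hreg.continuousOn.norm (fun _ => norm_nonneg _) hσ hD hR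
  have not_flat : ¬ IsFlat ψ := fun hflat =>
    hψx (hcl.eqOn_zero_of_isFlat hreg ha hψL linear_bound hflat hx)
  obtain ⟨C', hC'⟩ := linear_bound (1 / 2) (by norm_num)
  have dirac_isBigO : dirac (cliffordMul α) ψ =O[nhds 0] ψ := dirac_cliffordMul α ▸
    .of_bound C' (eventually_of_mem (ball_mem_nhds 0 (by norm_num)) hC')
  obtain ⟨k, Q, hQ⟩ := exists_isDiracLeadingTerm hcl.isClifford hreg ha hψL dirac_isBigO h0
    not_flat (R := 1 / 2) (by norm_num) (by norm_num)
  have dirac_Q : ∀ x, diracOp α (fun y => Q fun _ => y) x = 0 :=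
    dirac_cliffordMul α ▸ hQ.dirac_eq_zero
  exact ⟨k + 1, 1 / 2, fun x => Q fun _ => x, fun x => ψ x - Q fun _ => x, by lia, by norm_num,
    by norm_num, fun x _ => (add_sub_cancel _ _).symm, hQ.exists_ne_zero,
    exists_harmonic_apply_eq_evalReal hcl dirac_Q, dirac_Q, fun δ => hQ.exists_remainder_bound⟩

end DiracMatrices

/-- Expansion of a `C^{1,a}` spinor with `|Dψ| ≤ C|ψ|^σ`, vanishing at the origin but not
identically zero, as a nonzero `D`-harmonic spinor whose components are homogeneous harmonic
polynomials of degree `k ≥ 1`, plus a remainder vanishing at order `k + δ` for every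
`δ ∈ (0,1)`. -/
theorem homogeneous_decomposition
    (n : ℕ) (hn : 2 ≤ n) (N : ℕ) (hN : N = 2 ^ (n / 2))
    (α : Fin n → Matrix (Fin N) (Fin N) ℂ)
    (hcl : CliffordRel α)
    (ψ : EuclideanSpace ℝ (Fin n) → EuclideanSpace ℂ (Fin N))
    -- `ψ` is `C^{1,a}` on the open unit ball for some `a ∈ (0,1)`
    (a : ℝ≥0) (ha0 : 0 < a) (ha1 : a < 1)
    (hreg : ContDiffOn ℝ 1 ψ (Metric.ball 0 1))
    (hHol : ∃ C : ℝ≥0, HolderOnWith C a (fderiv ℝ ψ) (Metric.ball 0 1))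
    -- `|Dψ| ≤ C |ψ|^σ` on the unit ball, with `C ≥ 0`, `σ ≥ 1`
    (C : ℝ) (hC : 0 ≤ C) (σ : ℝ) (hσ : 1 ≤ σ)
    (hD : ∀ x ∈ Metric.ball (0 : EuclideanSpace ℝ (Fin n)) 1,
      ‖diracOp α ψ x‖ ≤ C * ‖ψ x‖ ^ σ)
    -- `ψ(0) = 0` and `ψ` is not identically zero on the unit ball
    (h0 : ψ 0 = 0)
    (hne : ∃ x ∈ Metric.ball (0 : EuclideanSpace ℝ (Fin n)) 1, ψ x ≠ 0) :
    ∃ (k : ℕ) (R : ℝ) (P Γ : EuclideanSpace ℝ (Fin n) → EuclideanSpace ℂ (Fin N)),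
      1 ≤ k ∧ 0 < R ∧ R ≤ 1 ∧
      -- `ψ = P + Γ` on `B_R`
      (∀ x ∈ Metric.ball (0 : EuclideanSpace ℝ (Fin n)) R, ψ x = P x + Γ x) ∧
      -- `P` is not identically zero
      (∃ x : EuclideanSpace ℝ (Fin n), P x ≠ 0) ∧
      -- each component of `P` is a homogeneous harmonic polynomial of degree `k`
      (∀ i : Fin N, ∃ p : MvPolynomial (Fin n) ℂ,
        p.IsHomogeneous k ∧
        (∑ j : Fin n, MvPolynomial.pderiv j (MvPolynomial.pderiv j p)) = 0 ∧
        ∀ x : EuclideanSpace ℝ (Fin n),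
          P x i = MvPolynomial.eval (fun j => ((x j : ℝ) : ℂ)) p) ∧
      -- `P` is a harmonic spinor: `DP = 0`
      (∀ x : EuclideanSpace ℝ (Fin n), diracOp α P x = 0) ∧
      -- remainder estimates: for every `δ ∈ (0,1)` there is a constant `C(δ) > 0`
      (∀ δ : ℝ, 0 < δ → δ < 1 → ∃ Cδ : ℝ, 0 < Cδ ∧
        ∀ x ∈ Metric.ball (0 : EuclideanSpace ℝ (Fin n)) R,
          ‖Γ x‖ ≤ Cδ * ‖x‖ ^ ((k : ℝ) + δ) ∧
          ‖fderiv ℝ Γ x‖ ≤ Cδ * ‖x‖ ^ ((k : ℝ) + δ - 1)) := by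
  exact homogeneous_decomposition_general hcl ha0 hreg hHol hσ hD h0 hne
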